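/- Let p, q, s be distinct primes with p ≡ 5 (mod 8), q ≡ 3 (mod 8), s ≡ 3 (mod 4), (p/q) = (p/s) = 1. Then for every n ≥ 0, the 2-Sylow subgroup of the ideal class group of Cₙ(F) = ℚ(√p, √q, √s, 2cos(2π/2^{n+2})) is cyclic and nontrivial. -/

import Mathlib

open NumberField

/-- The field `Cₙ(F) = ℚ(√p, √q, √s, 2cos(2π/2^(n+2)))`, realized inside `ℂ`. -/
noncomputable def CnF (p q s n : ℕ) : IntermediateField ℚ ℂ :=
  IntermediateField.adjoin ℚ
    {((Real.sqrt p : ℝ) : ℂ), ((Real.sqrt q : ℝ) : ℂ), ((Real.sqrt s : ℝ) : ℂ),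
     ((2 * Real.cos (2 * Real.pi / 2 ^ (n + 2)) : ℝ) : ℂ)}

/-!
Write `x₀ = 0`, `xₙ₊₁² = 2 + xₙ` for the generators of the cyclotomic `ℤ₂`-tower and
`k = ℚ(√p, xₙ)`, `K = k(√s)`, `L = K(√q)`. Everything is totally real, and each step is quadratic.
Chevalley's genus theory, in the form of an injection from the ideal classes killed by the norm into
ramified primes modulo signs of units, shows that a quadratic step preserves oddness of the class
number as long as the residue signs of the units at the ramified primes are independent enough. This
keeps the class number of every `k` odd, starting from `ℚ(√p)`, then that of `K`, and bounds the
2-torsion of the class group of `L` by 2.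

Conversely `(p/q) = (p/s) = 1` yields a totally positive `α ∈ ℚ(√p)` of norm an odd power of `qs`
with `α ≡ ±1 mod 4`. Over `L`, where `q` and `s` are squares, `α` generates the square of an ideal,
so `L(√α)/L` is unramified at every prime and totally real, and the class number of `L` is even. An
even class group with at most two elements of order dividing 2 has a nontrivial cyclic 2-Sylow
subgroup.
-/

open IsDedekindDomain Pointwise nonZeroDivisors

theorem index_le_natCard_of_inv_mul_mem {G Y : Type*} [Group G] [Finite Y] (P : Subgroup G)
    (f : G → Y)
    (hf : ∀ x y, f x = f y → x⁻¹ * y ∈ P) : P.index ≤ Nat.card Y :=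
  Nat.card_le_card_of_injective (fun c : G ⧸ P ↦ f c.out) fun a b hab ↦ by
    rw [← a.out_eq, ← b.out_eq]
    exact QuotientGroup.eq.2 (hf _ _ hab)

/-! ### Squares in commutative groups -/

section CommGroup

variable {G H : Type*} [CommGroup G] [CommGroup H]

/-- The index `[G : G²]` of the subgroup of squares of a commutative group, with the convention
that it is `0` when infinite. -/
noncomputable def sqIndex (G : Type*) [CommGroup G] : ℕ := (powMonoidHom 2 : G →* G).range.index

theorem sqIndex_congr (e : G ≃* H) : sqIndex G = sqIndex H := by
  rw [sqIndex, ← Subgroup.index_map_equiv _ e, e.map_range_powMonoidHom, sqIndex]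

theorem sqIndex_eq_two_mul_of_surjective (f : G →* H) (hf : Function.Surjective f) {ν : G}
    (hfν : f ν = 1) (hν : ν ^ 2 = 1) (hns : ∀ x, x ^ 2 ≠ ν)
    (hker : ∀ x, f x = 1 → x = 1 ∨ x = ν) : sqIndex G = 2 * sqIndex H := by
  set S : Subgroup G := (powMonoidHom 2 : G →* G).range
  have hS : S.map f = (powMonoidHom 2 : H →* H).range := by
    ext y
    constructor
    · rintro ⟨_, ⟨z, rfl⟩, rfl⟩
      exact ⟨f z, by simp only [powMonoidHom_apply, map_pow]⟩
    · rintro ⟨y, rfl⟩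
      obtain ⟨z, rfl⟩ := hf y
      exact ⟨_, ⟨z, rfl⟩, by simp only [powMonoidHom_apply, map_pow]⟩
  have h_sup : (S ⊔ f.ker).index = sqIndex H := by
    rw [sqIndex, ← hS, Subgroup.index_map, MonoidHom.range_eq_top.2 hf, Subgroup.index_top, mul_one]
  have h_two : S.relIndex f.ker = 2 := by
    refine Subgroup.relIndex_eq_two_iff_exists_notMem_and.2 ⟨ν, hfν, ?_, fun x hx ↦ ?_⟩
    · rintro ⟨x, hx⟩
      exact hns x hx
    · rcases hker x hx with rfl | rfl
      · exact .inr S.one_mem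
      · exact .inl (by rw [← pow_two, hν]; exact S.one_mem)
  rw [← h_sup, ← h_two, ← Subgroup.relIndex_sup_left]
  exact (Subgroup.relIndex_mul_index le_sup_left).symm

theorem sqIndex_prod : sqIndex (G × H) = sqIndex G * sqIndex H := by
  rw [sqIndex, sqIndex, sqIndex, ← Subgroup.index_prod]
  congr 1
  ext ⟨x, y⟩
  simp only [Subgroup.mem_prod, MonoidHom.mem_range, powMonoidHom_apply, Prod.exists,
    Prod.pow_mk, Prod.mk.injEq, exists_and_left, exists_and_right]

theorem sqIndex_subgroup (P : Subgroup G) :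
    sqIndex P = (P.map (powMonoidHom 2 : G →* G)).relIndex P := by
  rw [sqIndex, Subgroup.relIndex]
  congr 1
  ext x
  simp only [MonoidHom.mem_range, powMonoidHom_apply, Subgroup.mem_subgroupOf, Subgroup.mem_map,
    Subtype.exists, Subtype.ext_iff, SubgroupClass.coe_pow, exists_prop]

theorem sqIndex_subgroup_eq_of_index_ne_zero {P : Subgroup G} (hP : P.index ≠ 0)
    (htor : ∀ x : G, x ^ 2 = 1 → x ∈ P) : sqIndex P = sqIndex G := by
  set sq : G →* G := powMonoidHom 2
  have h_sq : (P.map sq).relIndex sq.range = P.index := by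
    rw [MonoidHom.range_eq_map, Subgroup.relIndex_map_map, top_sup_eq, Subgroup.relIndex_top_right,
      sup_eq_left.2 htor]
  have h_le : P.map sq ≤ P := by
    rintro _ ⟨x, hx, rfl⟩
    exact P.pow_mem hx 2
  have h := Subgroup.relIndex_mul_index (Subgroup.map_le_range sq P)
  rw [h_sq, ← Subgroup.relIndex_mul_index h_le, mul_comm, ← sqIndex_subgroup] at h
  exact (Nat.eq_of_mul_eq_mul_right (Nat.pos_of_ne_zero hP) h).symm

theorem sqIndex_of_basis {r : ℕ} (b : Module.Basis (Fin r) ℤ (Additive G)) :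
    sqIndex G = 2 ^ r := by
  let e : G ≃* Multiplicative (Fin r → ℤ) := AddEquiv.toMultiplicativeRight b.equivFun.toAddEquiv
  rw [sqIndex_congr e, sqIndex]
  have h_range : (powMonoidHom 2 : Multiplicative (Fin r → ℤ) →* _).range =
      AddSubgroup.toSubgroup
        (AddSubgroup.pi Set.univ fun _ : Fin r ↦ AddSubgroup.zmultiples (2 : ℤ)) := by
    ext x
    constructor
    · rintro ⟨y, rfl⟩ i -
      exact ⟨y.toAdd i, by simp [mul_comm]⟩
    · intro hx
      choose k hk using fun i ↦ hx i (Set.mem_univ i)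
      refine ⟨.ofAdd k, Multiplicative.toAdd.injective (funext fun i ↦ ?_)⟩
      simpa [mul_comm] using hk i
  rw [h_range, AddSubgroup.index_toSubgroup, AddSubgroup.index_pi]
  simp [Int.index_zmultiples]

end CommGroup

/-! ### The Herbrand quotient of an involution -/

section Herbrand

variable {E : Type*} [CommGroup E] {σ : E →* E}

theorem index_sup_mul_relIndex_range_div (hσ : Function.Involutive σ) :
    ((MonoidHom.id E / σ).ker ⊔ (MonoidHom.id E * σ).ker).index *
      (MonoidHom.id E / σ).range.relIndex (MonoidHom.id E * σ).ker =
        sqIndex (MonoidHom.id E * σ).ker := by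
  set D : E →* E := MonoidHom.id E / σ
  set M : Subgroup E := (MonoidHom.id E * σ).ker
  have D_eq_sq : ∀ x ∈ M, D x = x ^ 2 := fun x hx ↦ by
    change x / σ x = x ^ 2
    rw [eq_inv_of_mul_eq_one_right (show x * σ x = 1 from hx), div_inv_eq_mul, pow_two]
  have h_map : M.map D = M.map (powMonoidHom 2) :=
    SetLike.coe_injective (Set.image_congr D_eq_sq)
  have h_range : D.range ≤ M := by
    rintro _ ⟨x, rfl⟩
    change x / σ x * σ (x / σ x) = 1
    rw [map_div, hσ, div_mul_div_cancel, div_self']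
  have h_relIndex : (M.map D).relIndex D.range = (D.ker ⊔ M).index := by
    rw [MonoidHom.range_eq_map, Subgroup.relIndex_map_map, top_sup_eq,
      Subgroup.relIndex_top_right, sup_comm]
  rw [sqIndex_subgroup, ← h_map, ← h_relIndex]
  exact Subgroup.relIndex_mul_relIndex _ _ _ (Subgroup.map_le_range D M) h_range

theorem index_sup_mul_relIndex_range_mul (hσ : Function.Involutive σ) :
    ((MonoidHom.id E / σ).ker ⊔ (MonoidHom.id E * σ).ker).index *
      (MonoidHom.id E * σ).range.relIndex (MonoidHom.id E / σ).ker =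
        sqIndex (MonoidHom.id E / σ).ker := by
  have hσ' : Function.Involutive (σ⁻¹ : E →* E) := fun x ↦ by
    simp only [MonoidHom.inv_apply, map_inv, inv_inv, hσ x]
  have h := index_sup_mul_relIndex_range_div hσ'
  rwa [div_inv_eq_mul, ← div_eq_mul_inv, sup_comm] at h

theorem sqIndex_mul_sqIndex_eq_two_mul {ν : E} (hν : ν ^ 2 = 1)
    (htor : ∀ x : E, x ^ 2 = 1 → x = 1 ∨ x = ν) (hns : ∀ x : E, x ^ 2 ≠ ν) (hσν : σ ν = ν) :
    sqIndex (MonoidHom.id E / σ).ker * sqIndex (MonoidHom.id E * σ).ker =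
      2 * sqIndex ↥((MonoidHom.id E / σ).ker ⊔ (MonoidHom.id E * σ).ker) := by
  set P : Subgroup E := (MonoidHom.id E / σ).ker
  set M : Subgroup E := (MonoidHom.id E * σ).ker
  have mem_P : ∀ x, x ∈ P ↔ x / σ x = 1 := fun x ↦ Iff.rfl
  have mem_M : ∀ x, x ∈ M ↔ x * σ x = 1 := fun x ↦ Iff.rfl
  have hνP : ν ∈ P := by rw [mem_P, hσν, div_self']
  have hνM : ν ∈ M := by rw [mem_M, hσν, ← pow_two, hν]
  let f : P × M →* ↥(P ⊔ M) :=
    (P.subtype.coprod M.subtype).codRestrict (P ⊔ M)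
      fun x ↦ Subgroup.mul_mem_sup x.1.2 x.2.2
  have f_eq_one : ∀ x, f x = 1 ↔ (x.1 : E) * x.2 = 1 := fun x ↦ Subtype.ext_iff
  rw [← sqIndex_prod]
  refine sqIndex_eq_two_mul_of_surjective f ?_ (ν := (⟨ν, hνP⟩, ⟨ν, hνM⟩)) ?_ ?_ ?_ ?_
  · rintro ⟨x, hx⟩
    obtain ⟨a, ha, b, hb, rfl⟩ := Subgroup.mem_sup.1 hx
    exact ⟨(⟨a, ha⟩, ⟨b, hb⟩), rfl⟩
  · rw [f_eq_one, ← pow_two, hν]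
  · exact Prod.ext (Subtype.ext hν) (Subtype.ext hν)
  · exact fun x hx ↦ hns x.1 (congrArg (fun y : P × M ↦ (y.1 : E)) hx)
  · rintro ⟨⟨a, ha⟩, ⟨b, hb⟩⟩ hab
    obtain rfl : a = b⁻¹ := eq_inv_of_mul_eq_one_left ((f_eq_one _).1 hab)
    have hb2 : b⁻¹ ^ 2 = 1 := by
      have h_fixed := div_eq_one.1 ((mem_P _).1 ha)
      rw [pow_two, ← inv_eq_one, mul_inv, inv_inv]
      nth_rw 2 [← inv_inv b]
      rw [h_fixed, map_inv, inv_inv]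
      exact (mem_M b).1 hb
    have hb_inv : b = b⁻¹ :=
      eq_inv_of_mul_eq_one_left (by rw [← pow_two, ← inv_eq_one, ← inv_pow, hb2])
    refine (htor _ hb2).imp (fun h ↦ ?_) (fun h ↦ ?_) <;>
      exact Prod.ext (Subtype.ext h) (Subtype.ext (hb_inv.trans h))

theorem herbrand_quotient_of_involution (hσ : Function.Involutive σ) {ν : E} (hν : ν ^ 2 = 1)
    (htor : ∀ x : E, x ^ 2 = 1 → x = 1 ∨ x = ν) (hns : ∀ x : E, x ^ 2 ≠ ν)
    (h_sq : sqIndex E = sqIndex (MonoidHom.id E / σ).ker ^ 2)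
    (h_fin : sqIndex (MonoidHom.id E / σ).ker ≠ 0) :
    (MonoidHom.id E / σ).range.relIndex (MonoidHom.id E * σ).ker =
        2 * (MonoidHom.id E * σ).range.relIndex (MonoidHom.id E / σ).ker ∧
      (MonoidHom.id E * σ).range.relIndex (MonoidHom.id E / σ).ker ≠ 0 := by
  have hσν : σ ν = ν := by
    refine (htor (σ ν) (by rw [← map_pow, hν, map_one])).resolve_left fun h ↦ ?_
    refine hns 1 ?_
    rw [one_pow, ← hσ ν, h, map_one]
  have h_div := index_sup_mul_relIndex_range_div hσ
  have h_mul := index_sup_mul_relIndex_range_mul hσ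
  have h_prod := sqIndex_mul_sqIndex_eq_two_mul hν htor hns hσν
  have h_ne : ((MonoidHom.id E / σ).ker ⊔ (MonoidHom.id E * σ).ker).index *
      (MonoidHom.id E * σ).range.relIndex (MonoidHom.id E / σ).ker ≠ 0 := h_mul ▸ h_fin
  have h_index := left_ne_zero_of_mul h_ne
  rw [sqIndex_subgroup_eq_of_index_ne_zero h_index, h_sq, pow_two, ← mul_assoc,
    mul_comm 2, mul_assoc] at h_prod
  · have h := mul_left_cancel₀ h_fin h_prod
    rw [← h_div, ← h_mul, mul_left_comm] at h
    exact ⟨mul_left_cancel₀ h_index h, right_ne_zero_of_mul h_ne⟩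
  · intro x hx
    refine Subgroup.mem_sup_left (div_eq_one.2 ?_)
    change x = σ x
    rcases htor x hx with rfl | rfl
    · rw [map_one]
    · exact hσν.symm

end Herbrand

/-! ### Units of totally real fields -/

section TotallyReal

variable (K : Type*) [Field K] [NumberField K] [IsTotallyReal K]

theorem nonempty_ringHom_real_of_isTotallyReal : Nonempty (K →+* ℝ) :=
  ⟨(IsTotallyReal.complexEmbedding_isReal (Classical.arbitrary (K →+* ℂ))).embedding⟩

variable {K} in
theorem sq_ne_neg_one_of_isTotallyReal (x : K) : x ^ 2 ≠ -1 := by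
  intro h
  obtain ⟨φ⟩ := nonempty_ringHom_real_of_isTotallyReal K
  have hφ : φ x ^ 2 = -1 := by rw [← map_pow, h, map_neg, map_one]
  nlinarith [sq_nonneg (φ x)]

variable {K} in
theorem units_sq_ne_neg_one (x : (𝓞 K)ˣ) : x ^ 2 ≠ -1 := fun h ↦
  sq_ne_neg_one_of_isTotallyReal (x : K) (by simpa using congrArg (fun z : (𝓞 K)ˣ ↦ (z : K)) h)

variable {K} in
theorem mem_torsion_iff_eq_one_or_neg_one (x : (𝓞 K)ˣ) :
    x ∈ Units.torsion K ↔ x = 1 ∨ x = -1 := by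
  constructor
  · intro hx
    obtain ⟨φ⟩ := nonempty_ringHom_real_of_isTotallyReal K
    obtain ⟨n, hn, hxn⟩ := isOfFinOrder_iff_pow_eq_one.1 hx
    have h_abs : |φ x| = 1 := by
      refine (pow_eq_one_iff_of_nonneg (abs_nonneg _) hn.ne').1 ?_
      have hxn' : (x : K) ^ n = 1 := by
        simpa using congrArg (fun z : (𝓞 K)ˣ ↦ (z : K)) hxn
      rw [← abs_pow, ← map_pow, hxn', map_one, abs_one]
    refine (eq_or_eq_neg_of_abs_eq h_abs).imp (fun h ↦ ?_) (fun h ↦ ?_) <;>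
      exact Units.ext (RingOfIntegers.ext (φ.injective (by simpa using h)))
  · rintro (rfl | rfl)
    · exact one_mem _
    · exact isOfFinOrder_iff_pow_eq_one.2 ⟨2, two_pos, neg_one_sq⟩

theorem finrank_eq_rank_add_one : Module.finrank ℚ K = Units.rank K + 1 := by
  rw [Units.rank, Nat.sub_add_cancel Fintype.card_pos, IsTotallyReal.finrank,
    InfinitePlace.card_eq_nrRealPlaces_add_nrComplexPlaces,
    IsTotallyReal.nrComplexPlaces_eq_zero, add_zero]

theorem sqIndex_units : sqIndex (𝓞 K)ˣ = 2 ^ Module.finrank ℚ K := by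
  rw [finrank_eq_rank_add_one, pow_succ', ← sqIndex_of_basis (Units.basisModTorsion K)]
  exact sqIndex_eq_two_mul_of_surjective (QuotientGroup.mk' (Units.torsion K))
    (QuotientGroup.mk'_surjective _) (ν := -1)
    ((QuotientGroup.eq_one_iff _).2 ((mem_torsion_iff_eq_one_or_neg_one _).2 (.inr rfl)))
    neg_one_sq units_sq_ne_neg_one
    fun x hx ↦ (mem_torsion_iff_eq_one_or_neg_one x).1 ((QuotientGroup.eq_one_iff x).1 hx)

end TotallyReal

/-! ### Ideals under a quadratic involution -/

section CommRing

variable {O R : Type*} [CommRing O] [CommRing R] [Algebra O R]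

theorem map_ideal_injective [Module.FaithfullyFlat O R] :
    Function.Injective (Ideal.map (algebraMap O R)) :=
  Function.LeftInverse.injective (g := Ideal.comap (algebraMap O R))
    Ideal.comap_map_eq_self_of_faithfullyFlat

theorem map_ideal_le_map_iff [Module.FaithfullyFlat O R] {I J : Ideal O} :
    I.map (algebraMap O R) ≤ J.map (algebraMap O R) ↔ I ≤ J := by
  rw [Ideal.map_le_iff_le_comap, Ideal.comap_map_eq_self_of_faithfullyFlat]

theorem smul_ideal_span_singleton (τ : R ≃ₐ[O] R) (x : R) :
    τ • Ideal.span {x} = Ideal.span {τ x} := by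
  rw [Ideal.smul_closure, Set.smul_set_singleton, AlgEquiv.smul_def]

theorem smul_ideal_ne_bot (τ : R ≃ₐ[O] R) {I : Ideal R} (hI : I ≠ ⊥) : τ • I ≠ ⊥ := by
  rwa [Ne, smul_eq_iff_eq_inv_smul, Ideal.smul_bot]

/-- `τ` is an involution of the `O`-algebra `R`, not the identity, whose fixed ring is the image of
`O`. -/
structure IsQuadraticInvolution (τ : R ≃ₐ[O] R) : Prop where
  involutive : Function.Involutive τ
  mem_range_of_fixed : ∀ x, τ x = x → x ∈ Set.range (algebraMap O R)
  exists_ne : ∃ x, τ x ≠ x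

/-- The norm to `O` of an ideal `I` of `R` with respect to an involution `τ` of `R`: the contraction
of `I · τ(I)`. -/
def involutionNorm (τ : R ≃ₐ[O] R) (I : Ideal R) : Ideal O := (I * τ • I).comap (algebraMap O R)

/-- A quadratic extension with involution `τ` is unramified outside the set `S` of primes of the
base: every other prime `P` is prime to the discriminant `(ω - τ ω)²` of some element `ω`. -/
def UnramifiedOutside (τ : R ≃ₐ[O] R) (S : Finset (HeightOneSpectrum O)) : Prop :=
  ∀ P ∉ S, ∃ (ω : R) (D : O), algebraMap O R D = (ω - τ ω) ^ 2 ∧ D ∉ P.asIdeal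

namespace IsQuadraticInvolution

variable {τ : R ≃ₐ[O] R} (hτ : IsQuadraticInvolution τ)
include hτ

theorem exists_anti_invariant : ∃ x ≠ 0, τ x = -x := by
  obtain ⟨x, hx⟩ := hτ.exists_ne
  exact ⟨x - τ x, sub_ne_zero.2 hx.symm, by rw [map_sub, hτ.involutive, neg_sub]⟩

theorem exists_algebraMap_eq_mul (x : R) : ∃ a, algebraMap O R a = x * τ x :=
  hτ.mem_range_of_fixed _ (by rw [map_mul, hτ.involutive, mul_comm])

theorem exists_algebraMap_eq_add (x : R) : ∃ a, algebraMap O R a = x + τ x :=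
  hτ.mem_range_of_fixed _ (by rw [map_add, hτ.involutive, add_comm])

theorem mem_smul_ideal_iff {I : Ideal R} {x : R} : x ∈ τ • I ↔ τ x ∈ I := by
  rw [← Ideal.smul_mem_pointwise_smul_iff (a := τ) (S := I), AlgEquiv.smul_def, hτ.involutive]

theorem smul_smul_ideal (I : Ideal R) : τ • τ • I = I := by
  ext x
  rw [hτ.mem_smul_ideal_iff, hτ.mem_smul_ideal_iff, hτ.involutive]

theorem mul_apply_mem {I : Ideal R} {x y : R} (hx : x ∈ I) (hy : y ∈ I) :
    x * τ y ∈ I * τ • I :=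
  Ideal.mul_mem_mul hx (hτ.mem_smul_ideal_iff.2 (by rwa [hτ.involutive]))

/-- Since `(ω - τ ω) a = Tr (ω a) - τ ω Tr a`, where the traces of a `τ`-stable ideal lie in its
contraction. -/
theorem span_sub_mul_le_map_comap {I : Ideal R} (hI : τ • I = I) (ω : R) :
    Ideal.span {ω - τ ω} * I ≤ (I.comap (algebraMap O R)).map (algebraMap O R) := by
  have trace_mem : ∀ x ∈ I, x + τ x ∈ (I.comap (algebraMap O R)).map (algebraMap O R) := by
    intro x hx
    obtain ⟨t, ht⟩ := hτ.exists_algebraMap_eq_add x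
    rw [← ht]
    refine Ideal.mem_map_of_mem _ (Ideal.mem_comap.2 ?_)
    rw [ht]
    exact add_mem hx (hτ.mem_smul_ideal_iff.1 (hI.symm ▸ hx))
  rw [Ideal.span_singleton_mul_le_iff]
  intro a ha
  have h : (ω - τ ω) * a = (ω * a + τ (ω * a)) - τ ω * (a + τ a) := by
    rw [map_mul]
    ring
  rw [h]
  exact sub_mem (trace_mem _ (Ideal.mul_mem_left _ _ ha)) (Ideal.mul_mem_left _ _ (trace_mem a ha))

end IsQuadraticInvolution

end CommRing

section Dedekind

variable {O R : Type*} [CommRing O] [IsDedekindDomain O] [CommRing R] [IsDedekindDomain R]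
  [Algebra O R]

theorem sq_ideal_injective {I J : Ideal O} (h : I ^ 2 = J ^ 2) : I = J :=
  dvd_antisymm ((UniqueFactorizationMonoid.pow_dvd_pow_iff_dvd two_ne_zero).1 h.dvd)
    ((UniqueFactorizationMonoid.pow_dvd_pow_iff_dvd two_ne_zero).1 h.symm.dvd)

theorem isSquare_of_even_multiplicity {J : Ideal O} (hJ : J ≠ ⊥)
    (h : ∀ P : Ideal O, Prime P → Even (multiplicity P J)) : IsSquare J := by
  classical
  obtain ⟨u, hu⟩ := Multiset.exists_smul_of_dvd_count
    (UniqueFactorizationMonoid.normalizedFactors J) (k := 2) fun P hP ↦ by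
      have hP' := UniqueFactorizationMonoid.prime_of_normalized_factor P hP
      rw [← normalize_eq P, ← UniqueFactorizationMonoid.multiplicity_eq_count_normalizedFactors
        hP'.irreducible hJ]
      exact (h P hP').two_dvd
  refine ⟨u.prod, ?_⟩
  rw [← pow_two, ← Multiset.prod_nsmul, ← hu, Ideal.prod_normalizedFactors_eq_self hJ]

theorem multiplicity_ideal_mul {P I J : Ideal O} (hP : Prime P) (hI : I ≠ ⊥) (hJ : J ≠ ⊥) :
    multiplicity P (I * J) = multiplicity P I + multiplicity P J :=
  multiplicity_mul hP (FiniteMultiplicity.of_prime_left hP (mul_ne_zero hI hJ))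

/-- `((x) + J)² ≤ ((x) + J) J`, and the nonzero ideal `(x) + J` cancels. -/
theorem mem_ideal_of_sq_eq {J : Ideal O} {x t n : O} (ht : t ∈ J) (hn : n ∈ J * J)
    (hx : x * x = t * x - n) : x ∈ J := by
  rcases eq_or_ne x 0 with rfl | hx0
  · exact zero_mem J
  set X := Ideal.span {x} ⊔ J with hX
  have hxX : x ∈ X := Ideal.mem_sup_left (Ideal.mem_span_singleton_self x)
  have hX0 : X ≠ ⊥ := fun h ↦ hx0 (by simpa [h] using hxX)
  have h_le : X * X ≤ X * J := by
    nth_rw 1 [hX]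
    rw [Ideal.sup_mul, mul_comm J, hX, Ideal.mul_sup, ← hX]
    refine sup_le (sup_le ?_ (Ideal.mul_mono_left le_sup_left)) le_rfl
    rw [Ideal.span_singleton_mul_span_singleton, Ideal.span_singleton_le_iff_mem, hx, mul_comm t]
    exact sub_mem (Ideal.mul_mem_mul hxX ht) (Ideal.mul_mono_left (I := J) le_sup_right hn)
  rw [← Ideal.dvd_iff_le] at h_le
  exact Ideal.dvd_iff_le.1 ((mul_dvd_mul_iff_left hX0).1 h_le) hxX

/-- The parities of the exponents, at the primes in `S`, of the norm of an ideal. -/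
noncomputable def normParity (τ : R ≃ₐ[O] R) (S : Finset (HeightOneSpectrum O)) (I : Ideal R) :
    S → ZMod 2 :=
  fun P ↦ multiplicity P.1.asIdeal (involutionNorm τ I)

namespace IsQuadraticInvolution

variable {τ : R ≃ₐ[O] R} (hτ : IsQuadraticInvolution τ)
include hτ

omit [IsDedekindDomain O] in
theorem map_involutionNorm (I : Ideal R) :
    (involutionNorm τ I).map (algebraMap O R) = I * τ • I := by
  refine le_antisymm Ideal.map_comap_le (Ideal.mul_le.2 fun a ha b' hb' ↦ ?_)
  obtain ⟨b, rfl⟩ := τ.surjective b'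
  rw [hτ.mem_smul_ideal_iff, hτ.involutive] at hb'
  have mem_map : ∀ c, algebraMap O R c ∈ I * τ • I →
      algebraMap O R c ∈ (involutionNorm τ I).map (algebraMap O R) :=
    fun c hc ↦ Ideal.mem_map_of_mem _ hc
  obtain ⟨t, ht⟩ := hτ.exists_algebraMap_eq_add (a * τ b)
  obtain ⟨m, hm⟩ := hτ.exists_algebraMap_eq_mul a
  obtain ⟨n, hn⟩ := hτ.exists_algebraMap_eq_mul b
  rw [map_mul, hτ.involutive, mul_comm (τ a)] at ht
  refine mem_ideal_of_sq_eq (mem_map t ?_) (Ideal.mul_mem_mul (mem_map m ?_) (mem_map n ?_)) ?_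
  · rw [ht]
    exact add_mem (hτ.mul_apply_mem ha hb') (hτ.mul_apply_mem hb' ha)
  · rw [hm]
    exact hτ.mul_apply_mem ha ha
  · rw [hn]
    exact hτ.mul_apply_mem hb' hb'
  · rw [ht, hm, hn]
    ring

omit [IsDedekindDomain O] in
theorem involutionNorm_ne_bot {I : Ideal R} (hI : I ≠ ⊥) : involutionNorm τ I ≠ ⊥ := fun h ↦
  mul_ne_zero hI (smul_ideal_ne_bot τ hI) (by rw [← hτ.map_involutionNorm, h, Ideal.map_bot]; rfl)

variable [Module.FaithfullyFlat O R]

omit [IsDedekindDomain O] in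
theorem involutionNorm_mul (I J : Ideal R) :
    involutionNorm τ (I * J) = involutionNorm τ I * involutionNorm τ J := by
  apply map_ideal_injective (R := R)
  rw [Ideal.map_mul, hτ.map_involutionNorm, hτ.map_involutionNorm, hτ.map_involutionNorm,
    smul_mul']
  exact mul_mul_mul_comm ..

theorem normParity_mul (S : Finset (HeightOneSpectrum O)) {I J : Ideal R} (hI : I ≠ ⊥)
    (hJ : J ≠ ⊥) :
    normParity τ S (I * J) = normParity τ S I + normParity τ S J := by
  ext P
  rw [Pi.add_apply, normParity, normParity, normParity, hτ.involutionNorm_mul,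
    multiplicity_ideal_mul P.1.prime (hτ.involutionNorm_ne_bot hI) (hτ.involutionNorm_ne_bot hJ),
    Nat.cast_add]

theorem even_multiplicity_involutionNorm {I : Ideal R} (hI0 : I ≠ ⊥) (hI : τ • I = I)
    {P : Ideal O} (hP : Prime P) {ω : R} {D : O} (hD : algebraMap O R D = (ω - τ ω) ^ 2)
    (hDP : D ∉ P) : Even (multiplicity P (involutionNorm τ I)) := by
  set N := involutionNorm τ I
  set J : Ideal O := I.comap (algebraMap O R)
  have hN : N.map (algebraMap O R) = I * I := by rw [hτ.map_involutionNorm, hI]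
  have hN0 : N ≠ ⊥ := hτ.involutionNorm_ne_bot hI0
  obtain ⟨C, hC⟩ : N ∣ J * J := by
    rw [Ideal.dvd_iff_le, ← map_ideal_le_map_iff (R := R), Ideal.map_mul, hN]
    exact Ideal.mul_mono Ideal.map_comap_le Ideal.map_comap_le
  have h_dvd : N * C ∣ N * Ideal.span {D} := by
    rw [Ideal.dvd_iff_le, ← map_ideal_le_map_iff (R := R), ← hC, Ideal.map_mul, Ideal.map_mul, hN,
      Ideal.map_span, Set.image_singleton, hD, pow_two, ← Ideal.span_singleton_mul_span_singleton,
      mul_comm, mul_mul_mul_comm]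
    exact Ideal.mul_mono (hτ.span_sub_mul_le_map_comap hI ω) (hτ.span_sub_mul_le_map_comap hI ω)
  have hDC : D ∈ C := by
    rw [← Ideal.dvd_span_singleton]
    exact (mul_dvd_mul_iff_left hN0).1 h_dvd
  have hCP : ¬ P ∣ C := fun h ↦ hDP (Ideal.dvd_iff_le.1 h hDC)
  have hC0 : C ≠ ⊥ := fun h ↦ hCP (h ▸ dvd_zero P)
  have hJ0 : J ≠ ⊥ := fun h ↦ mul_ne_zero hN0 hC0 (by rw [← hC, h, Ideal.mul_bot]; rfl)
  refine ⟨multiplicity P J, ?_⟩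
  rw [← multiplicity_ideal_mul hP hJ0 hJ0, hC, multiplicity_ideal_mul hP hN0 hC0,
    multiplicity_eq_zero.2 hCP, add_zero]

theorem exists_eq_map_of_normParity_eq_zero {S : Finset (HeightOneSpectrum O)}
    (hS : UnramifiedOutside τ S) {I : Ideal R} (hI0 : I ≠ ⊥) (hI : τ • I = I)
    (h : normParity τ S I = 0) : ∃ J : Ideal O, J ≠ ⊥ ∧ I = J.map (algebraMap O R) := by
  obtain ⟨J, hJ⟩ := isSquare_of_even_multiplicity (hτ.involutionNorm_ne_bot hI0) fun P hP ↦ by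
    let v : HeightOneSpectrum O := ⟨P, Ideal.isPrime_of_prime hP, hP.ne_zero⟩
    by_cases hv : v ∈ S
    · exact even_iff_two_dvd.2 ((ZMod.natCast_eq_zero_iff _ _).1 (congrFun h ⟨v, hv⟩))
    · obtain ⟨ω, D, hD, hDP⟩ := hS v hv
      exact hτ.even_multiplicity_involutionNorm hI0 hI hP hD hDP
  have hIJ : I = J.map (algebraMap O R) := by
    apply sq_ideal_injective
    rw [← Ideal.map_pow, pow_two J, ← hJ, hτ.map_involutionNorm, hI, pow_two]
  exact ⟨J, fun h ↦ hI0 (by rw [hIJ, h, Ideal.map_bot]), hIJ⟩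

end IsQuadraticInvolution

end Dedekind

/-! ### Counting ambiguous classes -/

section UnitsInvolution

variable {O R : Type*} [CommRing O] [CommRing R] [Algebra O R]

/-- The automorphism of the unit group of `R` induced by an automorphism of `R`. -/
def unitsInvolution (τ : R ≃ₐ[O] R) : Rˣ →* Rˣ := Units.map (τ : R →* R)

theorem coe_unitsInvolution (τ : R ≃ₐ[O] R) (u : Rˣ) : (unitsInvolution τ u : R) = τ u := rfl

theorem sq_mem_range_id_div_unitsInvolution {τ : R ≃ₐ[O] R} {u : Rˣ}
    (hu : u ∈ (MonoidHom.id Rˣ * unitsInvolution τ).ker) :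
    u ^ 2 ∈ (MonoidHom.id Rˣ / unitsInvolution τ).range := by
  have hu : u * unitsInvolution τ u = 1 := hu
  refine ⟨u, ?_⟩
  change u / unitsInvolution τ u = u ^ 2
  rw [div_eq_iff_eq_mul, pow_two, mul_assoc, hu, mul_one]

theorem smul_span_eq_of_eq_unit_mul {τ : R ≃ₐ[O] R} {u : Rˣ} {a : R} (h : a = u * τ a) :
    τ • Ideal.span {a} = Ideal.span {a} := by
  rw [smul_ideal_span_singleton]
  conv_rhs => rw [h, Ideal.span_singleton_mul_left_unit u.isUnit]

theorem IsQuadraticInvolution.exists_eq_unit_mul {τ : R ≃ₐ[O] R} (hτ : IsQuadraticInvolution τ)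
    {u : Rˣ} (hu : u ∈ (MonoidHom.id Rˣ * unitsInvolution τ).ker) :
    ∃ a ≠ 0, a = u * τ a := by
  by_cases h : (1 : R) + u = 0
  · obtain ⟨x, hx0, hx⟩ := hτ.exists_anti_invariant
    exact ⟨x, hx0, by rw [hx]; linear_combination x * h⟩
  · have hu : (u : R) * τ u = 1 := congrArg Units.val hu
    exact ⟨1 + u, h, by rw [map_add, map_one]; linear_combination -hu⟩

variable [IsDomain R]

/-- The units fixed by `τ` that are norms `N(a/b)` of nonzero elements of the fraction field. -/
def normUnits (τ : R ≃ₐ[O] R) : Subgroup Rˣ where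
  carrier := {u | unitsInvolution τ u = u ∧
    ∃ a b : R, a ≠ 0 ∧ b ≠ 0 ∧ a * τ a = u * (b * τ b)}
  mul_mem' := by
    rintro u v ⟨hu, a, b, ha, hb, hab⟩ ⟨hv, a', b', ha', hb', hab'⟩
    refine ⟨by rw [map_mul, hu, hv], a * a', b * b', mul_ne_zero ha ha', mul_ne_zero hb hb', ?_⟩
    rw [map_mul, map_mul, Units.val_mul]
    linear_combination (a' * τ a') * hab + (u * (b * τ b)) * hab'
  one_mem' := ⟨map_one _, 1, 1, one_ne_zero, one_ne_zero,
    by rw [Units.val_one, map_one, one_mul, mul_one]⟩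
  inv_mem' := by
    rintro u ⟨hu, a, b, ha, hb, hab⟩
    refine ⟨by rw [map_inv, hu], b, a, hb, ha, ?_⟩
    rw [hab, ← mul_assoc, Units.inv_mul, one_mul]

end UnitsInvolution

section Counting

variable {O R : Type*} [CommRing O] [IsDedekindDomain O] [CommRing R] [IsDedekindDomain R]
  [Algebra O R]

theorem exists_pow_card_classGroup_eq_span [Finite (ClassGroup O)] {J : Ideal O} (hJ : J ≠ ⊥) :
    ∃ b ≠ 0, J ^ Nat.card (ClassGroup O) = Ideal.span {b} := by
  let J' : (Ideal O)⁰ := ⟨J, mem_nonZeroDivisors_of_ne_zero hJ⟩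
  have h : ClassGroup.mk0 (J' ^ Nat.card (ClassGroup O)) = 1 := by rw [map_pow, pow_card_eq_one']
  obtain ⟨b, hb⟩ := (ClassGroup.mk0_eq_one_iff (J' ^ Nat.card (ClassGroup O)).2).1 h
  have hb : J ^ Nat.card (ClassGroup O) = Ideal.span {b} := hb
  exact ⟨b, fun h0 ↦ pow_ne_zero _ hJ (by rw [hb, Ideal.span_singleton_eq_bot.2 h0]; rfl), hb⟩

/-- The elements of order dividing two of a commutative group. -/
abbrev twoTorsion (G : Type*) [CommGroup G] : Subgroup G := (powMonoidHom 2 : G →* G).ker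

theorem mem_twoTorsion {G : Type*} [CommGroup G] {g : G} : g ∈ twoTorsion G ↔ g ^ 2 = 1 :=
  MonoidHom.mem_ker

/-- The ideal classes of order dividing two that contain an ideal stable under `τ`. -/
def ambiguousTwoTorsion (τ : R ≃ₐ[O] R) : Subgroup (ClassGroup R) where
  carrier := {c | c ^ 2 = 1 ∧ ∃ I : (Ideal R)⁰, τ • (I : Ideal R) = I ∧ ClassGroup.mk0 I = c}
  mul_mem' := by
    rintro _ _ ⟨h, I, hI, rfl⟩ ⟨h', J, hJ, rfl⟩
    exact ⟨by rw [mul_pow, h, h', one_mul], I * J,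
      by rw [Submonoid.coe_mul, smul_mul', hI, hJ], map_mul _ _ _⟩
  one_mem' := ⟨one_pow _, 1, by rw [Submonoid.coe_one, smul_one], map_one _⟩
  inv_mem' := by
    rintro c ⟨h, I, hI, hc⟩
    exact ⟨by rw [inv_pow, h, inv_one], I, hI, hc.trans (eq_inv_of_mul_eq_one_left (pow_two c ▸ h))⟩

/-- The ideal `I` satisfies `I / τ(I) = (g / b)` for some `g`, with `b` fixed by `τ` and
`N(g / b) = u`. -/
def IsConjugateRatio (τ : R ≃ₐ[O] R) (I : Ideal R) (u : Rˣ) : Prop :=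
  ∃ b g : R, b ≠ 0 ∧ τ b = b ∧ I * Ideal.span {b} = Ideal.span {g} * τ • I ∧
    g * τ g = u * (b * b)

namespace IsConjugateRatio

variable {τ : R ≃ₐ[O] R}

omit [IsDedekindDomain O] in
theorem mul {I J : Ideal R} {u v : Rˣ} (hI : IsConjugateRatio τ I u)
    (hJ : IsConjugateRatio τ J v) : IsConjugateRatio τ (I * J) (u * v) := by
  obtain ⟨b, g, hb0, hb, hI, hg⟩ := hI
  obtain ⟨b', g', hb0', hb', hJ, hg'⟩ := hJ
  refine ⟨b * b', g * g', mul_ne_zero hb0 hb0', by rw [map_mul, hb, hb'], ?_, ?_⟩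
  · rw [← Ideal.span_singleton_mul_span_singleton, ← Ideal.span_singleton_mul_span_singleton,
      smul_mul', mul_mul_mul_comm, hI, hJ, mul_mul_mul_comm]
  · rw [map_mul, Units.val_mul]
    linear_combination (g' * τ g') * hg + (u * (b * b)) * hg'

omit [IsDedekindDomain O] [IsDedekindDomain R] in
theorem of_mul_norm {I : Ideal R} {e : Rˣ} (h : IsConjugateRatio τ I (e * unitsInvolution τ e)) :
    IsConjugateRatio τ I 1 := by
  obtain ⟨b, g, hb0, hb, hI, hg⟩ := h
  refine ⟨b, g * (e⁻¹ : Rˣ), hb0, hb, ?_, ?_⟩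
  · rw [Ideal.span_singleton_mul_right_unit (Units.isUnit _), hI]
  · have he : (e : R) * (e⁻¹ : Rˣ) = 1 := e.mul_inv
    have hτe : τ e * τ (e⁻¹ : Rˣ) = 1 := by rw [← map_mul, he, map_one]
    rw [Units.val_mul, coe_unitsInvolution] at hg
    rw [map_mul, Units.val_one]
    linear_combination (τ (e⁻¹ : Rˣ) * (e⁻¹ : Rˣ)) * hg
      + (b * b * τ e * τ (e⁻¹ : Rˣ)) * he + (b * b) * hτe

end IsConjugateRatio

namespace IsQuadraticInvolution

variable {τ : R ≃ₐ[O] R} (hτ : IsQuadraticInvolution τ)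
include hτ

section Odd

variable [Module.FaithfullyFlat O R] [Finite (ClassGroup O)] {S : Finset (HeightOneSpectrum O)}
  (hS : UnramifiedOutside τ S) (hO : Odd (Nat.card (ClassGroup O)))
include hS

theorem exists_pow_card_eq_span_algebraMap {I : Ideal R} (hI0 : I ≠ ⊥) (hI : τ • I = I)
    (h : normParity τ S I = 0) :
    ∃ b, I ^ Nat.card (ClassGroup O) = Ideal.span {algebraMap O R b} := by
  obtain ⟨J, hJ, rfl⟩ := hτ.exists_eq_map_of_normParity_eq_zero hS hI0 hI h
  obtain ⟨b, -, hb⟩ := exists_pow_card_classGroup_eq_span hJ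
  exact ⟨b, by rw [← Ideal.map_pow, hb, Ideal.map_span, Set.image_singleton]⟩

include hO

theorem mk0_eq_one_of_normParity_eq_zero {I : (Ideal R)⁰} (hI : τ • (I : Ideal R) = I)
    (h : normParity τ S I = 0) (h2 : ClassGroup.mk0 I ^ 2 = 1) : ClassGroup.mk0 I = 1 := by
  obtain ⟨b, hb⟩ := hτ.exists_pow_card_eq_span_algebraMap hS (nonZeroDivisors.coe_ne_zero I) hI h
  have h_pow : ClassGroup.mk0 I ^ Nat.card (ClassGroup O) = 1 := by
    rw [← map_pow, ClassGroup.mk0_eq_one_iff (I ^ Nat.card (ClassGroup O)).2]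
    exact ⟨_, hb⟩
  rw [← pow_one (ClassGroup.mk0 I), ← hO.coprime_two_right.gcd_eq_one, pow_gcd_eq_one]
  exact ⟨h_pow, h2⟩

theorem mk0_eq_mk0_of_normParity_eq {I J : (Ideal R)⁰} (hI : τ • (I : Ideal R) = I)
    (hJ : τ • (J : Ideal R) = J) (h : normParity τ S (I : Ideal R) = normParity τ S (J : Ideal R))
    (hI2 : ClassGroup.mk0 I ^ 2 = 1) (hJ2 : ClassGroup.mk0 J ^ 2 = 1) :
    ClassGroup.mk0 I = ClassGroup.mk0 J := by
  have h_one := hτ.mk0_eq_one_of_normParity_eq_zero hS hO (I := I * J)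
    (by rw [Submonoid.coe_mul, smul_mul', hI, hJ])
    (by rw [Submonoid.coe_mul, hτ.normParity_mul S (nonZeroDivisors.coe_ne_zero I)
      (nonZeroDivisors.coe_ne_zero J), h, ZModModule.add_self])
    (by rw [map_mul, mul_pow, hI2, hJ2, one_mul])
  rw [map_mul] at h_one
  exact mul_right_cancel (h_one.trans (by rw [← pow_two, hJ2]))

theorem mk0_eq_mk0_of_normParity_add_eq {I J : (Ideal R)⁰} {a b : R} {u v : Rˣ} (ha0 : a ≠ 0)
    (ha : a = u * τ a) (hb0 : b ≠ 0) (hb : b = v * τ b) (hI : τ • (I : Ideal R) = I)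
    (hJ : τ • (J : Ideal R) = J) (hI2 : ClassGroup.mk0 I ^ 2 = 1) (hJ2 : ClassGroup.mk0 J ^ 2 = 1)
    (h : normParity τ S (I : Ideal R) + normParity τ S (Ideal.span {a}) =
      normParity τ S (J : Ideal R) + normParity τ S (Ideal.span {b})) :
    ClassGroup.mk0 I = ClassGroup.mk0 J := by
  have ha0' : Ideal.span {a} ≠ ⊥ := mt Ideal.span_singleton_eq_bot.1 ha0
  have hb0' : Ideal.span {b} ≠ ⊥ := mt Ideal.span_singleton_eq_bot.1 hb0
  let A : (Ideal R)⁰ := ⟨_, mem_nonZeroDivisors_of_ne_zero ha0'⟩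
  let B : (Ideal R)⁰ := ⟨_, mem_nonZeroDivisors_of_ne_zero hb0'⟩
  have hIA : ClassGroup.mk0 (I * A) = ClassGroup.mk0 I := by
    rw [map_mul, (ClassGroup.mk0_eq_one_iff A.2).2 ⟨a, rfl⟩, mul_one]
  have hJB : ClassGroup.mk0 (J * B) = ClassGroup.mk0 J := by
    rw [map_mul, (ClassGroup.mk0_eq_one_iff B.2).2 ⟨b, rfl⟩, mul_one]
  rw [← hIA, ← hJB]
  refine hτ.mk0_eq_mk0_of_normParity_eq hS hO ?_ ?_ ?_ (by rwa [hIA]) (by rwa [hJB])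
  · rw [Submonoid.coe_mul, smul_mul', hI, smul_span_eq_of_eq_unit_mul ha]
  · rw [Submonoid.coe_mul, smul_mul', hJ, smul_span_eq_of_eq_unit_mul hb]
  · rwa [Submonoid.coe_mul, Submonoid.coe_mul,
      hτ.normParity_mul S (nonZeroDivisors.coe_ne_zero I) ha0',
      hτ.normParity_mul S (nonZeroDivisors.coe_ne_zero J) hb0']

theorem mem_range_id_div_of_normParity_eq_zero {u : Rˣ} {a : R} (ha : a ≠ 0) (hua : a = u * τ a)
    (h : normParity τ S (Ideal.span {a}) = 0)
    (hu : u ∈ (MonoidHom.id Rˣ * unitsInvolution τ).ker) :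
    u ∈ (MonoidHom.id Rˣ / unitsInvolution τ).range := by
  obtain ⟨b, hb⟩ := hτ.exists_pow_card_eq_span_algebraMap hS
    (mt Ideal.span_singleton_eq_bot.1 ha) (smul_span_eq_of_eq_unit_mul hua) h
  rw [Ideal.span_singleton_pow] at hb
  obtain ⟨ε, hε⟩ := Ideal.span_singleton_eq_span_singleton.1 hb.symm
  obtain ⟨k, hk⟩ := hO
  have h_pow : u ^ Nat.card (ClassGroup O) ∈ (MonoidHom.id Rˣ / unitsInvolution τ).range := by
    refine ⟨ε, ?_⟩
    change ε / unitsInvolution τ ε = _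
    rw [div_eq_iff_eq_mul]
    have hb0 : algebraMap O R b ≠ 0 := left_ne_zero_of_mul (hε ▸ pow_ne_zero _ ha)
    have h_eq : a ^ Nat.card (ClassGroup O)
        = u ^ Nat.card (ClassGroup O) * τ (a ^ Nat.card (ClassGroup O)) := by
      rw [map_pow, ← mul_pow, ← hua]
    rw [← hε, map_mul, τ.commutes] at h_eq
    ext
    rw [Units.val_mul, Units.val_pow_eq_pow_val, coe_unitsInvolution]
    exact mul_left_cancel₀ hb0 (h_eq.trans (mul_left_comm _ _ _))
  rw [hk, pow_succ, pow_mul] at h_pow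
  exact (Subgroup.mul_mem_cancel_left _
    (Subgroup.pow_mem _ (sq_mem_range_id_div_unitsInvolution hu) k)).1 h_pow

/-- The parities of the norms of the ideals in ambiguous classes, and of the principal ideals
provided by Hilbert 90, are independent. -/
theorem card_ambiguousTwoTorsion_mul_relIndex_le :
    Nat.card (ambiguousTwoTorsion τ) * (MonoidHom.id Rˣ / unitsInvolution τ).range.relIndex
      (MonoidHom.id Rˣ * unitsInvolution τ).ker ≤ 2 ^ S.card := by
  set D := (MonoidHom.id Rˣ / unitsInvolution τ).range
  set M := (MonoidHom.id Rˣ * unitsInvolution τ).ker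
  choose h_sq I hI hIc using fun c : ambiguousTwoTorsion τ ↦ c.2
  choose a ha0 ha using fun u : M ↦ hτ.exists_eq_unit_mul u.2
  have ha0' : ∀ u, Ideal.span {a u} ≠ ⊥ := fun u ↦ mt Ideal.span_singleton_eq_bot.1 (ha0 u)
  have h_le := index_le_natCard_of_inv_mul_mem
    ((⊥ : Subgroup (ambiguousTwoTorsion τ)).prod (D.subgroupOf M))
    (fun x ↦ normParity τ S (I x.1) + normParity τ S (Ideal.span {a x.2})) ?_
  · rwa [Subgroup.index_prod, Subgroup.index_bot, Nat.card_fun, Nat.card_zmod,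
      Nat.card_eq_finsetCard] at h_le
  rintro ⟨c, u⟩ ⟨c', u'⟩ h_eq
  change normParity τ S (I c) + normParity τ S (Ideal.span {a u})
    = normParity τ S (I c') + normParity τ S (Ideal.span {a u'}) at h_eq
  have h_class : c = c' := Subtype.ext <| by
    rw [← hIc c, ← hIc c']
    exact hτ.mk0_eq_mk0_of_normParity_add_eq hS hO (ha0 u) (ha u) (ha0 u') (ha u') (hI c) (hI c')
      (by rw [hIc, h_sq]) (by rw [hIc, h_sq]) h_eq
  subst h_class
  have h_unit : (u * u' : Rˣ) ∈ D := by
    refine hτ.mem_range_id_div_of_normParity_eq_zero hS hO (mul_ne_zero (ha0 u) (ha0 u')) ?_ ?_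
      (mul_mem u.2 u'.2)
    · rw [map_mul, Units.val_mul, mul_mul_mul_comm, ← ha, ← ha]
    · rw [← Ideal.span_singleton_mul_span_singleton, hτ.normParity_mul S (ha0' u) (ha0' u'),
        add_left_cancel h_eq, ZModModule.add_self]
  refine ⟨Subgroup.mem_bot.2 (inv_mul_cancel c), ?_⟩
  have h_inv : (u : Rˣ)⁻¹ * u' = ((u : Rˣ) ^ 2)⁻¹ * (u * u') := by group
  change (u : Rˣ)⁻¹ * u' ∈ D
  rw [h_inv]
  exact mul_mem (inv_mem (sq_mem_range_id_div_unitsInvolution u.2)) h_unit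

end Odd

omit [IsDedekindDomain O] in
theorem exists_stable_of_isConjugateRatio_one {I : (Ideal R)⁰} (h : IsConjugateRatio τ I 1) :
    ∃ J : (Ideal R)⁰, τ • (J : Ideal R) = J ∧ ClassGroup.mk0 J = ClassGroup.mk0 I := by
  obtain ⟨b, g, hb0, hb, hI, hg⟩ := h
  rw [Units.val_one, one_mul] at hg
  have span_ne : ∀ {x : R}, x ≠ 0 → Ideal.span {x} ≠ 0 := fun hx ↦
    mt Ideal.span_singleton_eq_bot.1 hx
  by_cases ha : b + g = 0
  · refine ⟨I, ?_, rfl⟩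
    rw [eq_neg_of_add_eq_zero_right ha, Ideal.span_singleton_neg, mul_comm] at hI
    exact (mul_left_cancel₀ (span_ne hb0) hI).symm
  have hτa : τ (b + g) ≠ 0 := (map_ne_zero_iff τ τ.injective).2 ha
  have hg0 : g ≠ 0 := left_ne_zero_of_mul (hg ▸ mul_ne_zero hb0 hb0)
  have h_ratio : g * τ (b + g) = b * (b + g) := by
    rw [map_add, hb]
    linear_combination hg
  let A : (Ideal R)⁰ := ⟨_, mem_nonZeroDivisors_of_ne_zero (span_ne hτa)⟩
  have hA : ClassGroup.mk0 A = 1 := (ClassGroup.mk0_eq_one_iff A.2).2 ⟨_, rfl⟩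
  refine ⟨A * I, mul_left_cancel₀ (span_ne hg0) ?_, by rw [map_mul, hA, one_mul]⟩
  rw [Submonoid.coe_mul, smul_mul', smul_ideal_span_singleton, hτ.involutive]
  calc Ideal.span {g} * (Ideal.span {b + g} * τ • (I : Ideal R))
      = Ideal.span {b * (b + g)} * I := by
        rw [mul_left_comm, ← hI, ← Ideal.span_singleton_mul_span_singleton]
        ring
    _ = Ideal.span {g} * (Ideal.span {τ (b + g)} * I) := by
        rw [← h_ratio, ← Ideal.span_singleton_mul_span_singleton, mul_assoc]

omit [IsDedekindDomain O] in
theorem exists_isConjugateRatio_of_principal {I : Ideal R} (hI0 : I ≠ 0) {b g : R} (hb : τ b = b)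
    (hIb : I * τ • I = Ideal.span {b}) (hIg : I * I = Ideal.span {g}) :
    ∃ u ∈ normUnits τ, IsConjugateRatio τ I u := by
  have hb0 : b ≠ 0 := fun h ↦ mul_ne_zero hI0 (smul_ideal_ne_bot τ hI0)
    (hIb.trans (Ideal.span_singleton_eq_bot.2 h))
  have hg0 : g ≠ 0 := fun h ↦ mul_ne_zero hI0 hI0 (hIg.trans (Ideal.span_singleton_eq_bot.2 h))
  obtain ⟨v, hv⟩ := Ideal.span_singleton_eq_span_singleton.1
    (show Ideal.span {b * b} = Ideal.span {g * τ g} by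
      rw [← Ideal.span_singleton_mul_span_singleton, ← Ideal.span_singleton_mul_span_singleton,
        ← smul_ideal_span_singleton, ← hIg, ← hIb, smul_mul', mul_mul_mul_comm])
  have hv_fixed : unitsInvolution τ v = v := by
    ext
    refine mul_left_cancel₀ (mul_ne_zero hb0 hb0) ?_
    have h := congrArg τ hv
    rw [map_mul, map_mul, map_mul, hτ.involutive, hb] at h
    exact h.trans ((mul_comm _ _).trans hv.symm)
  have h_norm : g * τ g = v * (b * b) := by rw [← hv, mul_comm]
  exact ⟨v, ⟨hv_fixed, g, b, hg0, hb0, by rw [hb, h_norm]⟩, b, g, hb0, hb,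
    by rw [← hIb, ← hIg, mul_assoc], h_norm⟩

theorem exists_isConjugateRatio [Module.FaithfullyFlat O R] [Finite (ClassGroup O)]
    (hO : Odd (Nat.card (ClassGroup O))) {c : ClassGroup R} (hc : c ^ 2 = 1) :
    ∃ I : (Ideal R)⁰, ClassGroup.mk0 I = c ∧ ∃ u ∈ normUnits τ, IsConjugateRatio τ I u := by
  obtain ⟨I, rfl⟩ := ClassGroup.mk0_surjective c
  have hI0 : (I : Ideal R) ≠ 0 := nonZeroDivisors.coe_ne_zero I
  obtain ⟨b, -, hb⟩ := exists_pow_card_classGroup_eq_span (hτ.involutionNorm_ne_bot hI0)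
  set h := Nat.card (ClassGroup O)
  have h_mk : ClassGroup.mk0 (I ^ h) = ClassGroup.mk0 I := by
    obtain ⟨k, hk⟩ := hO
    rw [map_pow, hk, pow_succ, pow_mul, hc, one_pow, one_mul]
  have h_sq : ClassGroup.mk0 (I ^ h * I ^ h) = 1 := by rw [map_mul, h_mk, ← pow_two, hc]
  obtain ⟨g, hg⟩ := (ClassGroup.mk0_eq_one_iff (I ^ h * I ^ h).2).1 h_sq
  refine ⟨I ^ h, h_mk, hτ.exists_isConjugateRatio_of_principal ?_ (τ.commutes b) ?_ hg⟩
  · exact nonZeroDivisors.coe_ne_zero (I ^ h)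
  · rw [SubmonoidClass.coe_pow, smul_pow', ← mul_pow, ← hτ.map_involutionNorm, ← Ideal.map_pow, hb,
      Ideal.map_span, Set.image_singleton]

theorem card_twoTorsion_le [Module.FaithfullyFlat O R] [Finite (ClassGroup O)]
    [Finite (ClassGroup R)] (hO : Odd (Nat.card (ClassGroup O)))
    (h_fin : (MonoidHom.id Rˣ * unitsInvolution τ).range.relIndex (normUnits τ) ≠ 0) :
    Nat.card (twoTorsion (ClassGroup R)) ≤
      Nat.card (ambiguousTwoTorsion τ) *
        (MonoidHom.id Rˣ * unitsInvolution τ).range.relIndex (normUnits τ) := by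
  set N := (MonoidHom.id Rˣ * unitsInvolution τ).range
  have : Finite (normUnits τ ⧸ N.subgroupOf (normUnits τ)) := Nat.finite_of_card_ne_zero h_fin
  have h_sq : ∀ c : twoTorsion (ClassGroup R), (c : ClassGroup R) ^ 2 = 1 :=
    fun c ↦ mem_twoTorsion.1 c.2
  choose I hIc u hu hIu using fun c ↦ hτ.exists_isConjugateRatio hO (h_sq c)
  have h_le := index_le_natCard_of_inv_mul_mem
    ((ambiguousTwoTorsion τ).subgroupOf (twoTorsion (ClassGroup R)))
    (fun c ↦ QuotientGroup.mk (s := N.subgroupOf (normUnits τ)) ⟨u c, hu c⟩) fun c c' hcc ↦ ?_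
  · have h_ambig : ambiguousTwoTorsion τ ≤ twoTorsion (ClassGroup R) :=
      fun c hc ↦ mem_twoTorsion.2 hc.1
    rw [← Subgroup.card_mul_index
      ((ambiguousTwoTorsion τ).subgroupOf (twoTorsion (ClassGroup R))),
      Nat.card_congr (Subgroup.subgroupOfEquivOfLe h_ambig).toEquiv]
    exact Nat.mul_le_mul_left _ h_le
  obtain ⟨ε, hε : ε * unitsInvolution τ ε = (u c)⁻¹ * u c'⟩ := QuotientGroup.eq.1 hcc
  have h_norm : u c * u c' = (u c * ε) * unitsInvolution τ (u c * ε) := by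
    rw [map_mul, (hu c).1, mul_mul_mul_comm, hε]
    group
  have h_ratio : IsConjugateRatio τ (I c * I c' : (Ideal R)⁰) (u c * u c') := (hIu c).mul (hIu c')
  rw [h_norm] at h_ratio
  obtain ⟨J, hJ, hJc⟩ := hτ.exists_stable_of_isConjugateRatio_one h_ratio.of_mul_norm
  have h_inv : (c : ClassGroup R)⁻¹ = c :=
    inv_eq_of_mul_eq_one_left ((pow_two _).symm.trans (h_sq c))
  refine ⟨h_sq (c⁻¹ * c'), J, hJ, hJc.trans ?_⟩
  rw [map_mul, hIc, hIc, Subgroup.coe_subtype, Subgroup.coe_mul, Subgroup.coe_inv, h_inv]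

end IsQuadraticInvolution

end Counting

/-! ### Quadratic extensions of totally real fields -/

section Conjugation

variable (K L : Type*) [Field K] [Field L] [Algebra K L] [Algebra.IsQuadraticExtension K L]
  [CharZero K]

theorem natCard_gal_eq_two : Nat.card Gal(L/K) = 2 := by
  rw [IsGalois.card_aut_eq_finrank, Algebra.IsQuadraticExtension.finrank_eq_two]

theorem exists_gal_ne_one : ∃ σ : Gal(L/K), σ ≠ 1 := by
  have : Nontrivial Gal(L/K) :=
    Finite.one_lt_card_iff_nontrivial.1 (natCard_gal_eq_two K L ▸ Nat.one_lt_two)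
  exact exists_ne 1

/-- The nontrivial automorphism of a quadratic extension `L` of `K`. -/
noncomputable def quadraticConj : Gal(L/K) := (exists_gal_ne_one K L).choose

theorem quadraticConj_ne_one : quadraticConj K L ≠ 1 := (exists_gal_ne_one K L).choose_spec

theorem quadraticConj_involutive : Function.Involutive (quadraticConj K L) := fun x ↦ by
  have h := pow_card_eq_one' (x := quadraticConj K L)
  rw [natCard_gal_eq_two, pow_two] at h
  exact DFunLike.congr_fun h x

variable {K L}

theorem eq_one_or_eq_quadraticConj (τ : Gal(L/K)) : τ = 1 ∨ τ = quadraticConj K L := by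
  have h := (Nat.card_eq_two_iff' (1 : Gal(L/K))).1 (natCard_gal_eq_two K L)
  exact or_iff_not_imp_left.2 fun hτ ↦ h.unique hτ (quadraticConj_ne_one K L)

theorem mem_range_of_quadraticConj_eq {x : L} (hx : quadraticConj K L x = x) :
    x ∈ Set.range (algebraMap K L) := by
  rw [← IntermediateField.mem_bot, IsGalois.mem_bot_iff_fixed]
  intro τ
  obtain rfl | rfl := eq_one_or_eq_quadraticConj τ
  exacts [rfl, hx]

theorem quadraticConj_eq_neg {θ : L} {d : K} (hd : θ ^ 2 = algebraMap K L d)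
    (hθ : θ ∉ Set.range (algebraMap K L)) : quadraticConj K L θ = -θ := by
  have h : quadraticConj K L θ ^ 2 = θ ^ 2 := by rw [← map_pow, hd, AlgEquiv.commutes]
  exact (sq_eq_sq_iff_eq_or_eq_neg.1 h).resolve_left (mt mem_range_of_quadraticConj_eq hθ)

end Conjugation

section Units

variable (K L : Type*) [Field K] [Field L] [Algebra K L]

/-- The inclusion of the units of `K` in the units of `L`. -/
noncomputable def unitsInclusion : (𝓞 K)ˣ →* (𝓞 L)ˣ :=
  Units.map (algebraMap (𝓞 K) (𝓞 L) : 𝓞 K →* 𝓞 L)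

theorem unitsInclusion_injective : Function.Injective (unitsInclusion K L) :=
  Units.map_injective (FaithfulSMul.algebraMap_injective (𝓞 K) (𝓞 L))

end Units

section Integers

variable (K L : Type*) [Field K] [Field L] [NumberField K] [Algebra K L]
  [Algebra.IsQuadraticExtension K L]

/-- The restriction to rings of integers of the nontrivial automorphism of `L` over `K`. -/
noncomputable def integersConj : 𝓞 L ≃ₐ[𝓞 K] 𝓞 L :=
  galRestrict (𝓞 K) K L (𝓞 L) (quadraticConj K L)

variable {K L} in
theorem coe_integersConj (x : 𝓞 L) : (integersConj K L x : L) = quadraticConj K L x :=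
  algebraMap_galRestrict_apply (𝓞 K) (quadraticConj K L) x

theorem isQuadraticInvolution_integersConj : IsQuadraticInvolution (integersConj K L) where
  involutive x := RingOfIntegers.ext <| by
    rw [coe_integersConj, coe_integersConj, quadraticConj_involutive]
  mem_range_of_fixed x hx := by
    obtain ⟨a, ha⟩ := mem_range_of_quadraticConj_eq (K := K) (x := (x : L))
      (by rw [← coe_integersConj, hx])
    have h_int : IsIntegral ℤ a :=
      (isIntegral_algebraMap_iff (algebraMap K L).injective).1 (ha ▸ x.isIntegral_coe)
    exact ⟨⟨a, h_int⟩, RingOfIntegers.ext ha⟩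
  exists_ne := by
    by_contra! h
    refine quadraticConj_ne_one K L ((galRestrict (𝓞 K) K L (𝓞 L)).injective ?_)
    rw [map_one]
    exact AlgEquiv.ext h

theorem range_unitsInclusion : (unitsInclusion K L).range =
    (MonoidHom.id (𝓞 L)ˣ / unitsInvolution (integersConj K L)).ker := by
  ext u
  rw [MonoidHom.mem_ker, MonoidHom.div_apply, div_eq_one, MonoidHom.id_apply]
  constructor
  · rintro ⟨v, rfl⟩
    ext1
    exact ((integersConj K L).commutes (v : 𝓞 K)).symm
  · intro h
    have mem_range : ∀ v : (𝓞 L)ˣ, v = unitsInvolution (integersConj K L) v →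
        (v : 𝓞 L) ∈ Set.range (algebraMap (𝓞 K) (𝓞 L)) := fun v hv ↦
      (isQuadraticInvolution_integersConj K L).mem_range_of_fixed _ (congrArg Units.val hv).symm
    obtain ⟨a, ha⟩ := mem_range u h
    obtain ⟨b, hb⟩ := mem_range u⁻¹ (by rw [map_inv, ← h])
    have hab : a * b = 1 := FaithfulSMul.algebraMap_injective (𝓞 K) (𝓞 L) (by
      rw [map_mul, ha, hb, Units.mul_inv, map_one])
    exact ⟨⟨a, b, hab, mul_comm b a ▸ hab⟩, Units.ext ha⟩

theorem range_id_mul_unitsInvolution_le_normUnits :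
    (MonoidHom.id (𝓞 L)ˣ * unitsInvolution (integersConj K L)).range ≤
      normUnits (integersConj K L) := by
  rintro _ ⟨ε, rfl⟩
  refine ⟨?_, ε, 1, ε.ne_zero, one_ne_zero, ?_⟩
  · have h : unitsInvolution (integersConj K L) (unitsInvolution (integersConj K L) ε) = ε :=
      Units.ext ((isQuadraticInvolution_integersConj K L).involutive ε)
    rw [MonoidHom.mul_apply, MonoidHom.id_apply, map_mul, h, mul_comm]
  · rw [map_one, mul_one, mul_one, MonoidHom.mul_apply, Units.val_mul, coe_unitsInvolution,
      MonoidHom.id_apply]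

theorem normUnits_le_range_unitsInclusion :
    normUnits (integersConj K L) ≤ (unitsInclusion K L).range := by
  rw [range_unitsInclusion]
  intro u hu
  rw [MonoidHom.mem_ker, MonoidHom.div_apply, div_eq_one]
  exact hu.1.symm

variable [NumberField L] [IsTotallyReal K] [IsTotallyReal L]

theorem relIndex_unitsInvolution :
    (MonoidHom.id (𝓞 L)ˣ / unitsInvolution (integersConj K L)).range.relIndex
        (MonoidHom.id (𝓞 L)ˣ * unitsInvolution (integersConj K L)).ker =
      2 * (MonoidHom.id (𝓞 L)ˣ * unitsInvolution (integersConj K L)).range.relIndex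
        (unitsInclusion K L).range ∧
    (MonoidHom.id (𝓞 L)ˣ * unitsInvolution (integersConj K L)).range.relIndex
        (unitsInclusion K L).range ≠ 0 := by
  have h_sqIndex : sqIndex (unitsInclusion K L).range = 2 ^ Module.finrank ℚ K := by
    rw [← sqIndex_units, ← sqIndex_congr (MonoidHom.ofInjective (unitsInclusion_injective K L))]
  rw [range_unitsInclusion] at h_sqIndex ⊢
  refine herbrand_quotient_of_involution (ν := -1) (fun x ↦ ?_) (by rw [neg_sq, one_pow])
    (fun x hx ↦ ?_) units_sq_ne_neg_one ?_ ?_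
  · exact Units.ext ((isQuadraticInvolution_integersConj K L).involutive x)
  · refine (sq_eq_sq_iff_eq_or_eq_neg.1 ((congrArg Units.val hx).trans (one_pow 2).symm)).imp
      Units.ext fun h ↦ Units.ext h
  · rw [h_sqIndex, sqIndex_units, ← pow_mul, ← Module.finrank_mul_finrank ℚ K L,
      Algebra.IsQuadraticExtension.finrank_eq_two K L]
  · rw [h_sqIndex]
    exact pow_ne_zero _ two_ne_zero

theorem relIndex_normUnits_ne_zero :
    (MonoidHom.id (𝓞 L)ˣ * unitsInvolution (integersConj K L)).range.relIndex
        (normUnits (integersConj K L)) ≠ 0 ∧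
      (normUnits (integersConj K L)).relIndex (unitsInclusion K L).range ≠ 0 := by
  rw [← mul_ne_zero_iff, Subgroup.relIndex_mul_relIndex _ _ _
    (range_id_mul_unitsInvolution_le_normUnits K L) (normUnits_le_range_unitsInclusion K L)]
  exact (relIndex_unitsInvolution K L).2

end Integers

theorem odd_natCard_of_card_twoTorsion_le_one {G : Type*} [CommGroup G] [Finite G]
    (h : Nat.card (twoTorsion G) ≤ 1) : Odd (Nat.card G) := by
  have : Fact (Nat.Prime 2) := ⟨Nat.prime_two⟩
  rw [← Nat.not_even_iff_odd, even_iff_two_dvd]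
  intro h_dvd
  obtain ⟨g, hg⟩ := exists_prime_orderOf_dvd_card' 2 h_dvd
  have h_one : g = 1 := by
    rw [← Subgroup.mem_bot, ← (Subgroup.card_le_one_iff_eq_bot _).1 h, mem_twoTorsion, ← hg,
      pow_orderOf_eq_one]
  rw [h_one, orderOf_one] at hg
  exact absurd hg (by decide)

section ClassNumber

variable {K L : Type*} [Field K] [Field L] [NumberField K] [NumberField L] [Algebra K L]
  [Algebra.IsQuadraticExtension K L] [IsTotallyReal K] [IsTotallyReal L]
  {S : Finset (HeightOneSpectrum (𝓞 K))}
  (h_odd : Odd (Nat.card (ClassGroup (𝓞 K)))) (hS : UnramifiedOutside (integersConj K L) S)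

include h_odd hS

theorem card_ambiguousTwoTorsion_mul_le_two_pow :
    Nat.card (ambiguousTwoTorsion (integersConj K L)) *
      (2 * (MonoidHom.id (𝓞 L)ˣ * unitsInvolution (integersConj K L)).range.relIndex
        (unitsInclusion K L).range) ≤ 2 ^ S.card := by
  rw [← (relIndex_unitsInvolution K L).1]
  exact (isQuadraticInvolution_integersConj K L).card_ambiguousTwoTorsion_mul_relIndex_le hS h_odd

theorem two_mul_card_twoTorsion_mul_relIndex_le :
    2 * Nat.card (twoTorsion (ClassGroup (𝓞 L))) *
      (normUnits (integersConj K L)).relIndex (unitsInclusion K L).range ≤ 2 ^ S.card := by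
  have h_card := (isQuadraticInvolution_integersConj K L).card_twoTorsion_le h_odd
    (relIndex_normUnits_ne_zero K L).1
  refine le_trans ?_ (card_ambiguousTwoTorsion_mul_le_two_pow h_odd hS)
  rw [← Subgroup.relIndex_mul_relIndex _ _ _ (range_id_mul_unitsInvolution_le_normUnits K L)
    (normUnits_le_range_unitsInclusion K L), mul_left_comm, ← mul_assoc (Nat.card _), mul_assoc]
  gcongr

theorem two_le_two_pow_card_of_unramifiedOutside : 2 ≤ 2 ^ S.card :=
  calc 2 ≤ 2 * (Nat.card (ambiguousTwoTorsion (integersConj K L)) *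
        (MonoidHom.id (𝓞 L)ˣ * unitsInvolution (integersConj K L)).range.relIndex
          (unitsInclusion K L).range) :=
        Nat.le_mul_of_pos_right 2 (Nat.mul_pos Nat.card_pos
          (Nat.pos_of_ne_zero (relIndex_unitsInvolution K L).2))
    _ ≤ 2 ^ S.card := by
        rw [mul_left_comm]
        exact card_ambiguousTwoTorsion_mul_le_two_pow h_odd hS

omit hS in
theorem not_unramifiedOutside_empty : ¬ UnramifiedOutside (integersConj K L) ∅ := fun h ↦ by
  simpa using two_le_two_pow_card_of_unramifiedOutside h_odd h

theorem odd_card_classGroup_of_card_le_one (hcard : S.card ≤ 1) :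
    Odd (Nat.card (ClassGroup (𝓞 L))) := by
  have h_le := (two_mul_card_twoTorsion_mul_relIndex_le h_odd hS).trans
    (Nat.pow_le_pow_right two_pos hcard)
  have h_pos := Nat.pos_of_ne_zero (relIndex_normUnits_ne_zero K L).2
  apply odd_natCard_of_card_twoTorsion_le_one
  nlinarith

theorem exists_mul_unitsInvolution_eq (hcard : S.card ≤ 1) (u : (𝓞 K)ˣ) :
    ∃ ε : (𝓞 L)ˣ, ε * unitsInvolution (integersConj K L) ε = unitsInclusion K L u := by
  have h_pos : 0 < Nat.card (ambiguousTwoTorsion (integersConj K L)) := Nat.card_pos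
  have h_le := (card_ambiguousTwoTorsion_mul_le_two_pow h_odd hS).trans
    (Nat.pow_le_pow_right two_pos hcard)
  have h_ne := (relIndex_unitsInvolution K L).2
  have h_one : (MonoidHom.id (𝓞 L)ˣ * unitsInvolution (integersConj K L)).range.relIndex
      (unitsInclusion K L).range = 1 := by
    refine le_antisymm ?_ (Nat.one_le_iff_ne_zero.2 h_ne)
    nlinarith
  exact Subgroup.relIndex_eq_one.1 h_one ⟨u, rfl⟩

theorem two_mul_card_twoTorsion_mul_two_pow_le {ι : Type*} [Finite ι]
    (χ : (𝓞 K)ˣ →* Multiplicative (ι → ZMod 2)) (h_surj : Function.Surjective χ)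
    (h_norm : ∀ u, unitsInclusion K L u ∈ normUnits (integersConj K L) → χ u = 1) :
    2 * Nat.card (twoTorsion (ClassGroup (𝓞 L))) * 2 ^ Nat.card ι ≤ 2 ^ S.card := by
  refine le_trans (Nat.mul_le_mul_left _ ?_) (two_mul_card_twoTorsion_mul_relIndex_le h_odd hS)
  have h_ne := (relIndex_normUnits_ne_zero K L).2
  rw [← Subgroup.index_comap] at h_ne ⊢
  have h_index : χ.ker.index = 2 ^ Nat.card ι := by
    rw [Subgroup.index_ker, MonoidHom.range_eq_top.2 h_surj, Subgroup.card_top,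
      Nat.card_congr Multiplicative.toAdd, Nat.card_fun, Nat.card_zmod]
  rw [← h_index]
  exact Nat.le_of_dvd (Nat.pos_of_ne_zero h_ne) (Subgroup.index_dvd_of_le h_norm)

end ClassNumber

/-! ### Primes of a quadratic extension -/

section Primes

variable {O R : Type*} [CommRing O] [CommRing R] [Algebra O R]

/-- The conjugate of a prime `P` under an involution `τ`: the preimage `τ⁻¹(P)`, which is also the
image of `P`. -/
def conjPrime (τ : R ≃ₐ[O] R) (P : HeightOneSpectrum R) : HeightOneSpectrum R :=
  P.comap (τ : R →+* R) τ.surjective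

theorem mem_conjPrime {τ : R ≃ₐ[O] R} {P : HeightOneSpectrum R} {x : R} :
    x ∈ (conjPrime τ P).asIdeal ↔ τ x ∈ P.asIdeal :=
  Iff.rfl

theorem isSquare_mk_iff {I : Ideal R} {x : R} :
    IsSquare (Ideal.Quotient.mk I x) ↔ ∃ y, x - y ^ 2 ∈ I := by
  rw [isSquare_iff_exists_sq, Ideal.Quotient.mk_surjective.exists]
  simp only [← map_pow, Ideal.Quotient.eq]

theorem isSquare_mk_conjPrime_iff (τ : R ≃ₐ[O] R) (P : HeightOneSpectrum R) (x : R) :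
    IsSquare (Ideal.Quotient.mk (conjPrime τ P).asIdeal x) ↔
      IsSquare (Ideal.Quotient.mk P.asIdeal (τ x)) := by
  rw [isSquare_mk_iff, isSquare_mk_iff]
  simp only [mem_conjPrime, map_sub, map_pow]
  exact (τ.surjective.exists (p := fun y ↦ τ x - y ^ 2 ∈ P.asIdeal)).symm

section IsIntegral

variable [IsDomain O] [IsDomain R] [Algebra.IsIntegral O R]

theorem mem_under {P : HeightOneSpectrum R} {a : O} :
    a ∈ (P.under O).asIdeal ↔ algebraMap O R a ∈ P.asIdeal :=
  Iff.rfl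

theorem under_conjPrime (τ : R ≃ₐ[O] R) (P : HeightOneSpectrum R) :
    (conjPrime τ P).under O = P.under O := by
  ext a
  rw [mem_under, mem_under, mem_conjPrime, τ.commutes]

end IsIntegral

end Primes

section Dedekind

variable {O R : Type*} [CommRing O] [CommRing R] [IsDedekindDomain R] [Algebra O R]

theorem heightOneSpectrum_eq_of_le {P Q : HeightOneSpectrum R} (h : P.asIdeal ≤ Q.asIdeal) :
    P = Q :=
  HeightOneSpectrum.ext (P.isMaximal.eq_of_le Q.isPrime.ne_top h)

namespace IsQuadraticInvolution

variable {τ : R ≃ₐ[O] R} (hτ : IsQuadraticInvolution τ)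
include hτ

omit [IsDedekindDomain R] in
theorem conjPrime_involutive : Function.Involutive (conjPrime τ) := fun P ↦ by
  ext x
  rw [mem_conjPrime, mem_conjPrime, hτ.involutive]

omit [IsDedekindDomain R] in
theorem conjPrime_asIdeal (P : HeightOneSpectrum R) :
    (conjPrime τ P).asIdeal = τ • P.asIdeal := by
  ext x
  rw [mem_conjPrime, hτ.mem_smul_ideal_iff]

theorem under_eq_under_iff [IsDomain O] [Algebra.IsIntegral O R] {P Q : HeightOneSpectrum R} :
    Q.under O = P.under O ↔ Q = P ∨ Q = conjPrime τ P := by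
  refine ⟨fun h ↦ ?_, by rintro (rfl | rfl); exacts [rfl, under_conjPrime τ P]⟩
  have h_sub : (Q.asIdeal : Set R) ⊆ P.asIdeal ∪ (conjPrime τ P).asIdeal := by
    intro x hx
    obtain ⟨a, ha⟩ := hτ.exists_algebraMap_eq_mul x
    have haQ : a ∈ (Q.under O).asIdeal := mem_under.2 (ha ▸ Ideal.mul_mem_right _ _ hx)
    rw [h, mem_under, ha] at haQ
    exact P.isPrime.mem_or_mem haQ
  exact (Ideal.subset_union.1 h_sub).imp heightOneSpectrum_eq_of_le heightOneSpectrum_eq_of_le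

omit hτ in
theorem exists_mem_conjPrime_notMem {P : HeightOneSpectrum R} (h : conjPrime τ P ≠ P) :
    ∃ b, τ b ∈ P.asIdeal ∧ b ∉ P.asIdeal :=
  SetLike.not_le_iff_exists.1 (mt heightOneSpectrum_eq_of_le h)

/-- If `b y ≡ 1` modulo `P` and `τ b ∈ P`, then `x` is congruent to the trace of `y b x`. -/
theorem exists_sub_algebraMap_mem_of_conjPrime_ne {P : HeightOneSpectrum R}
    (h : conjPrime τ P ≠ P) (x : R) : ∃ a : O, x - algebraMap O R a ∈ P.asIdeal := by
  obtain ⟨b, hb, hbP⟩ := exists_mem_conjPrime_notMem h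
  obtain ⟨y, i, hi, hy⟩ := P.isMaximal.exists_inv hbP
  obtain ⟨a, ha⟩ := hτ.exists_algebraMap_eq_add (y * b * x)
  refine ⟨a, ?_⟩
  have h_eq : x - algebraMap O R a = i * x - τ y * τ b * τ x := by
    rw [ha, map_mul, map_mul]
    linear_combination -x * hy
  rw [h_eq]
  exact sub_mem (Ideal.mul_mem_right _ _ hi)
    (Ideal.mul_mem_right _ _ (Ideal.mul_mem_left _ _ hb))

theorem isSquare_mk_algebraMap_iff_of_conjPrime_ne [IsDomain O] [Algebra.IsIntegral O R]
    {P : HeightOneSpectrum R} (h : conjPrime τ P ≠ P) (a : O) :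
    IsSquare (Ideal.Quotient.mk P.asIdeal (algebraMap O R a)) ↔
      IsSquare (Ideal.Quotient.mk (P.under O).asIdeal a) := by
  rw [isSquare_mk_iff, isSquare_mk_iff]
  refine ⟨fun ⟨y, hy⟩ ↦ ?_, fun ⟨b, hb⟩ ↦ ⟨algebraMap O R b, by simpa using mem_under.1 hb⟩⟩
  obtain ⟨b, hb⟩ := hτ.exists_sub_algebraMap_mem_of_conjPrime_ne h y
  refine ⟨b, mem_under.2 ?_⟩
  have h_eq : algebraMap O R (a - b ^ 2) =
      (algebraMap O R a - y ^ 2) + (y - algebraMap O R b) * (y + algebraMap O R b) := by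
    rw [map_sub, map_pow]
    ring
  rw [h_eq]
  exact add_mem hy (Ideal.mul_mem_right _ _ hb)

end IsQuadraticInvolution

theorem map_under_le_sq [IsDedekindDomain O] [Algebra.IsIntegral O R] {P : HeightOneSpectrum R}
    {c : O} (hc : c ∈ (P.under O).asIdeal) (hc' : c ∉ (P.under O).asIdeal ^ 2)
    (hcP : algebraMap O R c ∈ P.asIdeal ^ 2) :
    (P.under O).asIdeal.map (algebraMap O R) ≤ P.asIdeal ^ 2 := by
  obtain ⟨J, hJ⟩ := Ideal.dvd_span_singleton.2 hc
  have hJP : ¬ J ≤ (P.under O).asIdeal := fun h ↦ hc' <| by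
    rw [← Ideal.span_singleton_le_iff_mem, hJ, pow_two]
    exact Ideal.mul_mono_right h
  obtain ⟨d, hdJ, hdP⟩ := Set.not_subset.1 hJP
  rw [Ideal.map_le_iff_le_comap]
  intro a ha
  obtain ⟨e, he⟩ := Ideal.mem_span_singleton.1 (hJ ▸ Ideal.mul_mem_mul ha hdJ)
  have had : algebraMap O R d * algebraMap O R a ∈ P.asIdeal ^ 2 := by
    rw [← map_mul, mul_comm, he, map_mul]
    exact Ideal.mul_mem_right _ _ hcP
  exact (Ideal.IsPrime.mul_mem_pow _ had).resolve_left hdP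

namespace IsQuadraticInvolution

variable {τ : R ≃ₐ[O] R} (hτ : IsQuadraticInvolution τ)
include hτ

theorem exists_smul_mul_eq_self (P : HeightOneSpectrum R) :
    ∃ J : Ideal R, τ • (P.asIdeal * J) = P.asIdeal * J ∧ ¬ J ≤ P.asIdeal := by
  by_cases h : conjPrime τ P = P
  · refine ⟨⊤, ?_, fun h ↦ P.isPrime.ne_top (top_le_iff.1 h)⟩
    rw [Ideal.mul_top, ← hτ.conjPrime_asIdeal, h]
  · refine ⟨τ • P.asIdeal, ?_, ?_⟩
    · rw [smul_mul', hτ.smul_smul_ideal, mul_comm]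
    · rw [← hτ.conjPrime_asIdeal]
      exact mt heightOneSpectrum_eq_of_le h

theorem algebraMap_notMem_sq [IsDedekindDomain O] [Algebra.IsIntegral O R]
    {P : HeightOneSpectrum R} {ω : R} (hω : ω - τ ω ∉ P.asIdeal) {c : O}
    (hc : c ∈ (P.under O).asIdeal) (hc' : c ∉ (P.under O).asIdeal ^ 2) :
    algebraMap O R c ∉ P.asIdeal ^ 2 := by
  intro hcP
  obtain ⟨J, hJ, hJP⟩ := hτ.exists_smul_mul_eq_self P
  have h_le : P.asIdeal * (Ideal.span {ω - τ ω} * J) ≤ P.asIdeal * P.asIdeal :=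
    calc P.asIdeal * (Ideal.span {ω - τ ω} * J)
      _ = Ideal.span {ω - τ ω} * (P.asIdeal * J) := mul_left_comm ..
      _ ≤ ((P.asIdeal * J).comap (algebraMap O R)).map (algebraMap O R) :=
        hτ.span_sub_mul_le_map_comap hJ ω
      _ ≤ (P.under O).asIdeal.map (algebraMap O R) :=
        Ideal.map_mono (Ideal.comap_mono Ideal.mul_le_left)
      _ ≤ P.asIdeal * P.asIdeal := pow_two P.asIdeal ▸ map_under_le_sq hc hc' hcP
  rw [← Ideal.dvd_iff_le, mul_dvd_mul_iff_left P.ne_bot, Ideal.dvd_iff_le,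
    P.isPrime.mul_le, Ideal.span_singleton_le_iff_mem] at h_le
  exact h_le.elim hω hJP

/-- The contraction of `P · τ(P)` is an ideal whose extension is `P · τ(P)`, and it is contained in
the contraction of `P`. -/
theorem mem_under_sq_of_algebraMap_mem [IsDomain O] [Module.FaithfullyFlat O R]
    [Algebra.IsIntegral O R] {P : HeightOneSpectrum R} {c : O}
    (hc : algebraMap O R c ∈ (P.asIdeal * (conjPrime τ P).asIdeal) ^ 2) :
    c ∈ (P.under O).asIdeal ^ 2 := by
  rw [hτ.conjPrime_asIdeal, ← hτ.map_involutionNorm, ← Ideal.map_pow, ← Ideal.mem_comap,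
    Ideal.comap_map_eq_self_of_faithfullyFlat] at hc
  exact Ideal.pow_right_mono (Ideal.comap_mono Ideal.mul_le_left) 2 hc

end IsQuadraticInvolution

end Dedekind

/-! ### Squares in residue fields -/

section ResidueField

theorem isSquare_mul_iff {F : Type*} [Field F] [Finite F] {a b : F} (ha : a ≠ 0) (hb : b ≠ 0) :
    IsSquare (a * b) ↔ (IsSquare a ↔ IsSquare b) := by
  classical
  have := Fintype.ofFinite F
  by_cases h2 : ringChar F = 2
  · simp only [FiniteField.isSquare_of_char_two h2]
  · rw [← quadraticChar_one_iff_isSquare (mul_ne_zero ha hb), ← quadraticChar_one_iff_isSquare ha,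
      ← quadraticChar_one_iff_isSquare hb, map_mul]
    rcases quadraticChar_dichotomy ha with h | h <;>
      rcases quadraticChar_dichotomy hb with h' | h' <;> rw [h, h'] <;> norm_num

namespace IsQuadraticInvolution

variable {F E : Type*} [Field F] [Finite F] [Field E] [Algebra F E] {t : E ≃ₐ[F] E}
  (ht : IsQuadraticInvolution t)
include ht

theorem isSquare_algebraMap (h2 : (2 : E) ≠ 0) (f : F) : IsSquare (algebraMap F E f) := by
  rcases eq_or_ne f 0 with rfl | hf
  · rw [map_zero]
    exact IsSquare.zero
  by_cases hs : IsSquare f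
  · exact hs.map (algebraMap F E)
  obtain ⟨δ, hδ, htδ⟩ := ht.exists_anti_invariant
  obtain ⟨N, hN⟩ := ht.exists_algebraMap_eq_mul δ
  have hD : algebraMap F E (-N) = δ * δ := by
    rw [map_neg, hN, htδ, mul_neg, neg_neg]
  have hD0 : -N ≠ 0 := fun h ↦ mul_ne_zero hδ hδ (by rw [← hD, h, map_zero])
  have hDs : ¬ IsSquare (-N) := by
    rintro ⟨r, hr⟩
    rw [hr, map_mul] at hD
    have h_fix : t δ = δ := by
      rcases mul_self_eq_mul_self_iff.1 hD with h | h
      · rw [← h, t.commutes]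
      · rw [← neg_eq_iff_eq_neg.2 h, map_neg, t.commutes]
    exact mul_ne_zero h2 hδ (by linear_combination htδ - h_fix)
  obtain ⟨r, hr⟩ := ((isSquare_mul_iff hf hD0).2 (by simp only [hs, hDs])).map (algebraMap F E)
  refine ⟨r / δ, ?_⟩
  rw [map_mul, hD] at hr
  field_simp
  linear_combination hr

theorem isSquare_iff_isSquare_norm (h2 : (2 : E) ≠ 0) {z : E} {n : F} (hz : z ≠ 0)
    (hn : algebraMap F E n = z * t z) : IsSquare z ↔ IsSquare n := by
  constructor
  · rintro ⟨w, rfl⟩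
    obtain ⟨m, hm⟩ := ht.exists_algebraMap_eq_mul w
    refine ⟨m, (algebraMap F E).injective ?_⟩
    rw [hn, map_mul, map_mul, hm, mul_mul_mul_comm]
  · rintro ⟨c, rfl⟩
    rw [map_mul] at hn
    -- Hilbert 90 for the element `z / c` of norm one.
    obtain ⟨y, hy0, hy⟩ : ∃ y, y ≠ 0 ∧ z * t y = algebraMap F E c * y := by
      by_cases h : algebraMap F E c + z = 0
      · obtain ⟨δ, hδ, htδ⟩ := ht.exists_anti_invariant
        exact ⟨δ, hδ, by rw [htδ]; linear_combination -δ * h⟩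
      · exact ⟨_, h, by rw [map_add, t.commutes]; linear_combination -hn⟩
    have hty : t y ≠ 0 := (map_ne_zero t).2 hy0
    obtain ⟨m, hm⟩ := ht.exists_algebraMap_eq_mul y
    obtain ⟨r, hr⟩ := ht.isSquare_algebraMap h2 (c * m)
    refine ⟨r / t y, ?_⟩
    rw [map_mul, hm] at hr
    field_simp
    linear_combination t y * hy + hr

end IsQuadraticInvolution

variable {O R : Type*} [CommRing O] [CommRing R] [IsDedekindDomain R] [Algebra O R]
  [Algebra.IsIntegral O R] {τ : R ≃ₐ[O] R}

namespace IsQuadraticInvolution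

variable (hτ : IsQuadraticInvolution τ)
include hτ

theorem exists_residueInvolution [IsDedekindDomain O] {P : HeightOneSpectrum R}
    (hP : conjPrime τ P = P) (h2 : (2 : R) ∉ P.asIdeal) {ω : R} (hω : ω - τ ω ∉ P.asIdeal) :
    ∃ t : (R ⧸ P.asIdeal) ≃ₐ[O ⧸ P.asIdeal.under O] (R ⧸ P.asIdeal),
      IsQuadraticInvolution t ∧ ∀ x, t (Ideal.Quotient.mk _ x) = Ideal.Quotient.mk _ (τ x) := by
  have h_stab : τ ∈ MulAction.stabilizer (R ≃ₐ[O] R) P.asIdeal := by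
    rw [MulAction.mem_stabilizer_iff, ← hτ.conjPrime_asIdeal, hP]
  refine ⟨Ideal.Quotient.stabilizerHom P.asIdeal (P.asIdeal.under O) (R ≃ₐ[O] R) ⟨τ, h_stab⟩,
    ⟨?_, ?_, ?_⟩, fun x ↦ rfl⟩
  · intro y
    obtain ⟨x, rfl⟩ := Ideal.Quotient.mk_surjective y
    exact congrArg _ (hτ.involutive x)
  · intro y hy
    obtain ⟨x, rfl⟩ := Ideal.Quotient.mk_surjective y
    have hx : τ x - x ∈ P.asIdeal := Ideal.Quotient.eq.1 hy
    have h2O : (2 : O) ∉ (P.under O).asIdeal := fun h ↦ h2 <| by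
      rwa [mem_under, map_ofNat] at h
    obtain ⟨c, i, hi, hc⟩ := (P.under O).isMaximal.exists_inv h2O
    obtain ⟨a, ha⟩ := hτ.exists_algebraMap_eq_add x
    refine ⟨Ideal.Quotient.mk _ (c * a), Ideal.Quotient.eq.2 ?_⟩
    have hcR : algebraMap O R c * 2 + algebraMap O R i = 1 := by
      rw [← map_ofNat (algebraMap O R), ← map_mul, ← map_add, hc, map_one]
    have h_eq : algebraMap O R (c * a) - x =
        algebraMap O R c * (τ x - x) - algebraMap O R i * x := by
      rw [map_mul, ha]
      linear_combination x * hcR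
    rw [h_eq]
    exact sub_mem (Ideal.mul_mem_left _ _ hx) (Ideal.mul_mem_right _ _ (mem_under.1 hi))
  · exact ⟨Ideal.Quotient.mk _ ω, fun h ↦ hω (Ideal.Quotient.eq.1 h.symm)⟩

theorem isSquare_mk_iff_of_conjPrime_eq [IsDedekindDomain O] {P : HeightOneSpectrum R}
    [Finite (O ⧸ P.asIdeal.under O)] (hP : conjPrime τ P = P)
    (h2 : (2 : R) ∉ P.asIdeal) {ω : R} (hω : ω - τ ω ∉ P.asIdeal) {z : R} {n : O}
    (hz : z ∉ P.asIdeal) (hn : algebraMap O R n = z * τ z) :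
    IsSquare (Ideal.Quotient.mk P.asIdeal z) ↔
      IsSquare (Ideal.Quotient.mk (P.under O).asIdeal n) := by
  obtain ⟨t, ht, ht_mk⟩ := hτ.exists_residueInvolution hP h2 hω
  let := Ideal.Quotient.field P.asIdeal
  have : (P.asIdeal.under O).IsMaximal := (P.under O).isMaximal
  let := Ideal.Quotient.field (P.asIdeal.under O)
  refine IsQuadraticInvolution.isSquare_iff_isSquare_norm
    (F := O ⧸ P.asIdeal.under O) ht ?_ ?_ ?_
  · rwa [← map_ofNat (Ideal.Quotient.mk P.asIdeal), Ne, Ideal.Quotient.eq_zero_iff_mem]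
  · rwa [Ne, Ideal.Quotient.eq_zero_iff_mem]
  · rw [ht_mk, ← map_mul, ← hn]
    rfl

end IsQuadraticInvolution

end ResidueField

/-! ### Norms at ramified primes -/

section NormForm

open WithZero

theorem exp_neg_one_mul_sq_ne_sq {a b : ℤᵐ⁰} (hb : b ≠ 0) : exp (-1) * b ^ 2 ≠ a ^ 2 := by
  intro h
  have : a ≠ 0 := fun ha ↦
    mul_ne_zero exp_ne_zero (pow_ne_zero 2 hb) (by rw [h, ha, zero_pow two_ne_zero])
  have h_log := congrArg log h
  rw [log_mul exp_ne_zero (pow_ne_zero 2 hb), log_exp, log_pow, log_pow] at h_log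
  simp only [nsmul_eq_mul, Nat.cast_ofNat] at h_log
  omega

variable {O K : Type*} [CommRing O] [IsDedekindDomain O] [Field K] [Algebra O K]
  [IsFractionRing O K]

theorem intValuation_eq_exp_neg_one {P : HeightOneSpectrum O} {d : O} (hd : d ∈ P.asIdeal)
    (hd' : d ∉ P.asIdeal ^ 2) : P.intValuation d = exp (-1 : ℤ) := by
  have hd0 : d ≠ 0 := fun h ↦ hd' (h ▸ zero_mem _)
  have h_mult : multiplicity P.asIdeal (Ideal.span {d}) = 1 := by
    refine multiplicity_eq_of_dvd_of_not_dvd ?_ ?_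
    · rwa [pow_one, Ideal.dvd_span_singleton]
    · rwa [Ideal.dvd_span_singleton]
  rw [P.intValuation_eq_exp_neg_multiplicity hd0, h_mult]
  rfl

/-- Since `d` has odd valuation at `P`, the terms `x²` and `d y²` have different valuations, so the
unit value of `x² - d y²` comes from `x²`. -/
theorem isSquare_mk_of_sq_sub_mul_sq_eq {P : HeightOneSpectrum O} {d : O} (hd : d ∈ P.asIdeal)
    (hd' : d ∉ P.asIdeal ^ 2) {u : O} (hu : u ∉ P.asIdeal) {x y : K}
    (h : x ^ 2 - algebraMap O K d * y ^ 2 = algebraMap O K u) :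
    IsSquare (Ideal.Quotient.mk P.asIdeal u) := by
  set V := P.valuation K
  have hVu : V (algebraMap O K u) = 1 := P.valuation_eq_one_iff_notMem.2 hu
  have hVd : V (algebraMap O K d * y ^ 2) = exp (-1 : ℤ) * V y ^ 2 := by
    rw [map_mul, map_pow, P.valuation_of_algebraMap, intValuation_eq_exp_neg_one hd hd']
  have h_ne : V (algebraMap O K d * y ^ 2) ≠ V (x ^ 2) := by
    rw [hVd, map_pow]
    rcases eq_or_ne y 0 with rfl | hy
    · rw [zero_pow two_ne_zero, mul_zero, sub_zero] at h
      rw [← map_pow V x, h, hVu, map_zero, zero_pow two_ne_zero, mul_zero]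
      exact zero_ne_one
    · exact exp_neg_one_mul_sq_ne_sq (V.ne_zero_iff.2 hy)
  have h_lt : V (algebraMap O K d * y ^ 2) < V (x ^ 2) := by
    refine h_ne.lt_or_gt.resolve_right fun h_gt ↦ ?_
    have h1 := V.map_sub_eq_of_lt_right h_gt
    rw [h, hVu, hVd] at h1
    exact exp_neg_one_mul_sq_ne_sq (b := V y) (a := 1) (fun hy ↦ by simp [hy] at h1)
      (by rw [one_pow, h1])
  have hVx : V (x ^ 2) = 1 := by rw [← V.map_sub_eq_of_lt_left h_lt, h, hVu]
  have hVx1 : V x ≤ 1 := (pow_le_one_iff two_ne_zero).1 (map_pow V x 2 ▸ hVx.le)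
  obtain ⟨c, hc⟩ := P.exists_valuation_sub_lt_of_integer hVx1 1
  refine isSquare_mk_iff.2 ⟨c, (P.valuation_lt_one_iff_mem (K := K) _).1 ?_⟩
  have h_eq : algebraMap O K (u - c ^ 2) =
      (x - algebraMap O K c) * (x + algebraMap O K c) - algebraMap O K d * y ^ 2 := by
    rw [map_sub, map_pow]
    linear_combination -h
  change V (algebraMap O K (u - c ^ 2)) < 1
  rw [h_eq]
  refine V.map_sub_lt ?_ (hVx ▸ h_lt)
  rw [map_mul]
  refine mul_lt_one_of_lt_of_le ?_ ((V.map_add _ _).trans (max_le hVx1 (P.valuation_le_one c)))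
  rw [V.map_sub_swap]
  exact hc

variable {R : Type*} [CommRing R] [IsDomain R] [Algebra O R] {τ : R ≃ₐ[O] R}

namespace IsQuadraticInvolution

variable (hτ : IsQuadraticInvolution τ)
include hτ

theorem isSquare_mk_of_mem_normUnits [FaithfulSMul O R] {P : HeightOneSpectrum O} {d : O}
    (h2 : (2 : O) ≠ 0) (hd : d ∈ P.asIdeal) (hd' : d ∉ P.asIdeal ^ 2) {θ : R} (hθ : τ θ = -θ)
    (hθd : θ ^ 2 = algebraMap O R d) {u : Oˣ}
    (hu : Units.map (algebraMap O R).toMonoidHom u ∈ normUnits τ) :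
    IsSquare (Ideal.Quotient.mk P.asIdeal (u : O)) := by
  obtain ⟨-, a, b, -, hb, hab⟩ := hu
  obtain ⟨n, hn⟩ := hτ.exists_algebraMap_eq_mul b
  obtain ⟨t, ht⟩ := hτ.exists_algebraMap_eq_add (a * τ b)
  obtain ⟨e, he⟩ := hτ.mem_range_of_fixed ((a * τ b - τ (a * τ b)) * θ) (by
    rw [map_mul, map_sub, hτ.involutive, hθ]
    ring)
  have h_inj := FaithfulSMul.algebraMap_injective O R
  have h_form : t ^ 2 * d - e ^ 2 = 4 * u * n ^ 2 * d := h_inj (by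
    simp only [map_mul, map_sub, map_pow, ht, he, hn, ← hθd, map_ofNat, hτ.involutive b]
    change a * τ a = algebraMap O R u * (b * τ b) at hab
    linear_combination 4 * θ ^ 2 * b * τ b * hab)
  have hd0 : d ≠ 0 := fun h ↦ hd' (h ▸ zero_mem _)
  have hn0 : n ≠ 0 := fun h ↦
    mul_ne_zero hb ((map_ne_zero_iff τ τ.injective).2 hb) (by rw [← hn, h, map_zero])
  let ι := algebraMap O (FractionRing O)
  have ι_ne_zero : ∀ {a : O}, a ≠ 0 → ι a ≠ 0 :=
    (map_ne_zero_iff ι (IsFractionRing.injective _ _)).2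
  have h2' := ι_ne_zero h2
  have hd0' := ι_ne_zero hd0
  have hn0' := ι_ne_zero hn0
  refine isSquare_mk_of_sq_sub_mul_sq_eq (K := FractionRing O) (x := ι t / (ι 2 * ι n))
    (y := ι e / (ι 2 * ι n * ι d)) hd hd' (fun h ↦ P.isPrime.ne_top
      (Ideal.eq_top_of_isUnit_mem _ h u.isUnit)) ?_
  have h_form' := congrArg ι h_form
  rw [show (4 : O) = 2 ^ 2 by norm_num] at h_form'
  simp only [map_mul, map_sub, map_pow] at h_form'
  change _ - ι d * _ = ι u
  field_simp
  linear_combination h_form'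

end IsQuadraticInvolution

end NormForm

/-! ### Signs of units at primes -/

section Orbits

variable {X : Type*} {σ : X → X} (hσ : Function.Involutive σ)

open Classical in
/-- The sum of `s : X → ℤ/2` over the orbits of an involution `σ` of `X`. -/
noncomputable def orbitSum (σ : X → X) (s : X → ZMod 2) (x : X) : ZMod 2 :=
  if σ x = x then s x else s x + s (σ x)

theorem orbitSum_of_eq {s : X → ZMod 2} {x : X} (hx : σ x = x) : orbitSum σ s x = s x :=
  if_pos hx

theorem orbitSum_of_ne {s : X → ZMod 2} {x : X} (hx : σ x ≠ x) :
    orbitSum σ s x = s x + s (σ x) :=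
  if_neg hx

include hσ in
theorem orbitSum_comp_eq_self (s : X → ZMod 2) : orbitSum σ s ∘ σ = orbitSum σ s := by
  funext x
  by_cases hx : σ x = x
  · rw [Function.comp_apply, hx]
  · rw [Function.comp_apply, orbitSum_of_ne hx, orbitSum_of_ne (hσ.injective.ne hx), hσ x,
      add_comm]

include hσ in
/-- Correcting `t` by an element with the same orbit sums leaves a `σ`-invariant function vanishing
at the fixed points; if it is the orbit sum of `s`, then it equals `s + s ∘ σ`. -/
theorem exists_mem_eqOn_of_orbitSum {A : AddSubgroup (X → ZMod 2)} {S : Set X}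
    (hS : ∀ x, σ x ∈ S ↔ x ∈ S) (hA : ∀ s ∈ A, s ∘ σ ∈ A)
    (h_sum : ∀ f : X → ZMod 2, f ∘ σ = f → ∃ s ∈ A, S.EqOn (orbitSum σ s) f) (t : X → ZMod 2) :
    ∃ s ∈ A, S.EqOn s t := by
  obtain ⟨s, hs, h_eq⟩ := h_sum (orbitSum σ t) (orbitSum_comp_eq_self hσ t)
  have h_fixed : ∀ x ∈ S, σ x = x → t x = s x := fun x hx hσx ↦ by
    rw [← orbitSum_of_eq (s := t) hσx, ← h_eq hx, orbitSum_of_eq hσx]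
  have h_swap : ∀ x ∈ S, t (σ x) - s (σ x) = t x - s x := fun x hx ↦ by
    by_cases hσx : σ x = x
    · rw [hσx]
    · have h := h_eq hx
      rw [orbitSum_of_ne hσx, orbitSum_of_ne hσx] at h
      rw [CharTwo.sub_eq_add, CharTwo.sub_eq_add, ← sub_eq_zero, CharTwo.sub_eq_add]
      linear_combination h + CharTwo.add_self_eq_zero (t x + t (σ x))
  obtain ⟨s', hs', h_eq'⟩ := h_sum (S.indicator (t - s)) (funext fun x ↦ by
    by_cases hx : x ∈ S
    · simpa [hx, hS] using h_swap x hx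
    · simp [hx, hS])
  refine ⟨s + (s' + s' ∘ σ), add_mem hs (add_mem hs' (hA s' hs')), fun x hx ↦ ?_⟩
  have h := h_eq' hx
  rw [Set.indicator_of_mem hx] at h
  by_cases hσx : σ x = x
  · simp only [Pi.add_apply, Function.comp_apply, hσx, h_fixed x hx hσx]
    rw [CharTwo.add_self_eq_zero, add_zero]
  · rw [orbitSum_of_ne hσx, Pi.sub_apply] at h
    simp only [Pi.add_apply, Function.comp_apply, h, add_sub_cancel]

theorem exists_finset_injOn_and_card_le {Y : Type*} {π : X → Y}
    (hπ : ∀ x x', π x' = π x → x' = x ∨ x' = σ x) {s : Finset X} {t : Finset Y}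
    (hst : Set.MapsTo π s t) :
    ∃ T ⊆ s, (∀ x ∈ T, σ x ≠ x) ∧ Set.InjOn π T ∧ s.card ≤ t.card + T.card := by
  classical
  obtain ⟨U, hU, h_inj, h_image⟩ := Finset.exists_subset_injOn_image_eq_of_surjOn (f := π) s
    (s.image π) (by rw [Finset.coe_image]; exact Set.surjOn_image π s)
  rw [Finset.coe_subset] at hU
  have h_conj : ∀ x ∈ s \ U, σ x ∈ U := fun x hx ↦ by
    obtain ⟨hxs, hxU⟩ := Finset.mem_sdiff.1 hx
    obtain ⟨y, hy, hyx⟩ := Finset.mem_image.1 (h_image ▸ Finset.mem_image_of_mem π hxs)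
    rcases hπ x y hyx with rfl | rfl
    exacts [absurd hy hxU, hy]
  refine ⟨s \ U, Finset.sdiff_subset, fun x hx h ↦ ?_, fun x hx x' hx' h ↦ ?_, ?_⟩
  · exact (Finset.mem_sdiff.1 hx).2 (h ▸ h_conj x hx)
  · refine (hπ x' x h).resolve_right fun h' ↦ ?_
    exact (Finset.mem_sdiff.1 hx).2 (h' ▸ h_conj x' hx')
  · have h_le := Finset.card_le_card_of_injOn π (fun x hx ↦ hst (hU hx)) h_inj
    have h_add := Finset.card_sdiff_add_card_eq_card hU
    omega

end Orbits

section Signs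

variable {K : Type*} [Field K] [NumberField K]

instance (P : HeightOneSpectrum (𝓞 K)) : Finite (𝓞 K ⧸ P.asIdeal) :=
  Ideal.finiteQuotientOfFreeOfNeBot P.asIdeal P.ne_bot

theorem coe_unit_notMem {O : Type*} [CommRing O] (P : HeightOneSpectrum O) (u : Oˣ) :
    (u : O) ∉ P.asIdeal := fun h ↦
  P.isPrime.ne_top (Ideal.eq_top_of_isUnit_mem _ h u.isUnit)

open Classical in
/-- The quadratic residue symbol of `x` at the prime `P`, written additively in `ℤ/2`. Only its
values at elements outside `P` are meaningful. -/
noncomputable def residueSign {O : Type*} [CommRing O] (P : HeightOneSpectrum O) (x : O) :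
    ZMod 2 :=
  if IsSquare (Ideal.Quotient.mk P.asIdeal x) then 0 else 1

theorem residueSign_eq_zero_iff {O : Type*} [CommRing O] {P : HeightOneSpectrum O} {x : O} :
    residueSign P x = 0 ↔ IsSquare (Ideal.Quotient.mk P.asIdeal x) := by
  rw [residueSign]
  split_ifs with h <;> simp [h]

theorem residueSign_congr {O O' : Type*} [CommRing O] [CommRing O'] {P : HeightOneSpectrum O}
    {P' : HeightOneSpectrum O'} {x : O} {x' : O'}
    (h : IsSquare (Ideal.Quotient.mk P.asIdeal x) ↔ IsSquare (Ideal.Quotient.mk P'.asIdeal x')) :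
    residueSign P x = residueSign P' x' := by
  by_cases h' : IsSquare (Ideal.Quotient.mk P.asIdeal x)
  · rw [residueSign, residueSign, if_pos h', if_pos (h.1 h')]
  · rw [residueSign, residueSign, if_neg h', if_neg (h.not.1 h')]

theorem residueSign_mul {P : HeightOneSpectrum (𝓞 K)} {x y : 𝓞 K} (hx : x ∉ P.asIdeal)
    (hy : y ∉ P.asIdeal) : residueSign P (x * y) = residueSign P x + residueSign P y := by
  let := Ideal.Quotient.field P.asIdeal
  have h_iff := isSquare_mul_iff (a := Ideal.Quotient.mk P.asIdeal x)
    (b := Ideal.Quotient.mk P.asIdeal y) (by rwa [Ne, Ideal.Quotient.eq_zero_iff_mem])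
    (by rwa [Ne, Ideal.Quotient.eq_zero_iff_mem])
  rw [← map_mul] at h_iff
  unfold residueSign
  by_cases h1 : IsSquare (Ideal.Quotient.mk P.asIdeal x) <;>
    by_cases h2 : IsSquare (Ideal.Quotient.mk P.asIdeal y) <;>
    simp only [h_iff, h1, h2, iff_true, iff_false, not_true_eq_false, if_true, if_false,
      add_zero, zero_add, CharTwo.add_self_eq_zero]

/-- The homomorphism recording the residue signs of the units at a family of primes. -/
noncomputable def unitSigns {ι : Type*} (P : ι → HeightOneSpectrum (𝓞 K)) :
    (𝓞 K)ˣ →* Multiplicative (ι → ZMod 2) where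
  toFun u := Multiplicative.ofAdd fun i ↦ residueSign (P i) (u : 𝓞 K)
  map_one' := congrArg Multiplicative.ofAdd <| funext fun _ ↦
    residueSign_eq_zero_iff.2 (by simp)
  map_mul' u v := by
    rw [← ofAdd_add]
    exact congrArg Multiplicative.ofAdd <| funext fun i ↦
      residueSign_mul (coe_unit_notMem (P i) u) (coe_unit_notMem (P i) v)

variable (K)

/-- The units of `K` realize every system of residue signs at the primes over `m`. -/
def SignsIndependentAt (m : ℕ) : Prop :=
  ∀ w : HeightOneSpectrum (𝓞 K) → ZMod 2, ∃ u : (𝓞 K)ˣ,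
    ∀ P : HeightOneSpectrum (𝓞 K), (m : 𝓞 K) ∈ P.asIdeal → residueSign P (u : 𝓞 K) = w P

/-- No prime of `K` divides `m` more than once: for `m` prime, this says that `m` is unramified
in `K`. -/
def UnramifiedAt (m : ℕ) : Prop :=
  ∀ P : HeightOneSpectrum (𝓞 K), (m : 𝓞 K) ∈ P.asIdeal → (m : 𝓞 K) ∉ P.asIdeal ^ 2

/-- The finite set of primes of `K` dividing `m`. -/
noncomputable def placesOver (m : ℕ) [NeZero m] : Finset (HeightOneSpectrum (𝓞 K)) :=
  (Ideal.finite_factors (I := Ideal.span {(m : 𝓞 K)})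
    (by simpa using NeZero.ne m)).toFinset

variable {K}

theorem mem_placesOver {m : ℕ} [NeZero m] {P : HeightOneSpectrum (𝓞 K)} :
    P ∈ placesOver K m ↔ (m : 𝓞 K) ∈ P.asIdeal := by
  rw [placesOver, Set.Finite.mem_toFinset, Set.mem_ofPred_eq, Ideal.dvd_span_singleton]

theorem SignsIndependentAt.unitSigns_surjective {m : ℕ} (h : SignsIndependentAt K m) {ι : Type*}
    {P : ι → HeightOneSpectrum (𝓞 K)} (hP : Function.Injective P)
    (hm : ∀ i, (m : 𝓞 K) ∈ (P i).asIdeal) : Function.Surjective (unitSigns P) := fun w ↦ by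
  obtain ⟨u, hu⟩ := h (Function.extend P (Multiplicative.toAdd w) 0)
  exact ⟨u, congrArg Multiplicative.ofAdd <| funext fun i ↦
    (hu (P i) (hm i)).trans (hP.extend_apply _ _ i)⟩

end Signs

section SignsOfNorms

variable {K L : Type*} [Field K] [Field L] [NumberField K] [NumberField L] [Algebra K L]
  [Algebra.IsQuadraticExtension K L] {m : ℕ} {ω : 𝓞 L}
  (hω : ∀ P : HeightOneSpectrum (𝓞 L), (m : 𝓞 L) ∈ P.asIdeal →
    ω - integersConj K L ω ∉ P.asIdeal)

omit [NumberField K] [NumberField L] [Algebra.IsQuadraticExtension K L] in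
theorem natCast_mem_under {P : HeightOneSpectrum (𝓞 L)} :
    (m : 𝓞 K) ∈ (P.under (𝓞 K)).asIdeal ↔ (m : 𝓞 L) ∈ P.asIdeal := by
  rw [mem_under, map_natCast]

include hω

theorem UnramifiedAt.of_isQuadraticExtension (h : UnramifiedAt K m) : UnramifiedAt L m :=
  fun P hP ↦ by
    have hP' := natCast_mem_under (K := K).2 hP
    rw [← map_natCast (algebraMap (𝓞 K) (𝓞 L))]
    exact (isQuadraticInvolution_integersConj K L).algebraMap_notMem_sq (hω P hP) hP' (h _ hP')

variable (h2 : ∀ P : HeightOneSpectrum (𝓞 L), (m : 𝓞 L) ∈ P.asIdeal → (2 : 𝓞 L) ∉ P.asIdeal)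
include h2

theorem residueSign_under_norm {u : (𝓞 L)ˣ} {v : 𝓞 K}
    (huv : algebraMap (𝓞 K) (𝓞 L) v = u * integersConj K L u) {P : HeightOneSpectrum (𝓞 L)}
    (hP : (m : 𝓞 L) ∈ P.asIdeal) :
    orbitSum (conjPrime (integersConj K L)) (fun Q ↦ residueSign Q (u : 𝓞 L)) P =
      residueSign (P.under (𝓞 K)) v := by
  have hτ := isQuadraticInvolution_integersConj K L
  have : Finite (𝓞 K ⧸ P.asIdeal.under (𝓞 K)) :=
    inferInstanceAs (Finite (𝓞 K ⧸ (P.under (𝓞 K)).asIdeal))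
  by_cases hc : conjPrime (integersConj K L) P = P
  · rw [orbitSum_of_eq hc]
    exact residueSign_congr
      (hτ.isSquare_mk_iff_of_conjPrime_eq hc (h2 P hP) (hω P hP) (coe_unit_notMem P u) huv)
  · rw [orbitSum_of_ne hc, residueSign_congr (isSquare_mk_conjPrime_iff (integersConj K L) P _),
      ← residueSign_congr (hτ.isSquare_mk_algebraMap_iff_of_conjPrime_ne hc v), huv]
    exact (residueSign_mul (coe_unit_notMem P u)
      (coe_unit_notMem P (unitsInvolution (integersConj K L) u))).symm

theorem SignsIndependentAt.of_isQuadraticExtension (h : SignsIndependentAt K m)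
    (h_norm : ∀ u : (𝓞 K)ˣ, ∃ ε : (𝓞 L)ˣ,
      ε * unitsInvolution (integersConj K L) ε = unitsInclusion K L u) :
    SignsIndependentAt L m := fun w ↦ by
  have hτ := isQuadraticInvolution_integersConj K L
  let signs := (MonoidHom.toAdditive (unitSigns (id : HeightOneSpectrum (𝓞 L) → _))).range
  suffices h_mem : ∃ s ∈ signs, Set.EqOn s w {P | (m : 𝓞 L) ∈ P.asIdeal} by
    obtain ⟨_, ⟨u, rfl⟩, hu⟩ := h_mem
    exact ⟨u.toMul, fun P hP ↦ hu hP⟩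
  refine exists_mem_eqOn_of_orbitSum hτ.conjPrime_involutive (fun P ↦ ?_) ?_ (fun f hf ↦ ?_) w
  · rw [Set.mem_ofPred_eq, mem_conjPrime, map_natCast]
    rfl
  · rintro _ ⟨u, rfl⟩
    exact ⟨Additive.ofMul (unitsInvolution (integersConj K L) u.toMul), funext fun P ↦
      (residueSign_congr (isSquare_mk_conjPrime_iff (integersConj K L) P _)).symm⟩
  · have h_factor : Function.FactorsThrough f fun P : HeightOneSpectrum (𝓞 L) ↦ P.under (𝓞 K) :=
      fun P Q hPQ ↦ by
        rcases hτ.under_eq_under_iff.1 hPQ with rfl | rfl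
        · rfl
        · exact congrFun hf Q
    obtain ⟨v, hv⟩ := h (Function.extend (fun P : HeightOneSpectrum (𝓞 L) ↦ P.under (𝓞 K)) f 0)
    obtain ⟨u, hu⟩ := h_norm v
    refine ⟨_, ⟨Additive.ofMul u, rfl⟩, fun P hP ↦ ?_⟩
    refine (residueSign_under_norm hω h2 (congrArg Units.val hu).symm hP).trans ?_
    rw [hv _ (natCast_mem_under.2 hP), h_factor.extend_apply]

end SignsOfNorms

section NormResidue

variable {K L : Type*} [Field K] [Field L] [NumberField K] [Algebra K L]
  [Algebra.IsQuadraticExtension K L]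

theorem unitSigns_eq_one_of_mem_normUnits {m : ℕ} (h : UnramifiedAt K m) {θ : 𝓞 L}
    (hθ : integersConj K L θ = -θ) (hθm : θ ^ 2 = m) {ι : Type*}
    {P : ι → HeightOneSpectrum (𝓞 K)} (hP : ∀ i, (m : 𝓞 K) ∈ (P i).asIdeal) {u : (𝓞 K)ˣ}
    (hu : unitsInclusion K L u ∈ normUnits (integersConj K L)) : unitSigns P u = 1 :=
  congrArg Multiplicative.ofAdd <| funext fun i ↦ residueSign_eq_zero_iff.2 <|
    (isQuadraticInvolution_integersConj K L).isSquare_mk_of_mem_normUnits two_ne_zero (hP i)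
      (h _ (hP i)) hθ (by rw [hθm, map_natCast]) hu

end NormResidue

/-! ### Adjoining a square root -/

section Primes

variable {O : Type*} [CommRing O]

theorem notMem_of_isCoprime {P : HeightOneSpectrum O} {a b : O} (h : IsCoprime a b)
    (ha : a ∈ P.asIdeal) : b ∉ P.asIdeal := fun hb ↦ by
  obtain ⟨u, v, huv⟩ := h
  refine P.isPrime.ne_top ((Ideal.eq_top_iff_one _).2 (huv ▸ ?_))
  exact add_mem (Ideal.mul_mem_left _ u ha) (Ideal.mul_mem_left _ v hb)

theorem natCast_notMem_of_coprime {P : HeightOneSpectrum O} {m n : ℕ} (h : m.Coprime n)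
    (hm : (m : O) ∈ P.asIdeal) : (n : O) ∉ P.asIdeal :=
  notMem_of_isCoprime (by simpa using h.isCoprime.map (Int.castRingHom O)) hm

theorem two_notMem_of_odd {P : HeightOneSpectrum O} {m : ℕ} (hm : Odd m)
    (hP : (m : O) ∈ P.asIdeal) : (2 : O) ∉ P.asIdeal :=
  natCast_notMem_of_coprime (Nat.coprime_two_right.2 hm) hP

theorem intCast_mem_iff {P : HeightOneSpectrum O} {l : ℕ} (hl : l.Prime) (hP : (l : O) ∈ P.asIdeal)
    (n : ℤ) : (n : O) ∈ P.asIdeal ↔ (n : ZMod l) = 0 := by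
  rw [ZMod.intCast_zmod_eq_zero_iff_dvd]
  constructor
  · intro hn
    by_contra h_dvd
    have h_coprime : IsCoprime (l : ℤ) n :=
      (Nat.prime_iff_prime_int.1 hl).coprime_iff_not_dvd.2 h_dvd
    exact notMem_of_isCoprime (by simpa using h_coprime.map (Int.castRingHom O)) hP hn
  · rintro ⟨c, rfl⟩
    rw [Int.cast_mul, Int.cast_natCast]
    exact Ideal.mul_mem_right _ _ hP

theorem not_isUnit_natCast (K : Type*) [Field K] [NumberField K] {m : ℕ} (hm : m ≠ 1) :
    ¬ IsUnit (m : 𝓞 K) := fun h ↦ by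
  have h_norm := h.map (Algebra.norm ℤ (S := 𝓞 K))
  rw [← map_natCast (algebraMap ℤ (𝓞 K)), Algebra.norm_algebraMap,
    isUnit_pow_iff Module.finrank_pos.ne', Int.isUnit_iff] at h_norm
  lia

theorem exists_natCast_mem (K : Type*) [Field K] [NumberField K] {m : ℕ} (hm : m ≠ 1)
    [NeZero m] : ∃ P : HeightOneSpectrum (𝓞 K), (m : 𝓞 K) ∈ P.asIdeal := by
  obtain ⟨P, hP, hmP⟩ := exists_max_ideal_of_mem_nonunits (not_isUnit_natCast K hm)
  exact ⟨⟨P, hP.isPrime, fun h ↦ NeZero.ne (m : 𝓞 K) (by rwa [h] at hmP)⟩, hmP⟩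

theorem not_isSquare_of_mem_of_notMem_sq {K : Type*} [Field K] [NumberField K] {d : 𝓞 K}
    {P : HeightOneSpectrum (𝓞 K)} (hd : d ∈ P.asIdeal) (hd2 : d ∉ P.asIdeal ^ 2) :
    ¬ IsSquare (d : K) := by
  rintro ⟨y, hy⟩
  rw [← pow_two] at hy
  obtain ⟨z, rfl⟩ := IsIntegrallyClosed.exists_algebraMap_eq_of_isIntegral_pow (R := 𝓞 K)
    two_pos (x := y) (hy ▸ isIntegral_algebraMap)
  obtain rfl : d = z ^ 2 := RingOfIntegers.ext (hy.trans (map_pow (algebraMap (𝓞 K) K) z 2).symm)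
  exact hd2 (Ideal.pow_mem_pow (P.isPrime.mem_of_pow_mem _ hd) 2)

theorem UnramifiedAt.not_isSquare {K : Type*} [Field K] [NumberField K] {m : ℕ} (hm : m ≠ 1)
    [NeZero m] (h : UnramifiedAt K m) : ¬ IsSquare (m : K) := by
  obtain ⟨P, hP⟩ := exists_natCast_mem K hm
  simpa using not_isSquare_of_mem_of_notMem_sq hP (h P hP)

end Primes

theorem exists_two_mul_eq_add {R : Type*} [CommRing R] [IsDomain R] [IsIntegrallyClosed R]
    [NeZero (2 : R)] {a b c : R} (h : a ^ 2 = b ^ 2 + 4 * c) : ∃ ω, 2 * ω = b + a := by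
  have h2 : algebraMap R (FractionRing R) 2 ≠ 0 := by
    simpa using (FaithfulSMul.algebraMap_injective R (FractionRing R)).ne (NeZero.ne (2 : R))
  have h_int : IsIntegral R (algebraMap R (FractionRing R) (b + a) / algebraMap R _ 2) := by
    refine ⟨.X ^ 2 - .C b * .X - .C c, by monicity!, ?_⟩
    have h' := congrArg (algebraMap R (FractionRing R)) h
    simp only [map_add, map_mul, map_pow, map_ofNat, Polynomial.eval₂_sub, Polynomial.eval₂_mul,
      Polynomial.eval₂_pow, Polynomial.eval₂_X, Polynomial.eval₂_C] at h' h2 ⊢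
    field_simp
    linear_combination h'
  obtain ⟨ω, hω⟩ := IsIntegrallyClosed.isIntegral_iff.1 h_int
  refine ⟨ω, FaithfulSMul.algebraMap_injective R (FractionRing R) ?_⟩
  rw [map_mul, hω, mul_div_cancel₀ _ h2]

theorem im_eq_zero_of_sq_eq_ofReal {z : ℂ} {r : ℝ} (hr : 0 < r) (hz : z ^ 2 = r) : z.im = 0 := by
  have h_re := congrArg Complex.re hz
  have h_im := congrArg Complex.im hz
  rw [pow_two, Complex.mul_re, Complex.ofReal_re] at h_re
  rw [pow_two, Complex.mul_im, Complex.ofReal_im, mul_comm z.im, ← two_mul] at h_im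
  rcases mul_eq_zero.1 (mul_eq_zero.1 h_im |>.resolve_left two_ne_zero) with h | h
  · rw [h] at h_re
    nlinarith [sq_nonneg z.im]
  · exact h

section SquareRoot

variable {K L : Type*} [Field K] [Field L] [NumberField K] [Algebra K L]
  [Algebra.IsQuadraticExtension K L] {θ : 𝓞 L}

theorem integersConj_eq_neg {d : 𝓞 K} (h : ¬ IsSquare (d : K))
    (hd : θ ^ 2 = algebraMap (𝓞 K) (𝓞 L) d) : integersConj K L θ = -θ := by
  have hd' : (θ : L) ^ 2 = algebraMap K L d := by rw [← map_pow, hd]; rfl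
  refine RingOfIntegers.ext ?_
  refine (coe_integersConj θ).trans ((quadraticConj_eq_neg hd' ?_).trans (map_neg _ θ).symm)
  rintro ⟨w, hw⟩
  refine h ⟨w, (algebraMap K L).injective ?_⟩
  rw [← hd', ← hw, map_mul, pow_two]

theorem sub_integersConj_eq_of_two_mul_eq_add [CharZero L] {ω b : 𝓞 L}
    (hθ : integersConj K L θ = -θ) (hb : integersConj K L b = b) (hω : 2 * ω = b + θ) :
    ω - integersConj K L ω = θ := by
  have hω' := congrArg (integersConj K L) hω
  rw [map_mul, map_ofNat, map_add, hb, hθ] at hω'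
  exact mul_left_cancel₀ (two_ne_zero (α := 𝓞 L)) (by linear_combination hω - hω')

theorem exists_eq_add_mul_of_quadraticConj_eq_neg {θ : L} (h0 : θ ≠ 0)
    (hθ : quadraticConj K L θ = -θ) (x : L) :
    ∃ a b : K, x = algebraMap K L a + algebraMap K L b * θ := by
  have := charZero_of_injective_algebraMap (algebraMap K L).injective
  have h_inv := quadraticConj_involutive K L x
  obtain ⟨a, ha⟩ := mem_range_of_quadraticConj_eq (K := K)
    (x := (x + quadraticConj K L x) / 2) (by rw [map_div₀, map_add, h_inv, map_ofNat, add_comm])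
  obtain ⟨b, hb⟩ := mem_range_of_quadraticConj_eq (K := K)
    (x := (x - quadraticConj K L x) / (2 * θ)) (by
      rw [map_div₀, map_sub, h_inv, map_mul, hθ, map_ofNat, mul_neg, div_neg, ← neg_div, neg_sub])
  refine ⟨a, b, ?_⟩
  rw [ha, hb]
  field_simp
  ring

theorem isTotallyReal_of_sq_eq [IsTotallyReal K] {d : 𝓞 K} (hθ : integersConj K L θ = -θ)
    (hd : θ ^ 2 = algebraMap (𝓞 K) (𝓞 L) d) (hpos : ∀ φ : K →+* ℝ, 0 < φ d) :
    IsTotallyReal L where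
  isReal v := by
    rw [InfinitePlace.isReal_iff, ComplexEmbedding.isReal_iff]
    set ψ := v.embedding
    have h_real := IsTotallyReal.complexEmbedding_isReal (ψ.comp (algebraMap K L))
    have h_base (a : K) : ψ (algebraMap K L a) = (h_real.embedding a : ℂ) :=
      (ComplexEmbedding.IsReal.coe_embedding_apply h_real a).symm
    have h_im_base (a : K) : (ψ (algebraMap K L a)).im = 0 := by rw [h_base, Complex.ofReal_im]
    have h_sq : ψ θ ^ 2 = (h_real.embedding d : ℂ) := by
      rw [← map_pow, ← h_base]
      exact congrArg (fun z : 𝓞 L ↦ ψ z) hd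
    have h_im : (ψ θ).im = 0 := im_eq_zero_of_sq_eq_ofReal (hpos _) h_sq
    have hθ' : quadraticConj K L θ = -θ :=
      (coe_integersConj θ).symm.trans ((congrArg _ hθ).trans (map_neg _ θ))
    have h0 : (θ : L) ≠ 0 := fun h ↦ by
      rw [h, map_zero, zero_pow two_ne_zero, eq_comm, Complex.ofReal_eq_zero] at h_sq
      exact (hpos _).ne' h_sq
    ext x
    obtain ⟨a, b, rfl⟩ := exists_eq_add_mul_of_quadraticConj_eq_neg h0 hθ' x
    rw [ComplexEmbedding.conjugate_coe_eq, Complex.conj_eq_iff_im, map_add, map_mul,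
      Complex.add_im, Complex.mul_im, h_im_base, h_im_base, h_im]
    ring

section Different

variable {d : 𝓞 K} (hθ : integersConj K L θ = -θ) (hd : θ ^ 2 = algebraMap (𝓞 K) (𝓞 L) d)
include hθ hd

theorem sub_integersConj_notMem {P : HeightOneSpectrum (𝓞 L)} (h2 : (2 : 𝓞 L) ∉ P.asIdeal)
    (hdP : d ∉ (P.under (𝓞 K)).asIdeal) : θ - integersConj K L θ ∉ P.asIdeal := by
  rw [hθ, sub_neg_eq_add, ← two_mul, P.isPrime.mul_mem_iff_mem_or_mem, not_or]
  refine ⟨h2, fun h ↦ hdP ?_⟩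
  rw [mem_under, ← hd]
  exact Ideal.pow_mem_of_mem _ h 2 two_pos

theorem unramifiedOutside_of_sq_eq {S : Finset (HeightOneSpectrum (𝓞 K))}
    (hS : ∀ P ∉ S, (2 : 𝓞 K) ∉ P.asIdeal ∧ d ∉ P.asIdeal) :
    UnramifiedOutside (integersConj K L) S := fun P hP ↦ by
  refine ⟨θ, 2 ^ 2 * d, ?_, ?_⟩
  · rw [hθ, map_mul, ← hd, map_pow, map_ofNat]
    ring
  · rw [P.isPrime.mul_mem_iff_mem_or_mem, not_or]
    exact ⟨fun h ↦ (hS P hP).1 (P.isPrime.mem_of_pow_mem _ h), (hS P hP).2⟩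

end Different

end SquareRoot

/-! ### The layers of the tower -/

section DuplicationFormula

variable {R S : Type*} [CommRing R] [CommRing S] [Algebra R S] {x : R} {y : S}

theorem algebraMap_two_sub (hyx : y ^ 2 = algebraMap R S (2 + x)) :
    algebraMap R S (2 - x) = (2 + y) * (2 - y) := by
  rw [map_add, map_ofNat] at hyx
  rw [map_sub, map_ofNat]
  linear_combination hyx

theorem mem_of_sq_eq_algebraMap {P : HeightOneSpectrum S} [IsDomain R] [IsDomain S]
    [Algebra.IsIntegral R S] {d : R} (hyd : y ^ 2 = algebraMap R S d) :
    y ∈ P.asIdeal ↔ d ∈ (P.under R).asIdeal := by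
  rw [mem_under, ← hyd]
  exact ⟨fun h ↦ Ideal.pow_mem_of_mem _ h 2 two_pos, P.isPrime.mem_of_pow_mem _⟩

theorem IsQuadraticInvolution.conjPrime_eq_of_notMem_sq [IsDomain R] [IsDedekindDomain S]
    [Algebra.IsIntegral R S] [Module.FaithfullyFlat R S] {τ : S ≃ₐ[R] S}
    (hτ : IsQuadraticInvolution τ) {d : R} (hy : τ y = -y) (hyd : y ^ 2 = algebraMap R S d)
    {P : HeightOneSpectrum S} (hd : d ∈ (P.under R).asIdeal) (hd2 : d ∉ (P.under R).asIdeal ^ 2) :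
    conjPrime τ P = P := by
  by_contra h_ne
  refine hd2 (hτ.mem_under_sq_of_algebraMap_mem (hyd ▸ Ideal.pow_mem_pow ?_ 2))
  have hyP : y ∈ P.asIdeal := (mem_of_sq_eq_algebraMap hyd).2 hd
  have h_coprime : IsCoprime P.asIdeal (conjPrime τ P).asIdeal :=
    Ideal.isCoprime_of_isMaximal fun h ↦ h_ne (HeightOneSpectrum.ext h.symm)
  rw [Ideal.mul_eq_inf_of_isCoprime h_coprime]
  exact ⟨hyP, by rw [SetLike.mem_coe, mem_conjPrime, hy]; exact neg_mem hyP⟩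

end DuplicationFormula

theorem card_placesOver_le_of_conjPrime_eq {K L : Type*} [Field K] [Field L] [NumberField K]
    [NumberField L] [Algebra K L] [Algebra.IsQuadraticExtension K L] {m : ℕ} [NeZero m]
    (h : ∀ P : HeightOneSpectrum (𝓞 L), (m : 𝓞 L) ∈ P.asIdeal →
      conjPrime (integersConj K L) P = P) :
    (placesOver L m).card ≤ (placesOver K m).card := by
  refine Finset.card_le_card_of_injOn (fun P ↦ P.under (𝓞 K)) (fun P hP ↦ ?_)
    fun P hP Q _ hPQ ↦ ?_
  · exact mem_placesOver.2 (natCast_mem_under.2 (mem_placesOver.1 hP))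
  · rcases (isQuadraticInvolution_integersConj K L).under_eq_under_iff.1 hPQ.symm with h' | h'
    · exact h'.symm
    · rw [h', h P (mem_placesOver.1 hP)]

/-- The properties of `x = 2 cos (2π / 2 ^ (n + 2))` and of the `n`-th layer `K` of the cyclotomic
`ℤ₂`-extension of `ℚ(√p)` that are carried from one layer to the next, where the new `x` is
`√(2 + x)`. -/
structure LayerInvariant (q s : ℕ) [NeZero q] (K : Type*) [Field K] [NumberField K] (x : 𝓞 K) :
    Prop where
  isTotallyReal : IsTotallyReal K
  abs_lt_two (φ : K →+* ℝ) : |φ x| < 2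
  odd_card_classGroup : Odd (Nat.card (ClassGroup (𝓞 K)))
  card_placesOver_two_le : (placesOver K 2).card ≤ 1
  two_add_mem (P : HeightOneSpectrum (𝓞 K)) (hP : (2 : 𝓞 K) ∈ P.asIdeal) : 2 + x ∈ P.asIdeal
  two_add_notMem_sq (P : HeightOneSpectrum (𝓞 K)) (hP : (2 : 𝓞 K) ∈ P.asIdeal) :
    2 + x ∉ P.asIdeal ^ 2
  notMem_of_two_notMem (P : HeightOneSpectrum (𝓞 K)) (hP : (2 : 𝓞 K) ∉ P.asIdeal) :
    2 + x ∉ P.asIdeal ∧ 2 - x ∉ P.asIdeal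
  unramifiedAt_left : UnramifiedAt K q
  unramifiedAt_right : UnramifiedAt K s
  signsIndependentAt_left : SignsIndependentAt K q
  signsIndependentAt_right : SignsIndependentAt K s
  card_placesOver_le : (placesOver K q).card ≤ 2
  not_isSquare_mk (P : HeightOneSpectrum (𝓞 K)) (hP : (q : 𝓞 K) ∈ P.asIdeal) :
    ¬ IsSquare (Ideal.Quotient.mk P.asIdeal (2 + x)) ∧
      ¬ IsSquare (Ideal.Quotient.mk P.asIdeal (2 - x))

namespace LayerInvariant

variable {q s : ℕ} [NeZero q] {K : Type*} [Field K] [NumberField K] {x : 𝓞 K}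
  (h : LayerInvariant q s K x)
include h

theorem two_add_pos (φ : K →+* ℝ) : 0 < φ (2 + x : 𝓞 K) := by
  have h_neg := (abs_lt.1 (h.abs_lt_two φ)).1
  have h_map : φ (2 + x : 𝓞 K) = 2 + φ x :=
    (map_add (φ.comp (algebraMap (𝓞 K) K)) 2 x).trans (by rw [map_ofNat]; rfl)
  linarith

theorem not_isSquare_two_add : ¬ IsSquare ((2 + x : 𝓞 K) : K) := by
  obtain ⟨P, hP⟩ := exists_natCast_mem K (m := 2) (by decide)
  exact not_isSquare_of_mem_of_notMem_sq (h.two_add_mem P hP) (h.two_add_notMem_sq P hP)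

variable {L : Type*} [Field L] [Algebra K L] [Algebra.IsQuadraticExtension K L] {y : 𝓞 L}
  (hyx : y ^ 2 = algebraMap (𝓞 K) (𝓞 L) (2 + x))
include hyx

theorem integersConj_eq_neg : integersConj K L y = -y :=
  _root_.integersConj_eq_neg h.not_isSquare_two_add hyx

theorem algebraMap_two_sub_eq_norm :
    algebraMap (𝓞 K) (𝓞 L) (2 - x) = (2 + y) * integersConj K L (2 + y) := by
  rw [algebraMap_two_sub hyx, map_add, map_ofNat, h.integersConj_eq_neg hyx, sub_eq_add_neg]

theorem isTotallyReal_next : IsTotallyReal L :=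
  have := h.isTotallyReal
  isTotallyReal_of_sq_eq (h.integersConj_eq_neg hyx) hyx h.two_add_pos

omit [Algebra.IsQuadraticExtension K L] in
theorem abs_lt_two_next (φ : L →+* ℝ) : |φ y| < 2 := by
  have h_sq : φ y ^ 2 = 2 + φ (algebraMap K L x) := by
    have h_map : φ (algebraMap (𝓞 L) L (y ^ 2)) = φ (algebraMap K L (2 + x : 𝓞 K)) := by
      rw [hyx]
      rfl
    simpa only [map_pow, map_add, map_ofNat] using h_map
  have h_lt := (abs_lt.1 (h.abs_lt_two (φ.comp (algebraMap K L)))).2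
  rw [RingHom.comp_apply] at h_lt
  exact abs_lt_of_sq_lt_sq (by linarith) zero_le_two

theorem unramifiedOutside_two : UnramifiedOutside (integersConj K L) (placesOver K 2) :=
  unramifiedOutside_of_sq_eq (h.integersConj_eq_neg hyx) hyx fun P hP ↦
    have h2 : (2 : 𝓞 K) ∉ P.asIdeal := by simpa only [mem_placesOver, Nat.cast_ofNat] using hP
    ⟨h2, (h.notMem_of_two_notMem P h2).1⟩

theorem odd_card_classGroup_next [NumberField L] : Odd (Nat.card (ClassGroup (𝓞 L))) :=
  have := h.isTotallyReal
  have := h.isTotallyReal_next hyx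
  odd_card_classGroup_of_card_le_one h.odd_card_classGroup (h.unramifiedOutside_two hyx)
    h.card_placesOver_two_le

theorem conjPrime_eq_of_two_mem [NumberField L] {P : HeightOneSpectrum (𝓞 L)}
    (hP : (2 : 𝓞 L) ∈ P.asIdeal) :
    conjPrime (integersConj K L) P = P :=
  have hP' : (2 : 𝓞 K) ∈ (P.under (𝓞 K)).asIdeal := by rwa [mem_under, map_ofNat]
  (isQuadraticInvolution_integersConj K L).conjPrime_eq_of_notMem_sq (h.integersConj_eq_neg hyx)
    hyx (h.two_add_mem _ hP') (h.two_add_notMem_sq _ hP')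

omit [Algebra.IsQuadraticExtension K L] in
theorem two_add_mem_next {P : HeightOneSpectrum (𝓞 L)} (hP : (2 : 𝓞 L) ∈ P.asIdeal) :
    2 + y ∈ P.asIdeal :=
  add_mem hP ((mem_of_sq_eq_algebraMap hyx).2 (h.two_add_mem _ (by rwa [mem_under, map_ofNat])))

theorem two_add_notMem_sq_next [NumberField L] {P : HeightOneSpectrum (𝓞 L)}
    (hP : (2 : 𝓞 L) ∈ P.asIdeal) :
    2 + y ∉ P.asIdeal ^ 2 := fun hyP ↦ by
  have hτ := isQuadraticInvolution_integersConj K L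
  have hP' : (2 : 𝓞 K) ∈ (P.under (𝓞 K)).asIdeal := by rwa [mem_under, map_ofNat]
  have h_sub : 2 - x ∈ (P.under (𝓞 K)).asIdeal ^ 2 := by
    refine hτ.mem_under_sq_of_algebraMap_mem ?_
    rw [h.algebraMap_two_sub_eq_norm hyx, hτ.conjPrime_asIdeal, mul_pow, ← smul_pow']
    exact hτ.mul_apply_mem hyP hyP
  refine h.two_add_notMem_sq _ hP' ?_
  rw [show 2 + x = 2 ^ 2 - (2 - x) by ring]
  exact sub_mem (Ideal.pow_mem_pow hP' 2) h_sub

omit [Algebra.IsQuadraticExtension K L] in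
theorem notMem_of_two_notMem_next {P : HeightOneSpectrum (𝓞 L)} (hP : (2 : 𝓞 L) ∉ P.asIdeal) :
    2 + y ∉ P.asIdeal ∧ 2 - y ∉ P.asIdeal := by
  have h_sub := (h.notMem_of_two_notMem (P.under (𝓞 K)) (by rwa [mem_under, map_ofNat])).2
  rwa [mem_under, algebraMap_two_sub hyx, P.isPrime.mul_mem_iff_mem_or_mem, not_or] at h_sub

theorem sub_integersConj_notMem {P : HeightOneSpectrum (𝓞 L)} (hP : (2 : 𝓞 L) ∉ P.asIdeal) :
    y - integersConj K L y ∉ P.asIdeal :=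
  _root_.sub_integersConj_notMem (h.integersConj_eq_neg hyx) hyx hP
    (h.notMem_of_two_notMem _ (by rwa [mem_under, map_ofNat])).1

theorem unramifiedAt_next [NumberField L] {m : ℕ} (hm : Odd m) (h_unr : UnramifiedAt K m) :
    UnramifiedAt L m :=
  h_unr.of_isQuadraticExtension fun _ hP ↦
    h.sub_integersConj_notMem hyx (two_notMem_of_odd hm hP)

theorem signsIndependentAt_next [NumberField L] {m : ℕ} (hm : Odd m)
    (h_signs : SignsIndependentAt K m) : SignsIndependentAt L m :=
  have := h.isTotallyReal
  have := h.isTotallyReal_next hyx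
  h_signs.of_isQuadraticExtension
    (fun _ hP ↦ h.sub_integersConj_notMem hyx (two_notMem_of_odd hm hP))
    (fun _ ↦ two_notMem_of_odd hm)
    (exists_mul_unitsInvolution_eq h.odd_card_classGroup (h.unramifiedOutside_two hyx)
      h.card_placesOver_two_le)

theorem conjPrime_eq_of_mem [NumberField L] {P : HeightOneSpectrum (𝓞 L)}
    (hP : (q : 𝓞 L) ∈ P.asIdeal) :
    conjPrime (integersConj K L) P = P := by
  by_contra h_ne
  obtain ⟨a, ha⟩ :=
    (isQuadraticInvolution_integersConj K L).exists_sub_algebraMap_mem_of_conjPrime_ne h_ne y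
  refine (h.not_isSquare_mk _ (natCast_mem_under.2 hP)).1 (isSquare_mk_iff.2 ⟨a, ?_⟩)
  rw [mem_under, map_sub, ← hyx, map_pow, sq_sub_sq]
  exact Ideal.mul_mem_left _ _ ha

theorem not_isSquare_mk_next [NumberField L] (hq : Odd q) {P : HeightOneSpectrum (𝓞 L)}
    (hP : (q : 𝓞 L) ∈ P.asIdeal) :
    ¬ IsSquare (Ideal.Quotient.mk P.asIdeal (2 + y)) ∧
      ¬ IsSquare (Ideal.Quotient.mk P.asIdeal (2 - y)) := by
  have h2 := two_notMem_of_odd hq hP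
  have : Finite (𝓞 K ⧸ P.asIdeal.under (𝓞 K)) :=
    inferInstanceAs (Finite (𝓞 K ⧸ (P.under (𝓞 K)).asIdeal))
  have h_iff {z : 𝓞 L} (hz : z ∉ P.asIdeal)
      (hn : algebraMap (𝓞 K) (𝓞 L) (2 - x) = z * integersConj K L z) :=
    (isQuadraticInvolution_integersConj K L).isSquare_mk_iff_of_conjPrime_eq
      (h.conjPrime_eq_of_mem hyx hP) h2 (h.sub_integersConj_notMem hyx h2) hz hn
  obtain ⟨h_add, h_sub⟩ := h.notMem_of_two_notMem_next hyx h2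
  have h_base := (h.not_isSquare_mk _ (natCast_mem_under.2 hP)).2
  have h_norm := h.algebraMap_two_sub_eq_norm hyx
  rw [h_iff h_add h_norm, h_iff h_sub]
  · exact ⟨h_base, h_base⟩
  · rw [algebraMap_two_sub hyx, map_sub, map_ofNat, h.integersConj_eq_neg hyx, mul_comm,
      sub_neg_eq_add]

theorem next [NumberField L] (hq : Odd q) (hs : Odd s) : LayerInvariant q s L y where
  isTotallyReal := h.isTotallyReal_next hyx
  abs_lt_two := h.abs_lt_two_next hyx
  odd_card_classGroup := h.odd_card_classGroup_next hyx
  card_placesOver_two_le := (card_placesOver_le_of_conjPrime_eq (K := K) fun _ hP ↦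
    h.conjPrime_eq_of_two_mem hyx hP).trans h.card_placesOver_two_le
  two_add_mem _ := h.two_add_mem_next hyx
  two_add_notMem_sq _ := h.two_add_notMem_sq_next hyx
  notMem_of_two_notMem _ := h.notMem_of_two_notMem_next hyx
  unramifiedAt_left := h.unramifiedAt_next hyx hq h.unramifiedAt_left
  unramifiedAt_right := h.unramifiedAt_next hyx hs h.unramifiedAt_right
  signsIndependentAt_left := h.signsIndependentAt_next hyx hq h.signsIndependentAt_left
  signsIndependentAt_right := h.signsIndependentAt_next hyx hs h.signsIndependentAt_right
  card_placesOver_le := (card_placesOver_le_of_conjPrime_eq (K := K) fun _ hP ↦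
    h.conjPrime_eq_of_mem hyx hP).trans h.card_placesOver_le
  not_isSquare_mk _ := h.not_isSquare_mk_next hyx hq

end LayerInvariant

/-! ### Quadratic fields -/

section Rational

theorem exists_intCast_eq (a : 𝓞 ℚ) : ∃ n : ℤ, (n : 𝓞 ℚ) = a :=
  ⟨Rat.ringOfIntegersEquiv a, Rat.ringOfIntegersEquiv.injective (map_intCast _ _)⟩

theorem odd_card_classGroup_rat : Odd (Nat.card (ClassGroup (𝓞 ℚ))) := by
  rw [Nat.card_eq_fintype_card]
  exact (congrArg Odd Rat.classNumber_eq).mpr odd_one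

variable {l : ℕ} (hl : l.Prime)
include hl

theorem card_placesOver_rat_le_one [NeZero l] : (placesOver ℚ l).card ≤ 1 := by
  refine Finset.card_le_one.2 fun P hP Q hQ ↦ heightOneSpectrum_eq_of_le fun a ha ↦ ?_
  rw [mem_placesOver] at hP hQ
  obtain ⟨n, rfl⟩ := exists_intCast_eq a
  rwa [intCast_mem_iff hl hQ, ← intCast_mem_iff hl hP]

theorem unramifiedAt_rat : UnramifiedAt ℚ l := fun P hP hP2 ↦ by
  have h_le : P.asIdeal ≤ Ideal.span {(l : 𝓞 ℚ)} := fun a ha ↦ by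
    obtain ⟨n, rfl⟩ := exists_intCast_eq a
    rw [intCast_mem_iff hl hP, ZMod.intCast_zmod_eq_zero_iff_dvd] at ha
    obtain ⟨c, rfl⟩ := ha
    exact Ideal.mem_span_singleton.2 ⟨c, by rw [Int.cast_mul, Int.cast_natCast]⟩
  have h_sq := Ideal.pow_right_mono h_le 2 hP2
  rw [Ideal.span_singleton_pow, Ideal.mem_span_singleton, pow_two] at h_sq
  have hl0 : (l : 𝓞 ℚ) ≠ 0 := Nat.cast_ne_zero.2 hl.ne_zero
  exact not_isUnit_natCast ℚ hl.ne_one (isUnit_of_dvd_one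
    ((mul_dvd_mul_iff_left hl0).1 (by rwa [mul_one])))

theorem isSquare_mk_intCast_iff {P : HeightOneSpectrum (𝓞 ℚ)} (hP : (l : 𝓞 ℚ) ∈ P.asIdeal)
    (n : ℤ) : IsSquare (Ideal.Quotient.mk P.asIdeal (n : 𝓞 ℚ)) ↔ IsSquare (n : ZMod l) := by
  have h_iff (r : ℤ) : (n : 𝓞 ℚ) - r ^ 2 ∈ P.asIdeal ↔ (n : ZMod l) = r * r := by
    rw [← Int.cast_pow, ← Int.cast_sub, intCast_mem_iff hl hP, Int.cast_sub, sub_eq_zero,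
      Int.cast_pow, pow_two]
  rw [isSquare_mk_iff]
  constructor
  · rintro ⟨a, ha⟩
    obtain ⟨r, rfl⟩ := exists_intCast_eq a
    exact ⟨r, (h_iff r).1 ha⟩
  · rintro ⟨r, hr⟩
    obtain ⟨r, rfl⟩ := ZMod.intCast_surjective r
    exact ⟨r, (h_iff r).2 hr⟩

theorem signsIndependentAt_rat (hl4 : l % 4 = 3) : SignsIndependentAt ℚ l := fun w ↦ by
  have : NeZero l := ⟨hl.ne_zero⟩
  by_cases h : ∀ P : HeightOneSpectrum (𝓞 ℚ), (l : 𝓞 ℚ) ∈ P.asIdeal → w P = 0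
  · exact ⟨1, fun P hP ↦ (h P hP).symm ▸ residueSign_eq_zero_iff.2 (by simp)⟩
  · push Not at h
    obtain ⟨P, hP, hw⟩ := h
    have h_neg_one : residueSign P ((-1 : ℤ) : 𝓞 ℚ) ≠ 0 := by
      rw [Ne, residueSign_eq_zero_iff, isSquare_mk_intCast_iff hl hP]
      rintro ⟨r, hr⟩
      have := Fact.mk hl
      exact ZMod.mod_four_ne_three_of_sq_eq_neg_one (y := r) (by simpa [pow_two] using hr.symm) hl4
    refine ⟨-1, fun Q hQ ↦ ?_⟩
    obtain rfl : Q = P := Finset.card_le_one.1 (card_placesOver_rat_le_one hl) _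
      (mem_placesOver.2 hQ) _ (mem_placesOver.2 hP)
    have h_fin : ∀ a b : ZMod 2, a ≠ 0 → b ≠ 0 → a = b := by decide
    refine h_fin _ _ ?_ hw
    simpa using h_neg_one

end Rational

theorem conjPrime_ne_of_sq_sub_sq_mem {R S : Type*} [CommRing R] [CommRing S]
    [Algebra R S] {τ : S ≃ₐ[R] S} {y : S} {P : HeightOneSpectrum S} (hy : τ y = -y)
    (hyP : y - τ y ∉ P.asIdeal) {a : R} (h : y ^ 2 - algebraMap R S a ^ 2 ∈ P.asIdeal) :
    conjPrime τ P ≠ P := fun h_eq ↦ by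
  have h_mem (b : R) (hb : y - algebraMap R S b ∈ P.asIdeal) : False := by
    have hb' : -y - algebraMap R S b ∈ P.asIdeal := by
      rwa [← h_eq, mem_conjPrime, map_sub, map_neg, hy, neg_neg, AlgEquiv.commutes]
    refine hyP ?_
    rw [hy, ← sub_sub_sub_cancel_right _ _ (algebraMap R S b)]
    exact sub_mem hb hb'
  rw [sq_sub_sq, P.isPrime.mul_mem_iff_mem_or_mem] at h
  rcases h with h | h
  · exact h_mem (-a) (by rwa [map_neg, sub_neg_eq_add])
  · exact h_mem a h

section QuadraticField

variable {K : Type*} [Field K] [NumberField K] [Algebra.IsQuadraticExtension ℚ K]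

theorem card_placesOver_le_two {l : ℕ} [NeZero l] (hl : l.Prime) : (placesOver K l).card ≤ 2 := by
  classical
  rcases (placesOver K l).eq_empty_or_nonempty with h | ⟨P, hP⟩
  · rw [h]
    exact Nat.zero_le 2
  · refine (Finset.card_le_card (t := {P, conjPrime (integersConj ℚ K) P}) fun Q hQ ↦ ?_).trans
      Finset.card_le_two
    rw [Finset.mem_insert, Finset.mem_singleton,
      ← (isQuadraticInvolution_integersConj ℚ K).under_eq_under_iff]
    exact Finset.card_le_one.1 (card_placesOver_rat_le_one hl) _
      (mem_placesOver.2 (natCast_mem_under.2 (mem_placesOver.1 hQ))) _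
      (mem_placesOver.2 (natCast_mem_under.2 (mem_placesOver.1 hP)))

/-- The hypotheses on a square root `t` of a prime `p ≡ 5 mod 8` in a quadratic field, together
with the generator `ω = (1 + t) / 2` of its ring of integers. -/
structure IsSqrtPrime (p : ℕ) (t ω : 𝓞 K) : Prop where
  prime : p.Prime
  mod_eight : p % 8 = 5
  sq_eq : t ^ 2 = p
  two_mul_eq : 2 * ω = 1 + t

omit [Algebra.IsQuadraticExtension ℚ K] in
theorem exists_isSqrtPrime {p : ℕ} (hp : p.Prime) (hp8 : p % 8 = 5) {t : 𝓞 K} (ht : t ^ 2 = p) :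
    ∃ ω, IsSqrtPrime p t ω := by
  have hp4 : t ^ 2 = 1 ^ 2 + 4 * ((p / 4 : ℕ) : 𝓞 K) := by
    rw [ht, one_pow]
    exact_mod_cast (by lia : p = 1 + 4 * (p / 4))
  obtain ⟨ω, hω⟩ := exists_two_mul_eq_add hp4
  exact ⟨ω, hp, hp8, ht, hω⟩

namespace IsSqrtPrime

variable {p : ℕ} {t ω : 𝓞 K} (h : IsSqrtPrime p t ω)
include h

omit [Algebra.IsQuadraticExtension ℚ K] in
theorem sq_eq_algebraMap : t ^ 2 = algebraMap (𝓞 ℚ) (𝓞 K) p := by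
  rw [h.sq_eq, map_natCast]

theorem integersConj_eq_neg : integersConj ℚ K t = -t :=
  have : NeZero p := ⟨h.prime.ne_zero⟩
  _root_.integersConj_eq_neg
    (by simpa using (unramifiedAt_rat h.prime).not_isSquare h.prime.ne_one) h.sq_eq_algebraMap

omit [NumberField K] [Algebra.IsQuadraticExtension ℚ K] in
theorem coprime_two : Nat.Coprime 2 p :=
  Nat.coprime_two_left.2 (Nat.odd_iff.2 (by have := h.mod_eight; lia))

theorem sub_integersConj_eq : ω - integersConj ℚ K ω = t :=
  sub_integersConj_eq_of_two_mul_eq_add h.integersConj_eq_neg (map_one _) h.two_mul_eq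

theorem sub_integersConj_notMem {m : ℕ} (hm : m.Coprime p) {P : HeightOneSpectrum (𝓞 K)}
    (hP : (m : 𝓞 K) ∈ P.asIdeal) : ω - integersConj ℚ K ω ∉ P.asIdeal := by
  rw [h.sub_integersConj_eq, mem_of_sq_eq_algebraMap h.sq_eq_algebraMap]
  exact natCast_notMem_of_coprime hm (natCast_mem_under.2 hP)

theorem unramifiedOutside [NeZero p] :
    UnramifiedOutside (integersConj ℚ K) (placesOver ℚ p) := fun P hP ↦
  ⟨ω, p, by rw [h.sub_integersConj_eq, h.sq_eq_algebraMap], mem_placesOver.not.1 hP⟩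

theorem isTotallyReal : IsTotallyReal K :=
  isTotallyReal_of_sq_eq h.integersConj_eq_neg h.sq_eq_algebraMap fun φ ↦ by
    simpa using h.prime.pos

theorem odd_card_classGroup : Odd (Nat.card (ClassGroup (𝓞 K))) :=
  have : NeZero p := ⟨h.prime.ne_zero⟩
  have := h.isTotallyReal
  odd_card_classGroup_of_card_le_one odd_card_classGroup_rat h.unramifiedOutside
    (card_placesOver_rat_le_one h.prime)

theorem unramifiedAt {m : ℕ} (hm : m.Prime) (hmp : m.Coprime p) : UnramifiedAt K m :=
  (unramifiedAt_rat hm).of_isQuadraticExtension fun _ ↦ h.sub_integersConj_notMem hmp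

theorem signsIndependentAt {m : ℕ} (hm : m.Prime) (hmp : m.Coprime p) (hm4 : m % 4 = 3) :
    SignsIndependentAt K m :=
  have : NeZero p := ⟨h.prime.ne_zero⟩
  have := h.isTotallyReal
  (signsIndependentAt_rat hm hm4).of_isQuadraticExtension
    (fun _ ↦ h.sub_integersConj_notMem hmp)
    (fun _ ↦ two_notMem_of_odd (Nat.odd_iff.2 (by lia)))
    (exists_mul_unitsInvolution_eq odd_card_classGroup_rat h.unramifiedOutside
      (card_placesOver_rat_le_one h.prime))

omit [Algebra.IsQuadraticExtension ℚ K] in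
theorem exists_sq_sub_self_eq : ∃ c : ℤ, ω ^ 2 - ω = 2 * c + 1 := by
  obtain ⟨c, rfl⟩ : ∃ c, p = 4 * (2 * c + 1) + 1 := ⟨p / 8, by have := h.mod_eight; lia⟩
  have h_sq := h.sq_eq
  push_cast at h_sq
  refine ⟨c, mul_left_cancel₀ (mul_ne_zero (two_ne_zero (α := 𝓞 K)) two_ne_zero) ?_⟩
  push_cast
  linear_combination h_sq + (2 * ω - 1 + t) * h.two_mul_eq

theorem conjPrime_eq_of_two_mem {P : HeightOneSpectrum (𝓞 K)} (hP : ((2 : ℕ) : 𝓞 K) ∈ P.asIdeal) :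
    conjPrime (integersConj ℚ K) P = P := by
  by_contra h_ne
  obtain ⟨a, ha⟩ :=
    (isQuadraticInvolution_integersConj ℚ K).exists_sub_algebraMap_mem_of_conjPrime_ne h_ne ω
  obtain ⟨n, rfl⟩ := exists_intCast_eq a
  obtain ⟨c, hω⟩ := h.exists_sq_sub_self_eq
  have h_mem : ((n ^ 2 - n - (2 * c + 1) : ℤ) : 𝓞 K) ∈ P.asIdeal := by
    rw [map_intCast] at ha
    convert neg_mem (Ideal.mul_mem_left _ (ω + n - 1) ha) using 1
    push_cast
    linear_combination hω
  rw [intCast_mem_iff Nat.prime_two hP, ZMod.intCast_zmod_eq_zero_iff_dvd] at h_mem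
  have h_even := Int.even_mul_pred_self n
  obtain ⟨k, hk⟩ := h_even
  push_cast at h_mem
  rw [mul_sub, mul_one, ← pow_two] at hk
  lia

theorem not_isSquare_mk_two {q : ℕ} (hq : q.Prime) (hqp : q.Coprime p) (hq8 : q % 8 = 3)
    (hpq : IsSquare (p : ZMod q)) {P : HeightOneSpectrum (𝓞 K)} (hP : (q : 𝓞 K) ∈ P.asIdeal) :
    ¬ IsSquare (Ideal.Quotient.mk P.asIdeal 2) := by
  have hP' := (natCast_mem_under (K := ℚ)).2 hP
  obtain ⟨r, hr⟩ := hpq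
  obtain ⟨r, rfl⟩ := ZMod.intCast_surjective r
  have h_mem : t ^ 2 - algebraMap (𝓞 ℚ) (𝓞 K) r ^ 2 ∈ P.asIdeal := by
    have h_int : ((p - r ^ 2 : ℤ) : 𝓞 K) ∈ P.asIdeal := by
      rw [intCast_mem_iff hq hP]
      push_cast
      rw [hr, pow_two, sub_self]
    rw [h.sq_eq, map_intCast]
    exact_mod_cast h_int
  have h_ne := conjPrime_ne_of_sq_sub_sq_mem h.integersConj_eq_neg
    (_root_.sub_integersConj_notMem h.integersConj_eq_neg h.sq_eq_algebraMap
      (two_notMem_of_odd (Nat.odd_iff.2 (by lia)) hP) (natCast_notMem_of_coprime hqp hP')) h_mem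
  have h_iff := (isQuadraticInvolution_integersConj ℚ K).isSquare_mk_algebraMap_iff_of_conjPrime_ne
    h_ne ((2 : ℤ) : 𝓞 ℚ)
  rw [map_intCast, isSquare_mk_intCast_iff hq hP', Int.cast_ofNat, Int.cast_ofNat] at h_iff
  have := Fact.mk hq
  rw [h_iff, ZMod.exists_sq_eq_two_iff (by lia)]
  lia

theorem layerInvariant {q s : ℕ} [NeZero q] (hq : q.Prime) (hs : s.Prime) (hqp : q.Coprime p)
    (hsp : s.Coprime p) (hq8 : q % 8 = 3) (hs4 : s % 4 = 3) (hpq : IsSquare (p : ZMod q)) :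
    LayerInvariant q s K 0 where
  isTotallyReal := h.isTotallyReal
  abs_lt_two φ := by simp
  odd_card_classGroup := h.odd_card_classGroup
  card_placesOver_two_le := (card_placesOver_le_of_conjPrime_eq (K := ℚ) fun _ ↦
    h.conjPrime_eq_of_two_mem).trans (card_placesOver_rat_le_one Nat.prime_two)
  two_add_mem P hP := by rwa [add_zero]
  two_add_notMem_sq P hP := by
    rw [add_zero]
    exact h.unramifiedAt Nat.prime_two h.coprime_two P hP
  notMem_of_two_notMem P hP := by
    rw [add_zero, sub_zero, and_self]
    exact hP
  unramifiedAt_left := h.unramifiedAt hq hqp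
  unramifiedAt_right := h.unramifiedAt hs hsp
  signsIndependentAt_left := h.signsIndependentAt hq hqp (by lia)
  signsIndependentAt_right := h.signsIndependentAt hs hsp hs4
  card_placesOver_le := card_placesOver_le_two hq
  not_isSquare_mk P hP := by
    rw [add_zero, sub_zero, and_self]
    exact h.not_isSquare_mk_two hq hqp hq8 hpq hP

end IsSqrtPrime

end QuadraticField

/-! ### Class groups of the extensions by `√s` and `√q` -/

section NatSquareRoot

variable {K L : Type*} [Field K] [Field L] [NumberField K] [Algebra K L]
  [Algebra.IsQuadraticExtension K L] {m : ℕ} [NeZero m] {θ : 𝓞 L}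

omit [NumberField K] [Algebra.IsQuadraticExtension K L] [NeZero m] in
theorem sq_eq_algebraMap_natCast (hθ : θ ^ 2 = m) : θ ^ 2 = algebraMap (𝓞 K) (𝓞 L) m := by
  rw [hθ, map_natCast]

theorem UnramifiedAt.integersConj_eq_neg (h : UnramifiedAt K m) (hm : m ≠ 1) (hθ : θ ^ 2 = m) :
    integersConj K L θ = -θ :=
  _root_.integersConj_eq_neg (by simpa using h.not_isSquare hm) (sq_eq_algebraMap_natCast hθ)

theorem UnramifiedAt.isTotallyReal_of_sq_eq [IsTotallyReal K] (h : UnramifiedAt K m) (hm : m ≠ 1)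
    (hθ : θ ^ 2 = m) : IsTotallyReal L :=
  _root_.isTotallyReal_of_sq_eq (h.integersConj_eq_neg hm hθ) (sq_eq_algebraMap_natCast hθ)
    fun φ ↦ by simpa using NeZero.pos m

theorem unramifiedOutside_placesOver_of_sq_eq [NumberField L] {n : ℕ} (hnm : n % 4 = m % 4)
    {a : 𝓞 K} (ha : a ^ 2 = n) (hθ : θ ^ 2 = m) (hθ' : integersConj K L θ = -θ) :
    UnramifiedOutside (integersConj K L) (placesOver K m) := fun P hP ↦ by
  obtain ⟨c, hc⟩ := (Nat.modEq_iff_dvd (n := 4)).1 hnm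
  have hc' : (m : 𝓞 L) - n = 4 * c := by exact_mod_cast congrArg (Int.cast : ℤ → 𝓞 L) hc
  have h_sq : θ ^ 2 = algebraMap (𝓞 K) (𝓞 L) a ^ 2 + 4 * c := by
    rw [hθ, ← map_pow, ha, map_natCast, ← hc']
    ring
  obtain ⟨ω, hω⟩ := exists_two_mul_eq_add h_sq
  refine ⟨ω, m, ?_, mt mem_placesOver.2 hP⟩
  rw [sub_integersConj_eq_of_two_mul_eq_add hθ' ((integersConj K L).commutes a) hω, hθ, map_natCast]

end NatSquareRoot

namespace LayerInvariant

variable {q s : ℕ} [NeZero q] [NeZero s] {k K : Type*} [Field k] [NumberField k] [Field K]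
  [NumberField K] [Algebra k K] [Algebra.IsQuadraticExtension k K] {x : 𝓞 k}
  (h : LayerInvariant q s k x) (hs : s ≠ 1) {θ : 𝓞 K} (hθ : θ ^ 2 = s)
include h hs hθ

omit [NumberField K] in
theorem isTotallyReal_of_sq_eq : IsTotallyReal K :=
  have := h.isTotallyReal
  h.unramifiedAt_right.isTotallyReal_of_sq_eq hs hθ

theorem odd_card_classGroup_of_sq_eq : Odd (Nat.card (ClassGroup (𝓞 K))) := by
  classical
  have := h.isTotallyReal
  have := h.isTotallyReal_of_sq_eq hs hθ
  have hθ' := h.unramifiedAt_right.integersConj_eq_neg hs hθ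
  have h_unr : UnramifiedOutside (integersConj k K) (placesOver k 2 ∪ placesOver k s) :=
    unramifiedOutside_of_sq_eq hθ' (sq_eq_algebraMap_natCast hθ) fun P hP ↦ by
      simpa only [Finset.mem_union, mem_placesOver, not_or, Nat.cast_ofNat] using hP
  have h_le := two_mul_card_twoTorsion_mul_two_pow_le h.odd_card_classGroup h_unr
    (unitSigns (Subtype.val : placesOver k s → _))
    (h.signsIndependentAt_right.unitSigns_surjective Subtype.val_injective
      fun P ↦ mem_placesOver.1 P.2)
    fun u ↦ unitSigns_eq_one_of_mem_normUnits h.unramifiedAt_right hθ' hθ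
      fun P ↦ mem_placesOver.1 P.2
  rw [Nat.card_eq_finsetCard] at h_le
  have h_card := (Finset.card_union_le _ _).trans
    (Nat.add_le_add_right h.card_placesOver_two_le (placesOver k s).card)
  have h_pow := h_le.trans (Nat.pow_le_pow_right two_pos h_card)
  rw [pow_add, pow_one] at h_pow
  refine odd_natCard_of_card_twoTorsion_le_one ?_
  nlinarith [Nat.two_pow_pos (placesOver k s).card]

theorem unramifiedAt_left_of_sq_eq (hq : Odd q) (hqs : q.Coprime s) : UnramifiedAt K q :=
  h.unramifiedAt_left.of_isQuadraticExtension (ω := θ) fun _ hP ↦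
    _root_.sub_integersConj_notMem (h.unramifiedAt_right.integersConj_eq_neg hs hθ)
      (sq_eq_algebraMap_natCast hθ) (two_notMem_of_odd hq hP)
      (natCast_notMem_of_coprime hqs (natCast_mem_under.2 hP))

variable {L : Type*} [Field L] [NumberField L] [Algebra K L]
  [Algebra.IsQuadraticExtension K L] {η : 𝓞 L}

theorem card_twoTorsion_le_two (hq : Odd q) (hq1 : q ≠ 1) (hqs : q.Coprime s)
    (hqs4 : s % 4 = q % 4) (hη : η ^ 2 = q) :
    Nat.card (twoTorsion (ClassGroup (𝓞 L))) ≤ 2 := by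
  have := h.isTotallyReal_of_sq_eq hs hθ
  have h_unr := h.unramifiedAt_left_of_sq_eq hs hθ hq hqs
  have := h_unr.isTotallyReal_of_sq_eq hq1 hη
  have hη' := h_unr.integersConj_eq_neg hq1 hη
  have hτ := isQuadraticInvolution_integersConj k K
  obtain ⟨T, hT, hT_ne, hT_inj, hT_card⟩ := exists_finset_injOn_and_card_le
    (fun _ _ ↦ (hτ.under_eq_under_iff).1)
    (s := placesOver K q) (t := placesOver k q)
    fun P hP ↦ mem_placesOver.2 (natCast_mem_under.2 (mem_placesOver.1 hP))
  have h_surj : Function.Surjective (unitSigns (Subtype.val : T → _)) := fun f ↦ by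
    obtain ⟨u, rfl⟩ := h.signsIndependentAt_left.unitSigns_surjective
      (P := fun P : T ↦ P.1.under (𝓞 k)) (fun P P' hPP' ↦ Subtype.ext (hT_inj P.2 P'.2 hPP'))
      (fun P ↦ natCast_mem_under.2 (mem_placesOver.1 (hT P.2))) f
    exact ⟨unitsInclusion k K u, funext fun P ↦ residueSign_congr
      (hτ.isSquare_mk_algebraMap_iff_of_conjPrime_ne (hT_ne P P.2) _)⟩
  have h_le := two_mul_card_twoTorsion_mul_two_pow_le (h.odd_card_classGroup_of_sq_eq hs hθ)
    (unramifiedOutside_placesOver_of_sq_eq hqs4 hθ hη hη') _ h_surj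
    fun u ↦ unitSigns_eq_one_of_mem_normUnits h_unr hη' hη
      fun P ↦ mem_placesOver.1 (hT P.2)
  rw [Nat.card_eq_finsetCard] at h_le
  have h_pow := h_le.trans (Nat.pow_le_pow_right two_pos
    (hT_card.trans (Nat.add_le_add_right h.card_placesOver_le T.card)))
  rw [pow_add] at h_pow
  nlinarith [Nat.two_pow_pos T.card]

end LayerInvariant

/-! ### The radicand of an unramified extension -/

theorem two_dvd_of_two_dvd_intCast (K : Type*) [Field K] [NumberField K] {n : ℤ}
    (h : (2 : 𝓞 K) ∣ n) : 2 ∣ n := by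
  obtain ⟨P, hP⟩ := exists_natCast_mem K (m := 2) (by decide)
  rw [← Nat.cast_ofNat, ← ZMod.intCast_zmod_eq_zero_iff_dvd, ← intCast_mem_iff Nat.prime_two hP]
  exact Ideal.mem_of_dvd _ h (by exact_mod_cast hP)

theorem two_dvd_intCast_mul_sub_one {R : Type*} [CommRing R] (n : ℤ) :
    (2 : R) ∣ n * (n - 1) := by
  simpa using map_dvd (Int.castRingHom R) (Int.even_mul_pred_self n).two_dvd

theorem span_pair_mul_span_pair_of_isCoprime {R : Type*} [CommRing R] {m a b : R}
    (h : IsCoprime m (a - b)) (hab : m ∣ a * b) :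
    Ideal.span {m, a} * Ideal.span {m, b} = Ideal.span {m} := by
  rw [Ideal.span_pair_mul_span_pair]
  refine le_antisymm (Ideal.span_le.2 ?_) ((Ideal.span_singleton_le_iff_mem _).2 ?_)
  · rintro _ (rfl | rfl | rfl | rfl)
    exacts [Ideal.mem_span_singleton.2 (dvd_mul_right _ _),
      Ideal.mem_span_singleton.2 (dvd_mul_right _ _),
      Ideal.mem_span_singleton.2 (dvd_mul_left _ _), Ideal.mem_span_singleton.2 hab]
  · obtain ⟨u, v, huv⟩ := h
    have h_eq : m = u * (m * m) + v * (a * m) - v * (m * b) := by linear_combination (-m) * huv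
    refine h_eq.symm.subst (motive := (· ∈ Ideal.span _)) (sub_mem (add_mem ?_ ?_) ?_) <;>
      exact Ideal.mul_mem_left _ _ (Ideal.subset_span (by simp))

theorem isCoprime_span_pair {R : Type*} [CommRing R] {m a b : R} (h : IsCoprime m (a - b)) :
    IsCoprime (Ideal.span {m, a}) (Ideal.span {m, b}) := by
  rw [Ideal.isCoprime_iff_sup_eq, Ideal.eq_top_iff_one]
  obtain ⟨u, v, huv⟩ := h
  have h_eq : 1 = u * m + v * a - v * b := by linear_combination -huv
  rw [h_eq]
  refine sub_mem (add_mem ?_ ?_) ?_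
  · exact Ideal.mul_mem_left _ _ (Ideal.mem_sup_left (Ideal.subset_span (by simp)))
  · exact Ideal.mul_mem_left _ _ (Ideal.mem_sup_left (Ideal.subset_span (by simp)))
  · exact Ideal.mul_mem_left _ _ (Ideal.mem_sup_right (Ideal.subset_span (by simp)))

theorem exists_mul_integersConj_eq_pow {K L : Type*} [Field K] [Field L] [NumberField K]
    [NumberField L] [Algebra K L] [Algebra.IsQuadraticExtension K L]
    (h_norm : ∀ u : (𝓞 K)ˣ,
      ∃ ε, ε * unitsInvolution (integersConj K L) ε = unitsInclusion K L u)
    {I : Ideal (𝓞 L)} {m : 𝓞 K} (hm : m ≠ 0)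
    (hI : I * integersConj K L • I = Ideal.span {algebraMap (𝓞 K) (𝓞 L) m})
    (h_coprime : IsCoprime I (integersConj K L • I)) :
    ∃ β, β * integersConj K L β =
      algebraMap (𝓞 K) (𝓞 L) m ^ Nat.card (ClassGroup (𝓞 L)) ∧
      IsCoprime β (integersConj K L β) := by
  have hτ := isQuadraticInvolution_integersConj K L
  have hI0 : I ≠ ⊥ := fun h ↦ by
    rw [h, Ideal.bot_mul, eq_comm, Ideal.span_singleton_eq_bot] at hI
    exact hm ((FaithfulSMul.algebraMap_eq_zero_iff _ _).1 hI)
  obtain ⟨b, -, hb⟩ := exists_pow_card_classGroup_eq_span hI0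
  obtain ⟨a, ha⟩ := hτ.exists_algebraMap_eq_mul b
  have hb' : (integersConj K L • I) ^ Nat.card (ClassGroup (𝓞 L)) =
      Ideal.span {integersConj K L b} := by
    rw [← smul_ideal_span_singleton, ← hb, smul_pow']
  obtain ⟨u, hu⟩ : Associated a (m ^ Nat.card (ClassGroup (𝓞 L))) := by
    rw [← Ideal.span_singleton_eq_span_singleton]
    refine map_ideal_injective (R := 𝓞 L) ?_
    simp only [Ideal.map_span, Set.image_singleton]
    rw [ha, ← Ideal.span_singleton_mul_span_singleton, ← hb, ← hb', ← mul_pow, hI,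
      Ideal.span_singleton_pow, map_pow]
  obtain ⟨ε, hε⟩ := h_norm u
  have hε : (ε : 𝓞 L) * integersConj K L ε = algebraMap (𝓞 K) (𝓞 L) u := congrArg Units.val hε
  refine ⟨b * ε, ?_, ?_⟩
  · rw [← map_pow, ← hu, map_mul, map_mul, ha, ← hε]
    ring
  · rw [map_mul, isCoprime_mul_unit_right_left ε.isUnit,
      isCoprime_mul_unit_right_right (ε.isUnit.map _), ← Ideal.isCoprime_span_singleton_iff,
      ← hb, ← hb']
    exact h_coprime.pow

theorem ringHom_eq_or_eq_integersConj {K R : Type*} [Field K] [NumberField K]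
    [Algebra.IsQuadraticExtension ℚ K] [CommRing R] [IsDomain R] (φ ψ : K →+* R) (x : 𝓞 K) :
    φ x = ψ x ∨ φ x = ψ (integersConj ℚ K x) := by
  have hτ := isQuadraticInvolution_integersConj ℚ K
  obtain ⟨A, hA⟩ := hτ.exists_algebraMap_eq_add x
  obtain ⟨A, rfl⟩ := exists_intCast_eq A
  obtain ⟨N, hN⟩ := hτ.exists_algebraMap_eq_mul x
  obtain ⟨N, rfl⟩ := exists_intCast_eq N
  rw [map_intCast] at hA hN
  have h_quadratic : x ^ 2 - A * x + N = 0 := by linear_combination hN - x * hA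
  replace hA := congrArg (ψ.comp (algebraMap (𝓞 K) K)) hA
  replace hN := congrArg (ψ.comp (algebraMap (𝓞 K) K)) hN
  replace h_quadratic := congrArg (φ.comp (algebraMap (𝓞 K) K)) h_quadratic
  simp only [map_add, map_sub, map_mul, map_pow, map_intCast, map_zero, RingHom.comp_apply]
    at hA hN h_quadratic
  rw [← sub_eq_zero, ← sub_eq_zero (b := ψ (integersConj ℚ K x)), ← mul_eq_zero]
  linear_combination h_quadratic + φ x * hA - hN

theorem forall_pos_or_forall_neg {K : Type*} [Field K] [NumberField K]
    [Algebra.IsQuadraticExtension ℚ K] [IsTotallyReal K] {β : 𝓞 K} {m : ℕ}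
    (hm : 0 < m) (hβ : β * integersConj ℚ K β = m) :
    (∀ φ : K →+* ℝ, 0 < φ β) ∨ ∀ φ : K →+* ℝ, φ β < 0 := by
  obtain ⟨φ₀⟩ := nonempty_ringHom_real_of_isTotallyReal K
  have h_norm := congrArg (φ₀.comp (algebraMap (𝓞 K) K)) hβ
  rw [map_mul, map_natCast] at h_norm
  refine (pos_and_pos_or_neg_and_neg_of_mul_pos (h_norm ▸ Nat.cast_pos.2 hm)).imp
    (fun h_pos φ ↦ ?_) fun h_neg φ ↦ ?_
  · rcases ringHom_eq_or_eq_integersConj φ φ₀ β with h_eq | h_eq <;> rw [h_eq]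
    exacts [h_pos.1, h_pos.2]
  · rcases ringHom_eq_or_eq_integersConj φ φ₀ β with h_eq | h_eq <;> rw [h_eq]
    exacts [h_neg.1, h_neg.2]

namespace IsSqrtPrime

variable {K : Type*} [Field K] [NumberField K] [Algebra.IsQuadraticExtension ℚ K] {p : ℕ}
  {t ω : 𝓞 K} (h : IsSqrtPrime p t ω)
include h

theorem integersConj_eq_one_sub : integersConj ℚ K ω = 1 - ω := by
  linear_combination h.two_mul_eq - h.sub_integersConj_eq

theorem exists_two_dvd_sub (x : 𝓞 K) : ∃ a b : ℤ, 2 ∣ x - (a + b * ω) := by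
  have hτ := isQuadraticInvolution_integersConj ℚ K
  obtain ⟨A, hA⟩ := hτ.exists_algebraMap_eq_add x
  obtain ⟨A, rfl⟩ := exists_intCast_eq A
  obtain ⟨C, hC⟩ := hτ.mem_range_of_fixed ((x - integersConj ℚ K x) * t) (by
    rw [map_mul, map_sub, hτ.involutive x, h.integersConj_eq_neg]
    ring)
  obtain ⟨C, rfl⟩ := exists_intCast_eq C
  rw [map_intCast] at hA hC
  have h_two_mul : 2 * (p * x - C * ω) = ((p * A - C : ℤ) : 𝓞 K) := by
    push_cast
    linear_combination (-(C : 𝓞 K)) * h.two_mul_eq - t * hC - (x - integersConj ℚ K x) * h.sq_eq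
      - p * hA
  obtain ⟨k, hk⟩ := two_dvd_of_two_dvd_intCast K (Dvd.intro _ h_two_mul)
  obtain ⟨m, hm⟩ : ∃ m, p = 2 * m + 1 := ⟨p / 2, by have := h.mod_eight; lia⟩
  refine ⟨k, C, -(m : 𝓞 K) * x, mul_left_cancel₀ (two_ne_zero (α := 𝓞 K)) ?_⟩
  have hm' : (p : 𝓞 K) = 2 * m + 1 := by exact_mod_cast congrArg (Nat.cast : ℕ → 𝓞 K) hm
  rw [hk] at h_two_mul
  push_cast at h_two_mul
  linear_combination h_two_mul - 2 * x * hm'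

theorem two_dvd_sq_sub_integersConj (x : 𝓞 K) : 2 ∣ x ^ 2 - integersConj ℚ K x := by
  obtain ⟨c, hω⟩ := h.exists_sq_sub_self_eq
  obtain ⟨a, b, y, hx⟩ := h.exists_two_dvd_sub x
  obtain rfl : x = a + b * ω + 2 * y := by linear_combination hx
  obtain ⟨u, hu⟩ := two_dvd_intCast_mul_sub_one (R := 𝓞 K) a
  obtain ⟨v, hv⟩ := two_dvd_intCast_mul_sub_one (R := 𝓞 K) b
  simp only [map_add, map_mul, map_intCast, map_ofNat, h.integersConj_eq_one_sub]
  refine ⟨u + v * ω + v + b * ω + a * b * ω + b ^ 2 * c + 2 * y ^ 2 + 2 * y * (a + b * ω)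
    - integersConj ℚ K y, ?_⟩
  linear_combination b ^ 2 * hω + hu + (ω + 1) * hv

theorem two_dvd_or_two_dvd_sub_one {x : 𝓞 K} (hx : 2 ∣ x - integersConj ℚ K x) :
    2 ∣ x ∨ 2 ∣ x - 1 := by
  obtain ⟨a, b, y, hy⟩ := h.exists_two_dvd_sub x
  obtain rfl : x = a + b * ω + 2 * y := by linear_combination hy
  obtain ⟨z, hz⟩ := hx
  simp only [map_add, map_mul, map_intCast, map_ofNat, h.integersConj_eq_one_sub] at hz
  obtain ⟨b, rfl⟩ : 2 ∣ b := two_dvd_of_two_dvd_intCast K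
    ⟨b * ω + y - integersConj ℚ K y - z, by linear_combination -hz⟩
  rcases Int.even_or_odd' a with ⟨a, rfl | rfl⟩
  · exact .inl ⟨a + b * ω + y, by push_cast; ring⟩
  · exact .inr ⟨a + b * ω + y, by push_cast; ring⟩

theorem four_dvd_cube_sub_or_add {β : 𝓞 K} {n : ℤ} (hβ : β * integersConj ℚ K β = n)
    (hn : 4 ∣ n - 1) : 4 ∣ β ^ 3 - 1 ∨ 4 ∣ β ^ 3 + 1 := by
  obtain ⟨k, hk⟩ := hn
  obtain rfl : n = 4 * k + 1 := by lia
  push_cast at hβ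
  obtain ⟨y, hy⟩ := h.two_dvd_sq_sub_integersConj β
  obtain ⟨x, hx⟩ : ∃ x, β ^ 3 = 1 + 2 * x :=
    ⟨β * y + 2 * k, by linear_combination β * hy + hβ⟩
  have h_norm : (1 + 2 * x) * (1 + 2 * integersConj ℚ K x) = (4 * k + 1) ^ 3 := by
    rw [← hβ, mul_pow, ← map_pow, hx, map_add, map_one, map_mul, map_ofNat]
  have h_sub : x - integersConj ℚ K x = 2 * (16 * k ^ 3 + 12 * k ^ 2 + 3 * k
      - integersConj ℚ K x - x * integersConj ℚ K x) :=
    mul_left_cancel₀ (two_ne_zero (α := 𝓞 K)) (by linear_combination h_norm)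
  rw [hx]
  rcases h.two_dvd_or_two_dvd_sub_one (Dvd.intro _ h_sub.symm) with ⟨z, hz⟩ | ⟨z, hz⟩
  · exact .inl ⟨z, by linear_combination 2 * hz⟩
  · exact .inr ⟨z + 1, by linear_combination 2 * hz⟩

theorem exists_coprime_conjugates {m : ℕ} (hm : Odd m) (hmp : m.Coprime p)
    (hpm : IsSquare (p : ZMod m)) :
    ∃ β : 𝓞 K, β * integersConj ℚ K β = m ^ Nat.card (ClassGroup (𝓞 K)) ∧
      IsCoprime β (integersConj ℚ K β) := by
  have : NeZero p := ⟨h.prime.ne_zero⟩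
  have := h.isTotallyReal
  obtain ⟨r, hr⟩ := hpm
  obtain ⟨r, rfl⟩ := ZMod.intCast_surjective r
  obtain ⟨w, hw⟩ : (m : ℤ) ∣ p - r * r := (ZMod.intCast_zmod_eq_zero_iff_dvd _ _).1 (by
    push_cast
    rw [hr, sub_self])
  have hw' : (p : 𝓞 K) - r * r = m * w := by exact_mod_cast congrArg (Int.cast : ℤ → 𝓞 K) hw
  have h_coprime : IsCoprime (m : 𝓞 K) ((t - r) - (-t - r)) := by
    have h_four : IsCoprime (m : ℤ) (2 * 2 * p) :=
      ((Nat.coprime_two_right.2 hm).isCoprime.mul_right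
        (Nat.coprime_two_right.2 hm).isCoprime).mul_right hmp.isCoprime
    have h_four' : IsCoprime (m : 𝓞 K) (((t - r) - (-t - r)) * (2 * t)) := by
      convert h_four.map (Int.castRingHom (𝓞 K)) using 1
      · simp
      · rw [map_mul, map_mul, map_ofNat, map_natCast]
        linear_combination 4 * h.sq_eq
    exact h_four'.of_mul_right_left
  have h_smul : integersConj ℚ K • Ideal.span {(m : 𝓞 K), t - r} =
      Ideal.span {(m : 𝓞 K), -t - r} := by
    rw [Ideal.smul_closure, Set.smul_set_insert, Set.smul_set_singleton, AlgEquiv.smul_def,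
      AlgEquiv.smul_def, map_natCast, map_sub, map_intCast, h.integersConj_eq_neg]
  have h_norm := exists_mul_unitsInvolution_eq odd_card_classGroup_rat h.unramifiedOutside
    (card_placesOver_rat_le_one h.prime)
  have h_dvd : (m : 𝓞 K) ∣ (t - r) * (-t - r) := ⟨-w, by linear_combination -h.sq_eq - hw'⟩
  have := exists_mul_integersConj_eq_pow h_norm (m := m)
    (I := Ideal.span {(m : 𝓞 K), t - r}) (Nat.cast_ne_zero.2 hm.pos.ne')
    (by rw [h_smul, span_pair_mul_span_pair_of_isCoprime h_coprime h_dvd, map_natCast])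
    (by rw [h_smul]; exact isCoprime_span_pair h_coprime)
  rwa [map_natCast] at this

theorem exists_radicand {m : ℕ} (hm : m % 4 = 1) (hmp : m.Coprime p)
    (hpm : IsSquare (p : ZMod m)) :
    ∃ (α : 𝓞 K) (n : ℕ), Odd n ∧ α * integersConj ℚ K α = m ^ n ∧
      IsCoprime α (integersConj ℚ K α) ∧ (∀ φ : K →+* ℝ, 0 < φ α) ∧ (4 ∣ α - 1 ∨ 4 ∣ α + 1) := by
  have := h.isTotallyReal
  obtain ⟨β, hβ, h_coprime⟩ := h.exists_coprime_conjugates (Nat.odd_iff.2 (by lia)) hmp hpm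
  obtain ⟨β, hβ, h_coprime, h_pos⟩ : ∃ β : 𝓞 K,
      β * integersConj ℚ K β = m ^ Nat.card (ClassGroup (𝓞 K)) ∧
      IsCoprime β (integersConj ℚ K β) ∧ ∀ φ : K →+* ℝ, 0 < φ β := by
    rcases forall_pos_or_forall_neg (m := m ^ Nat.card (ClassGroup (𝓞 K))) (pow_pos (by lia) _)
      (by exact_mod_cast hβ) with h_pos | h_neg
    · exact ⟨β, hβ, h_coprime, h_pos⟩
    · refine ⟨-β, ?_, ?_, fun φ ↦ ?_⟩
      · rw [map_neg, neg_mul_neg, hβ]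
      · rw [map_neg]
        exact h_coprime.neg_neg
      · exact (neg_pos.2 (h_neg φ)).trans_eq (map_neg (φ.comp (algebraMap (𝓞 K) K)) β).symm
  refine ⟨β ^ 3, Nat.card (ClassGroup (𝓞 K)) * 3, h.odd_card_classGroup.mul (by decide), ?_, ?_,
    fun φ ↦ ?_, h.four_dvd_cube_sub_or_add (n := m ^ Nat.card (ClassGroup (𝓞 K))) ?_ ?_⟩
  · rw [map_pow, ← mul_pow, hβ, pow_mul]
  · rw [map_pow]
    exact h_coprime.pow
  · exact (pow_pos (h_pos φ) 3).trans_eq (map_pow (φ.comp (algebraMap (𝓞 K) K)) β 3).symm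
  · exact_mod_cast hβ
  · have h_dvd : (4 : ℤ) ∣ m - 1 := by lia
    exact h_dvd.trans (sub_one_dvd_pow_sub_one _ _)

end IsSqrtPrime

/-! ### Even class numbers -/

section AdjoinSquareRoot

variable {E F : Type*} [Field E] [Field F] [Algebra E F] {d : E} {θ : F}

theorem minpoly_eq_X_sq_sub_C (hd : ¬ IsSquare d) (hθ : θ ^ 2 = algebraMap E F d) :
    minpoly E θ = .X ^ 2 - .C d := by
  refine (minpoly.eq_of_irreducible_of_monic ?_ ?_
    (Polynomial.monic_X_pow_sub_C d two_ne_zero)).symm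
  · refine X_pow_sub_C_irreducible_of_prime Nat.prime_two fun b hb ↦ hd ⟨b, ?_⟩
    rw [← hb, pow_two]
  · simp [hθ]

theorem finrank_adjoin_eq_two (hd : ¬ IsSquare d) (hθ : θ ^ 2 = algebraMap E F d) :
    Module.finrank E (IntermediateField.adjoin E {θ}) = 2 := by
  have h_int : IsIntegral E θ :=
    ⟨_, Polynomial.monic_X_pow_sub_C d two_ne_zero, by simp [hθ]⟩
  rw [IntermediateField.adjoin.finrank h_int, minpoly_eq_X_sq_sub_C hd hθ,
    Polynomial.natDegree_X_pow_sub_C]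

end AdjoinSquareRoot

open IntermediateField in
theorem exists_numberField_adjoin {E F : Type*} [Field E] [NumberField E] [Field F] [Algebra E F]
    {d : 𝓞 E} (hd : ¬ IsSquare (d : E)) {θ : F} (hθ : θ ^ 2 = algebraMap E F d) :
    Algebra.IsQuadraticExtension E E⟮θ⟯ ∧ ∃ (_ : NumberField E⟮θ⟯) (y : 𝓞 E⟮θ⟯),
      y ^ 2 = algebraMap (𝓞 E) (𝓞 E⟮θ⟯) d ∧ algebraMap E⟮θ⟯ F y = θ := by
  have h_rank := finrank_adjoin_eq_two hd hθ
  have : Module.Finite E E⟮θ⟯ := Module.finite_of_finrank_pos (h_rank ▸ two_pos)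
  have := NumberField.of_module_finite E E⟮θ⟯
  have h_gen : AdjoinSimple.gen E θ ^ 2 = algebraMap E E⟮θ⟯ d := Subtype.ext hθ
  obtain ⟨y, hy⟩ := IsIntegrallyClosed.exists_algebraMap_eq_of_isIntegral_pow (R := 𝓞 E⟮θ⟯)
    (x := AdjoinSimple.gen E θ) two_pos
    (h_gen ▸ isIntegral_algebraMap (x := algebraMap (𝓞 E) (𝓞 E⟮θ⟯) d))
  exact ⟨⟨h_rank⟩, this, y, RingOfIntegers.ext ((congrArg (· ^ 2) hy).trans h_gen),
    congrArg Subtype.val hy⟩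

section UnramifiedSquareRoot

variable {K M : Type*} [Field K] [Field M] [NumberField K] [NumberField M] [Algebra K M]
  [Algebra.IsQuadraticExtension K M] {α : 𝓞 K} {μ : 𝓞 M}
  (hμ : μ ^ 2 = algebraMap (𝓞 K) (𝓞 M) α) (hτμ : integersConj K M μ = -μ)
include hμ hτμ

theorem exists_algebraMap_eq_sq_sub_integersConj {b c : 𝓞 K} (hb : α = b ^ 2 + 4 * c) :
    ∃ ω, algebraMap (𝓞 K) (𝓞 M) α = (ω - integersConj K M ω) ^ 2 := by
  obtain ⟨ω, hω⟩ := exists_two_mul_eq_add (a := μ) (b := algebraMap (𝓞 K) (𝓞 M) b)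
    (c := algebraMap (𝓞 K) (𝓞 M) c) (by rw [hμ, hb, map_add, map_mul, map_pow, map_ofNat])
  exact ⟨ω, by rw [sub_integersConj_eq_of_two_mul_eq_add hτμ (AlgEquiv.commutes _ _) hω, hμ]⟩

theorem exists_sq_eq_and_integersConj_eq_neg {α' w : 𝓞 K} (hα : α ≠ 0)
    (h_mul : α * α' = w ^ 2) :
    ∃ μ', μ' ^ 2 = algebraMap (𝓞 K) (𝓞 M) α' ∧ integersConj K M μ' = -μ' := by
  have hμ0 : μ ≠ 0 := by
    rintro rfl
    rw [zero_pow two_ne_zero, eq_comm, FaithfulSMul.algebraMap_eq_zero_iff] at hμ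
    exact hα hμ
  obtain ⟨μ', hμ'⟩ : μ ∣ algebraMap (𝓞 K) (𝓞 M) w := by
    rw [← IsIntegrallyClosed.pow_dvd_pow_iff two_ne_zero, hμ, ← map_pow, ← h_mul, map_mul]
    exact dvd_mul_right _ _
  refine ⟨μ', mul_left_cancel₀ (pow_ne_zero 2 hμ0) ?_, mul_left_cancel₀ hμ0 ?_⟩
  · rw [← mul_pow, ← hμ', ← map_pow, ← h_mul, map_mul, hμ]
  · have h_conj := congrArg (integersConj K M) hμ'
    rw [AlgEquiv.commutes, map_mul, hτμ, hμ'] at h_conj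
    linear_combination h_conj

end UnramifiedSquareRoot

theorem even_card_classGroup_of_mul_eq_sq {K : Type*} [Field K] [NumberField K]
    [IsTotallyReal K] {α α' w b b' c c' : 𝓞 K} (hα : ¬ IsSquare (α : K))
    (h_pos : ∀ φ : K →+* ℝ, 0 < φ α) (h_mul : α * α' = w ^ 2) (h_coprime : IsCoprime α α')
    (hb : α = b ^ 2 + 4 * c) (hb' : α' = b' ^ 2 + 4 * c') :
    Even (Nat.card (ClassGroup (𝓞 K))) := by
  rw [← Nat.not_odd_iff_even]
  intro h_odd
  obtain ⟨θ, hθ⟩ := IsAlgClosed.exists_pow_nat_eq (algebraMap K (AlgebraicClosure K) α) two_pos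
  obtain ⟨_, _, μ, hμ, -⟩ := exists_numberField_adjoin hα hθ
  have hτμ := integersConj_eq_neg hα hμ
  have := isTotallyReal_of_sq_eq hτμ hμ h_pos
  have hα0 : α ≠ 0 := by
    rintro rfl
    exact hα (by simp)
  obtain ⟨μ', hμ', hτμ'⟩ := exists_sq_eq_and_integersConj_eq_neg hμ hτμ hα0 h_mul
  obtain ⟨ω, hω⟩ := exists_algebraMap_eq_sq_sub_integersConj hμ hτμ hb
  obtain ⟨ω', hω'⟩ := exists_algebraMap_eq_sq_sub_integersConj hμ' hτμ' hb'
  refine not_unramifiedOutside_empty (L := IntermediateField.adjoin K {θ}) h_odd fun P _ ↦ ?_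
  by_cases hαP : α ∈ P.asIdeal
  · exact ⟨ω', α', hω', notMem_of_isCoprime h_coprime hαP⟩
  · exact ⟨ω, α, hω, hαP⟩

theorem exists_map_eq_sq_add_four_mul {R S : Type*} [CommRing R] [CommRing S] (f : R →+* S)
    {q : ℕ} {η : S} {x : R} (hq : q % 4 = 3) (hη : η ^ 2 = q) (hx : 4 ∣ x - 1 ∨ 4 ∣ x + 1) :
    ∃ b c, f x = b ^ 2 + 4 * c := by
  rcases hx with ⟨y, hy⟩ | ⟨y, hy⟩ <;> have hfy := congrArg f hy
  · rw [map_sub, map_mul, map_ofNat, map_one] at hfy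
    exact ⟨1, f y, by linear_combination hfy⟩
  · rw [map_add, map_mul, map_ofNat, map_one] at hfy
    obtain ⟨k, hk⟩ : ∃ k, q + 1 = 4 * k := ⟨(q + 1) / 4, by lia⟩
    have hk' : (q : S) + 1 = 4 * k := by exact_mod_cast congrArg (Nat.cast : ℕ → S) hk
    exact ⟨η, f y - k, by linear_combination hfy - hη - hk'⟩

theorem isSquare_or_isSquare_mul_of_isSquare_algebraMap {K L : Type*} [Field K] [Field L]
    [CharZero K] [Algebra K L] [Algebra.IsQuadraticExtension K L] {a d : K} {η : L}
    (hη : η ^ 2 = algebraMap K L d) (hτη : quadraticConj K L η = -η)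
    (ha : IsSquare (algebraMap K L a)) : IsSquare a ∨ IsSquare (a * d) := by
  obtain ⟨y, hy⟩ := ha
  by_cases hy_range : y ∈ Set.range (algebraMap K L)
  · obtain ⟨z, rfl⟩ := hy_range
    exact .inl ⟨z, (algebraMap K L).injective (by rw [hy, map_mul])⟩
  · have hτy := quadraticConj_eq_neg (by rw [hy, pow_two]) hy_range
    obtain ⟨z, hz⟩ := mem_range_of_quadraticConj_eq (K := K) (x := y * η)
      (by rw [map_mul, hτy, hτη, neg_mul_neg])
    refine .inr ⟨z, (algebraMap K L).injective ?_⟩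
    rw [map_mul, map_mul, hz, hy, ← hη]
    ring

section

variable {K : Type*} [Field K] [NumberField K]

theorem not_isSquare_mul {a m : 𝓞 K} {P : HeightOneSpectrum (𝓞 K)} (ha : a ∉ P.asIdeal)
    (hm : m ∈ P.asIdeal) (hm2 : m ∉ P.asIdeal ^ 2) : ¬ IsSquare ((a * m : 𝓞 K) : K) :=
  not_isSquare_of_mem_of_notMem_sq (Ideal.mul_mem_left _ a hm)
    fun h ↦ (P.isPrime.mul_mem_pow P.asIdeal h).elim ha hm2

end

section Radicand

theorem exists_forall_algebraMap_mem (K : Type*) {k : Type*} [Field k] [Field K] [NumberField k]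
    [NumberField K] [Algebra k K] (P : HeightOneSpectrum (𝓞 k)) :
    ∃ Q : HeightOneSpectrum (𝓞 K), ∀ x ∈ P.asIdeal, algebraMap (𝓞 k) (𝓞 K) x ∈ Q.asIdeal := by
  have := P.isMaximal
  obtain ⟨Q, hQ, hQP⟩ := Ideal.exists_maximal_ideal_liesOver_of_isIntegral (S := 𝓞 K) P.asIdeal
  exact ⟨⟨Q, hQ.isPrime, Ideal.ne_bot_of_liesOver_of_ne_bot P.ne_bot Q⟩,
    fun x hx ↦ (Ideal.mem_of_liesOver Q P.asIdeal x).1 hx⟩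

theorem exists_mem_and_mem_of_mul_integersConj_eq {k : Type*} [Field k] [NumberField k]
    [Algebra.IsQuadraticExtension ℚ k] {α : 𝓞 k} {q m : ℕ} [NeZero q] (hq : q ≠ 1) (hqm : q ∣ m)
    (h_mul : α * integersConj ℚ k α = m) :
    (∃ P : HeightOneSpectrum (𝓞 k), (q : 𝓞 k) ∈ P.asIdeal ∧ α ∈ P.asIdeal) ∧
      ∃ P : HeightOneSpectrum (𝓞 k), (q : 𝓞 k) ∈ P.asIdeal ∧ integersConj ℚ k α ∈ P.asIdeal := by
  obtain ⟨P, hP⟩ := exists_natCast_mem k hq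
  have hP' : (q : 𝓞 k) ∈ (conjPrime (integersConj ℚ k) P).asIdeal := by
    rwa [mem_conjPrime, map_natCast]
  have h_mem : α * integersConj ℚ k α ∈ P.asIdeal :=
    h_mul ▸ Ideal.mem_of_dvd _ (Nat.cast_dvd_cast hqm) hP
  rcases P.isPrime.mem_or_mem h_mem with hα | hα
  · refine ⟨⟨P, hP, hα⟩, _, hP', ?_⟩
    rw [mem_conjPrime]
    rwa [(isQuadraticInvolution_integersConj ℚ k).involutive α]
  · exact ⟨⟨_, hP', mem_conjPrime.2 hα⟩, P, hP, hα⟩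

theorem not_isSquare_algebraMap_of_mul_eq_pow {K L : Type*} [Field K] [Field L] [NumberField K]
    [Algebra K L] [Algebra.IsQuadraticExtension K L] {q s n : ℕ} [NeZero q] [NeZero s]
    (hq : q ≠ 1) (hqs : q.Coprime s) (h_unr : UnramifiedAt K q) {η : 𝓞 L} (hη : η ^ 2 = q)
    {α α' : 𝓞 K} (hn : Odd n) (h_mul : α * α' = (q * s) ^ n) (h_coprime : IsCoprime α α')
    {P P' : HeightOneSpectrum (𝓞 K)} (hqP : (q : 𝓞 K) ∈ P.asIdeal) (hαP : α ∈ P.asIdeal)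
    (hqP' : (q : 𝓞 K) ∈ P'.asIdeal) (hαP' : α' ∈ P'.asIdeal) :
    ¬ IsSquare (algebraMap K L α) := by
  intro h_sq
  have hη' : (η : L) ^ 2 = algebraMap K L q := by
    rw [← map_pow, hη, map_natCast, map_natCast]
  have hτη : quadraticConj K L η = -η := by
    rw [← coe_integersConj, h_unr.integersConj_eq_neg hq hη]
    exact map_neg (algebraMap (𝓞 L) L) η
  rcases isSquare_or_isSquare_mul_of_isSquare_algebraMap hη' hτη h_sq with h | h
  · have hα : (α : K) ≠ 0 := by
      rw [RingOfIntegers.coe_ne_zero_iff]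
      rintro rfl
      rw [zero_mul] at h_mul
      exact pow_ne_zero n (mul_ne_zero (NeZero.ne (q : 𝓞 K)) (NeZero.ne (s : 𝓞 K))) h_mul.symm
    have h_eq : α * (α' * s * q) = (q * s : 𝓞 K) ^ (n + 1) := by
      rw [pow_succ, ← h_mul]
      ring
    refine not_isSquare_mul (a := α' * (s : 𝓞 K)) ?_ hqP (h_unr P hqP) ?_
    · exact fun hP ↦ (P.isPrime.mem_or_mem hP).elim (notMem_of_isCoprime h_coprime hαP)
        (natCast_notMem_of_coprime hqs hqP)
    · have h_sq' : IsSquare ((α : K) * (α' * s * q : 𝓞 K)) := by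
        rw [← map_mul, h_eq, map_pow]
        exact hn.add_one.isSquare_pow _
      simpa [hα] using h_sq'.div h
  · refine not_isSquare_mul (notMem_of_isCoprime h_coprime.symm hαP') hqP' (h_unr P' hqP') ?_
    simpa using h

theorem isSquare_natCast_zmod_mul {p q s : ℕ} (hqs : q.Coprime s) (hq : IsSquare (p : ZMod q))
    (hs : IsSquare (p : ZMod s)) : IsSquare (p : ZMod (q * s)) := by
  obtain ⟨a, ha⟩ := hq
  obtain ⟨b, hb⟩ := hs
  have h_sq : IsSquare ((p : ZMod q × ZMod s)) := ⟨(a, b), Prod.ext (by simpa) (by simpa)⟩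
  simpa using h_sq.map (ZMod.chineseRemainder hqs).symm

theorem IsSqrtPrime.even_card_classGroup {k K L : Type*} [Field k] [NumberField k]
    [Algebra.IsQuadraticExtension ℚ k] {p : ℕ} {t ω : 𝓞 k} (h : IsSqrtPrime p t ω) [Field K]
    [NumberField K] [Algebra k K] [Field L] [NumberField L] [Algebra K L]
    [Algebra.IsQuadraticExtension K L] [IsTotallyReal L] {q s : ℕ} (hq4 : q % 4 = 3)
    (hs4 : s % 4 = 3) (hqs : q.Coprime s) (hqp : q.Coprime p) (hsp : s.Coprime p)
    (hpq : IsSquare (p : ZMod q)) (hps : IsSquare (p : ZMod s)) (h_unr : UnramifiedAt K q)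
    {θ : 𝓞 K} (hθ : θ ^ 2 = s) {η : 𝓞 L} (hη : η ^ 2 = q) :
    Even (Nat.card (ClassGroup (𝓞 L))) := by
  have : NeZero q := ⟨by lia⟩
  have : NeZero s := ⟨by lia⟩
  obtain ⟨α, n, hn, h_mul, h_coprime, h_pos, h_four⟩ := h.exists_radicand (m := q * s)
    (by rw [Nat.mul_mod, hq4, hs4]) (hqp.mul_left hsp) (isSquare_natCast_zmod_mul hqs hpq hps)
  obtain ⟨⟨P, hqP, hαP⟩, P', hqP', hαP'⟩ := exists_mem_and_mem_of_mul_integersConj_eq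
    (q := q) (m := (q * s) ^ n) (by lia) (dvd_pow (dvd_mul_right q s) hn.pos.ne')
    (by exact_mod_cast h_mul)
  obtain ⟨Q, hQ⟩ := exists_forall_algebraMap_mem K P
  obtain ⟨Q', hQ'⟩ := exists_forall_algebraMap_mem K P'
  set f := algebraMap (𝓞 k) (𝓞 K)
  set g := algebraMap (𝓞 K) (𝓞 L)
  have h_mul_f : f α * f (integersConj ℚ k α) = (q * s) ^ n := by
    rw [← map_mul, h_mul, map_pow, map_natCast, Nat.cast_mul]
  obtain ⟨b, c, hb⟩ := exists_map_eq_sq_add_four_mul (g.comp f) hq4 hη h_four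
  obtain ⟨b', c', hb'⟩ := exists_map_eq_sq_add_four_mul
    (g.comp (f.comp (integersConj ℚ k : 𝓞 k →+* 𝓞 k))) hq4 hη h_four
  refine even_card_classGroup_of_mul_eq_sq (w := (η * g θ) ^ n) ?_ (fun φ ↦ ?_) ?_
    ((h_coprime.map f).map g) hb hb'
  · exact not_isSquare_algebraMap_of_mul_eq_pow (by lia) hqs h_unr hη hn h_mul_f
      (h_coprime.map f) (by simpa using hQ _ hqP) (hQ _ hαP) (by simpa using hQ' _ hqP')
      (hQ' _ hαP')
  · exact h_pos ((φ.comp (algebraMap K L)).comp (algebraMap k K))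
  · rw [← map_mul, h_mul_f, ← pow_mul, mul_comm n, pow_mul, mul_pow η, hη, ← map_pow, hθ,
      map_pow, map_mul, map_natCast, map_natCast]

end Radicand

section SylowTwo

theorem card_comap_le {G H : Type*} [Group G] [Group H] [Finite H] (f : G →* H)
    (S : Subgroup H) : Nat.card (S.comap f) ≤ Nat.card f.ker * Nat.card S := by
  rw [← Subgroup.relIndex_bot_left (S.comap f), ← Subgroup.relIndex_mul_relIndex ⊥ f.ker _ bot_le
    (f.ker_le_comap S), Subgroup.relIndex_bot_left, Subgroup.relIndex_ker]
  gcongr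
  exact Subgroup.card_le_of_le (Subgroup.map_comap_le f S)

variable {G : Type*} [CommGroup G] [Finite G]

theorem card_ker_powMonoidHom_pow_le {m : ℕ} (h : Nat.card (powMonoidHom m : G →* G).ker ≤ m)
    (k : ℕ) : Nat.card (powMonoidHom (m ^ k) : G →* G).ker ≤ m ^ k := by
  induction k with
  | zero => simp
  | succ k ih =>
    have h_comap : (powMonoidHom (m ^ (k + 1)) : G →* G).ker =
        (powMonoidHom (m ^ k) : G →* G).ker.comap (powMonoidHom m) := by
      ext g
      simp [pow_succ', pow_mul]
    rw [h_comap, pow_succ']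
    exact (card_comap_le _ _).trans (Nat.mul_le_mul h ih)

theorem isCyclic_sylow_of_card_ker_powMonoidHom_le {p : ℕ} [Fact p.Prime]
    (h : Nat.card (powMonoidHom p : G →* G).ker ≤ p) (P : Sylow p G) : IsCyclic P := by
  obtain ⟨n, hn⟩ := IsPGroup.iff_card.1 P.isPGroup'
  obtain ⟨k, -, hk⟩ := (Nat.dvd_prime_pow Fact.out).1 (hn ▸ Group.exponent_dvd_nat_card (G := P))
  have h_le : (P : Subgroup G) ≤ (powMonoidHom (p ^ k)).ker := fun g hg ↦ by
    have h_exp := Monoid.pow_exponent_eq_one (⟨g, hg⟩ : (P : Subgroup G))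
    rw [hk] at h_exp
    exact congrArg Subtype.val h_exp
  rw [IsCyclic.iff_exponent_eq_card]
  refine (Nat.le_of_dvd Nat.card_pos Group.exponent_dvd_nat_card).antisymm ?_
  rw [hk]
  exact (Subgroup.card_le_of_le h_le).trans (card_ker_powMonoidHom_pow_le h k)

theorem sylow_ne_bot_of_dvd_card {p : ℕ} [Fact p.Prime] (h : p ∣ Nat.card G) (P : Sylow p G) :
    (P : Subgroup G) ≠ ⊥ := fun h_bot ↦ by
  have h_dvd := P.dvd_card_of_dvd_card h
  rw [h_bot, Subgroup.card_bot] at h_dvd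
  exact Nat.Prime.not_dvd_one Fact.out h_dvd

end SylowTwo

/-! ### The tower of fields `Cₙ(F)` -/

open IntermediateField

theorem exists_numberField_sup_adjoin {E F : IntermediateField ℚ ℂ} [NumberField E] {d : 𝓞 E}
    (hd : ¬ IsSquare (d : E)) {θ : ℂ} (hθ : θ ^ 2 = (d : E)) (hF : F = E ⊔ ℚ⟮θ⟯) :
    ∃ (_ : NumberField F) (_ : Algebra E F), Algebra.IsQuadraticExtension E F ∧
      ∃ y : 𝓞 F, y ^ 2 = algebraMap (𝓞 E) (𝓞 F) d ∧ (y : F) = θ := by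
  obtain ⟨h_quad, h_field, y, hy, hyθ⟩ := exists_numberField_adjoin hd hθ
  obtain rfl : F = E⟮θ⟯.restrictScalars ℚ := hF.trans (restrictScalars_adjoin_eq_sup ..).symm
  exact ⟨h_field, E⟮θ⟯.algebra', h_quad, y, hy, hyθ⟩

theorem ofReal_sqrt_sq (m : ℕ) : ((√m : ℝ) : ℂ) ^ 2 = m := by
  exact_mod_cast Real.sq_sqrt m.cast_nonneg

/-- The generator `2cos(2π/2^(n+2))` of the `n`-th layer of the cyclotomic `ℤ₂`-extension of `ℚ`,
as a complex number. -/
noncomputable def layerGenerator (n : ℕ) : ℂ :=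
  ((2 * Real.cos (2 * Real.pi / 2 ^ (n + 2)) : ℝ) : ℂ)

theorem layerGenerator_zero : layerGenerator 0 = 0 := by
  rw [layerGenerator, zero_add, show 2 * Real.pi / 2 ^ 2 = Real.pi / 2 by ring, Real.cos_pi_div_two,
    mul_zero, Complex.ofReal_zero]

theorem layerGenerator_succ_sq (n : ℕ) : layerGenerator (n + 1) ^ 2 = 2 + layerGenerator n := by
  have h_angle : 2 * Real.pi / 2 ^ (n + 2) = 2 * (2 * Real.pi / 2 ^ (n + 1 + 2)) := by ring
  rw [layerGenerator, layerGenerator, h_angle, Real.cos_two_mul]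
  push_cast
  ring

theorem adjoin_layerGenerator_le_succ (n : ℕ) :
    ℚ⟮layerGenerator n⟯ ≤ ℚ⟮layerGenerator (n + 1)⟯ := by
  rw [adjoin_simple_le_iff, eq_sub_of_add_eq' (layerGenerator_succ_sq n).symm]
  exact sub_mem (pow_mem (mem_adjoin_simple_self ℚ _) 2) (ofNat_mem _ 2)

theorem LayerInvariant.exists_sup_layer {q s : ℕ} [NeZero q] (hq : Odd q) (hs : Odd s)
    {E : IntermediateField ℚ ℂ} [NumberField E] (h : LayerInvariant q s E 0) (n : ℕ)
    {F : IntermediateField ℚ ℂ} (hF : F = E ⊔ ℚ⟮layerGenerator n⟯) :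
    ∃ (_ : NumberField F) (x : 𝓞 F), (x : F) = layerGenerator n ∧ LayerInvariant q s F x := by
  induction n generalizing F with
  | zero =>
    rw [layerGenerator_zero, adjoin_zero, sup_bot_eq] at hF
    subst hF
    exact ⟨inferInstance, 0, by simp [layerGenerator_zero], h⟩
  | succ n ih =>
    obtain ⟨_, x, hx, h_inv⟩ := ih rfl
    obtain ⟨_, _, _, y, hyx, hy⟩ := exists_numberField_sup_adjoin (F := F)
      h_inv.not_isSquare_two_add ((layerGenerator_succ_sq n).trans (congrArg (2 + ·) hx).symm)
      (by rw [hF, sup_assoc, sup_eq_right.2 (adjoin_layerGenerator_le_succ n)])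
    exact ⟨inferInstance, y, hy, h_inv.next hyx hq hs⟩

theorem CnF_eq_sup (p q s n : ℕ) :
    CnF p q s n = ℚ⟮((√p : ℝ) : ℂ)⟯ ⊔ ℚ⟮layerGenerator n⟯ ⊔ ℚ⟮((√s : ℝ) : ℂ)⟯ ⊔
      ℚ⟮((√q : ℝ) : ℂ)⟯ := by
  rw [CnF, ← adjoin_union, ← adjoin_union, ← adjoin_union, layerGenerator]
  congr 1
  ext
  simp only [Set.mem_insert_iff, Set.mem_singleton_iff, Set.union_singleton]
  tauto

theorem exists_isSqrtPrime_adjoin {p : ℕ} (hp : p.Prime) (hp8 : p % 8 = 5) :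
    ∃ (_ : NumberField ℚ⟮((√p : ℝ) : ℂ)⟯) (t ω : 𝓞 ℚ⟮((√p : ℝ) : ℂ)⟯),
      Algebra.IsQuadraticExtension ℚ ℚ⟮((√p : ℝ) : ℂ)⟯ ∧ IsSqrtPrime p t ω := by
  obtain ⟨h_quad, h_field, t, ht, -⟩ := exists_numberField_adjoin (d := (p : 𝓞 ℚ))
    (by simpa using hp.not_isSquare) (by simpa using ofReal_sqrt_sq p)
  obtain ⟨ω, hω⟩ := exists_isSqrtPrime hp hp8 (by simpa using ht)
  exact ⟨h_field, t, ω, h_quad, hω⟩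

theorem IsSqrtPrime.isCyclic_sylow_and_ne_bot {k₀ k K L : Type*} [Field k₀] [NumberField k₀]
    [Algebra.IsQuadraticExtension ℚ k₀] [Field k] [NumberField k] [Field K] [NumberField K]
    [Algebra k₀ K] [Algebra k K] [Algebra.IsQuadraticExtension k K] [Field L] [NumberField L]
    [Algebra K L] [Algebra.IsQuadraticExtension K L] {p q s : ℕ} [NeZero q] [NeZero s]
    {t ω : 𝓞 k₀} (h : IsSqrtPrime p t ω) {x : 𝓞 k} (h_inv : LayerInvariant q s k x)
    (hq4 : q % 4 = 3) (hs4 : s % 4 = 3) (hqs : q.Coprime s) (hqp : q.Coprime p)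
    (hsp : s.Coprime p) (hpq : IsSquare (p : ZMod q)) (hps : IsSquare (p : ZMod s))
    {θ : 𝓞 K} (hθ : θ ^ 2 = s) {η : 𝓞 L} (hη : η ^ 2 = q) (P : Sylow 2 (ClassGroup (𝓞 L))) :
    IsCyclic (P : Subgroup (ClassGroup (𝓞 L))) ∧ (P : Subgroup (ClassGroup (𝓞 L))) ≠ ⊥ := by
  have hq : Odd q := Nat.odd_iff.2 (by lia)
  have hs1 : s ≠ 1 := by lia
  have hq1 : q ≠ 1 := by lia
  have := h_inv.isTotallyReal_of_sq_eq hs1 hθ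
  have h_unr := h_inv.unramifiedAt_left_of_sq_eq hs1 hθ hq hqs
  have := h_unr.isTotallyReal_of_sq_eq hq1 hη
  have h_card := h_inv.card_twoTorsion_le_two hs1 hθ hq hq1 hqs (hs4.trans hq4.symm) hη
  have h_even := h.even_card_classGroup hq4 hs4 hqs hqp hsp hpq hps h_unr hθ hη
  exact ⟨isCyclic_sylow_of_card_ker_powMonoidHom_le h_card P,
    sylow_ne_bot_of_dvd_card h_even.two_dvd P⟩

theorem UnramifiedAt.exists_sup_sqrt {E : IntermediateField ℚ ℂ} [NumberField E] {m : ℕ} [NeZero m]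
    (h : UnramifiedAt E m) (hm : m ≠ 1) {F : IntermediateField ℚ ℂ}
    (hF : F = E ⊔ ℚ⟮((√m : ℝ) : ℂ)⟯) :
    ∃ (_ : NumberField F) (_ : Algebra E F), Algebra.IsQuadraticExtension E F ∧
      ∃ θ : 𝓞 F, θ ^ 2 = m := by
  obtain ⟨h_field, h_alg, h_quad, θ, hθ, -⟩ := exists_numberField_sup_adjoin (d := m)
    (by simpa using h.not_isSquare hm) (by simpa using ofReal_sqrt_sq m) hF
  exact ⟨h_field, h_alg, h_quad, θ, by simpa using hθ⟩

theorem two_class_group_of_CnF_cyclic_nontrivial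
    (p q s : ℕ) (hp : p.Prime) (hq : q.Prime) (hs : s.Prime)
    (hpq : p ≠ q) (hps : p ≠ s) (hqs : q ≠ s)
    (hp8 : p % 8 = 5) (hq8 : q % 8 = 3) (hs4 : s % 4 = 3)
    (hQRq : IsSquare (p : ZMod q)) (hQRs : IsSquare (p : ZMod s)) :
    ∀ n : ℕ, ∀ P : Sylow 2 (ClassGroup (𝓞 (CnF p q s n))),
      IsCyclic (P : Subgroup (ClassGroup (𝓞 (CnF p q s n)))) ∧
      (P : Subgroup (ClassGroup (𝓞 (CnF p q s n)))) ≠ ⊥ := by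
  intro n P
  have : NeZero q := ⟨hq.ne_zero⟩
  have : NeZero s := ⟨hs.ne_zero⟩
  have hq_odd : Odd q := Nat.odd_iff.2 (by lia)
  have hs_odd : Odd s := Nat.odd_iff.2 (by lia)
  have hqp := (Nat.coprime_primes hq hp).2 hpq.symm
  have hsp := (Nat.coprime_primes hs hp).2 hps.symm
  have hqs := (Nat.coprime_primes hq hs).2 hqs
  obtain ⟨_, t, ω, _, h⟩ := exists_isSqrtPrime_adjoin hp hp8
  obtain ⟨_, x, -, h_inv⟩ := (h.layerInvariant hq hs hqp hsp hq8 hs4 hQRq).exists_sup_layer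
    hq_odd hs_odd n rfl
  obtain ⟨_, _, _, θ, hθ⟩ := h_inv.unramifiedAt_right.exists_sup_sqrt hs.ne_one rfl
  obtain ⟨_, _, _, η, hη⟩ := (h_inv.unramifiedAt_left_of_sq_eq hs.ne_one hθ hq_odd
    hqs).exists_sup_sqrt hq.ne_one (CnF_eq_sup p q s n)
  let := (inclusion (le_sup_left.trans le_sup_left :
    ℚ⟮((√p : ℝ) : ℂ)⟯ ≤ _ ⊔ ℚ⟮layerGenerator n⟯ ⊔ ℚ⟮((√s : ℝ) : ℂ)⟯)).toAlgebra
  exact h.isCyclic_sylow_and_ne_bot h_inv (by lia) hs4 hqs hqp hsp hQRq hQRs hθ hη P
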